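/- Let t ≥ 3 be an odd integer that is not of the form 2^i + 1 nor of the form 4^i − 2^i + 1 for any i ≥ 1. Then for all but finitely many positive integers n, there exist four pairwise distinct nonzero elements α, β, γ, δ ∈ F_{2^n} with α + β + γ + δ = 0 and α^t + β^t + γ^t + δ^t = 0. -/

import Mathlib

section A1
variable {k : Type*} [Field k]

abbrev RR (k : Type*) [Field k] := MvPolynomial (Fin 2) k

noncomputable def tau : RR k →ₐ[k] Polynomial (RR k) :=
  MvPolynomial.aeval (fun i => Polynomial.C (MvPolynomial.X i) * Polynomial.X)

lemma tau_X (i : Fin 2) : tau (MvPolynomial.X i : RR k) = Polynomial.C (MvPolynomial.X i) * Polynomial.X := by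
  simp [tau]

lemma tau_C (c : k) : tau (MvPolynomial.C c : RR k) = Polynomial.C (MvPolynomial.C c) := by
  simp [tau]

lemma tau_monomial (n : Fin 2 →₀ ℕ) (c : k) :
    tau (MvPolynomial.monomial n c) = Polynomial.monomial n.degree (MvPolynomial.monomial n c) := by
  rw [tau, MvPolynomial.aeval_monomial, Finsupp.prod_fintype _ _ (by simp), Finsupp.degree_eq_sum,
    ← Polynomial.C_mul_X_pow_eq_monomial, MvPolynomial.monomial_eq, Finsupp.prod_fintype _ _ (by simp)]
  simp [Fin.prod_univ_two, mul_pow, pow_add]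
  ring

lemma tau_coeff (u : RR k) (j : ℕ) (n : Fin 2 →₀ ℕ) :
    ((tau u).coeff j).coeff n = if n.degree = j then u.coeff n else 0 := by
  classical
  induction u using MvPolynomial.induction_on' with
  | monomial m c =>
    rw [tau_monomial, Polynomial.coeff_monomial, MvPolynomial.coeff_monomial]
    split_ifs <;> simp_all [MvPolynomial.coeff_monomial] <;> grind
  | add p q hp hq => simp only [map_add, Polynomial.coeff_add, MvPolynomial.coeff_add, hp, hq]; split_ifs <;> simp

lemma tau_hom (u : RR k) (j : ℕ) :
    tau ((tau u).coeff j) = Polynomial.monomial j ((tau u).coeff j) := by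
  induction u using MvPolynomial.induction_on' with
  | monomial n c =>
    rw [tau_monomial, Polynomial.coeff_monomial]
    split_ifs with h
    · rw [tau_monomial, h]
    · simp
  | add p q hp hq => simp [hp, hq]

lemma tau_eval_one (u : RR k) : (tau u).eval 1 = u := by
  induction u using MvPolynomial.induction_on' with
  | monomial n c => simp [tau_monomial]
  | add p q hp hq => simp [hp, hq]

lemma tau_inj {u v : RR k} (h : tau u = tau v) : u = v := by
  rw [← tau_eval_one u, h, tau_eval_one]

lemma tau_ne {u : RR k} (h : u ≠ 0) : tau u ≠ 0 := fun h' => h (tau_inj (by simpa using h'))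

lemma tau_hom' (y : RR k) (w m : ℕ) :
    Polynomial.X ^ m * tau ((Polynomial.X ^ m * tau y).coeff w) =
      Polynomial.X ^ w * Polynomial.C ((Polynomial.X ^ m * tau y).coeff w) := by
  rw [Polynomial.coeff_X_pow_mul']
  split_ifs with h
  · rw [tau_hom, ← Polynomial.C_mul_X_pow_eq_monomial]
    obtain ⟨e, rfl⟩ := Nat.exists_eq_add_of_le h
    simp; ring
  · simp

/-- truncation -/
noncomputable def VV (k : Type*) [Field k] (N : ℕ) : Submodule k (RR k) where
  carrier := {u | (tau u).degree < N}
  add_mem' {a b} ha hb := by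
    simp only [Set.mem_ofPred_eq, map_add] at *
    exact lt_of_le_of_lt (Polynomial.degree_add_le _ _) (max_lt ha hb)
  zero_mem' := by simp
  smul_mem' c x hx := by
    simp only [Set.mem_ofPred_eq, map_smul] at *
    exact lt_of_le_of_lt (Polynomial.degree_smul_le _ _) hx

lemma mem_VV {N : ℕ} {u : RR k} : u ∈ VV k N ↔ (tau u).degree < N := Iff.rfl

lemma VV_eq (N : ℕ) : VV k N = MvPolynomial.restrictSupport k {n | n.degree < N} := by
  ext u
  rw [mem_VV, Polynomial.degree_lt_iff_coeff_zero, MvPolynomial.mem_restrictSupport_iff]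
  constructor
  · intro h n hn
    by_contra hc
    have h1 := h n.degree (by simpa using hc)
    have h2 := tau_coeff u n.degree n
    simp [h1] at h2
    simp [h2.symm] at hn
  · intro h j hj
    ext n
    rw [tau_coeff]
    split_ifs with h1
    · by_contra h2
      have := h (MvPolynomial.mem_support_iff.2 h2)
      simp at this; omega
    · rfl

lemma card_deg (N : ℕ) : 2 * Nat.card {n : Fin 2 →₀ ℕ | n.degree < N} = N * (N + 1) := by
  have : Nat.card {n : Fin 2 →₀ ℕ | n.degree < N} =
      ((Finset.range N).sigma (fun j => Finset.range (j + 1))).card := by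
    rw [← Nat.card_eq_finsetCard]
    refine Nat.card_congr ⟨fun n => ⟨⟨n.1.degree, n.1 0⟩, ?_⟩,
      fun p => ⟨Finsupp.equivFunOnFinite.symm ![p.1.2, p.1.1 - p.1.2], ?_⟩, ?_, ?_⟩
    · have := n.2; simp [Finsupp.degree_eq_sum] at this ⊢; omega
    · have := Finset.mem_sigma.1 p.2
      simp only [Finset.mem_range] at this; simp [Finsupp.degree_eq_sum]; omega
    · rintro ⟨n, hn⟩
      ext i; fin_cases i <;> simp [Finsupp.degree_eq_sum]
    · rintro ⟨⟨a, b⟩, hn⟩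
      simp at hn
      simp [Finsupp.degree_eq_sum]; omega
  rw [this]
  simp only [Finset.card_sigma, Finset.card_range]
  clear this
  induction N with
  | zero => simp
  | succ n ih =>
    rw [Finset.sum_range_succ, mul_add, ih]; ring

instance VV_fin (N : ℕ) : FiniteDimensional k (VV k N) := by
  rw [VV_eq]
  have : Finite {n : Fin 2 →₀ ℕ | n.degree < N} := by
    rcases N.eq_zero_or_pos with rfl | h
    · simp; infer_instance
    · refine Nat.finite_of_card_ne_zero ?_
      have := card_deg N
      intro h0; rw [h0] at this; nlinarith
  exact Module.Finite.of_basis (MvPolynomial.basisRestrictSupport k _)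

lemma VV_finrank (N : ℕ) : 2 * Module.finrank k (VV k N) = N * (N + 1) := by
  rw [VV_eq, Module.finrank_eq_nat_card_basis (MvPolynomial.basisRestrictSupport k _), card_deg]

noncomputable def trunc (N : ℕ) : RR k →ₗ[k] RR k where
  toFun u := ∑ j ∈ Finset.range N, (tau u).coeff j
  map_add' := by intros; simp [Finset.sum_add_distrib]
  map_smul' := by intros; simp [Finset.smul_sum]

lemma tau_trunc_coeff (N : ℕ) (u : RR k) (j : ℕ) :
    (tau (trunc N u)).coeff j = if j < N then (tau u).coeff j else 0 := by
  simp only [trunc, LinearMap.coe_mk, AddHom.coe_mk, map_sum, tau_hom, Polynomial.finsetSum_coeff,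
    Polynomial.coeff_monomial, Finset.sum_ite_eq', Finset.mem_range]

lemma trunc_mem (N : ℕ) (u : RR k) : trunc N u ∈ VV k N := by
  rw [mem_VV, Polynomial.degree_lt_iff_coeff_zero]
  intro j hj; rw [tau_trunc_coeff, if_neg (by omega)]

/-- the power of the maximal ideal at the origin -/
noncomputable def MM (k : Type*) [Field k] (N : ℕ) : Ideal (RR k) :=
  MvPolynomial.idealOfVars (Fin 2) k ^ N

lemma mem_MM {N : ℕ} {u : RR k} : u ∈ MM k N ↔ Polynomial.X ^ N ∣ tau u := by
  rw [MM, MvPolynomial.mem_pow_idealOfVars_iff', Polynomial.X_pow_dvd_iff]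
  constructor
  · intro h j hj
    ext n
    rw [tau_coeff]
    split_ifs with h1
    · simpa using h n (by omega)
    · simp
  · intro h n hn
    have := tau_coeff u n.degree n
    simpa [h _ hn] using this.symm

lemma trunc_sub_mem (N : ℕ) (u : RR k) : u - trunc N u ∈ MM k N := by
  rw [mem_MM, Polynomial.X_pow_dvd_iff]
  intro j hj
  simp [tau_trunc_coeff, hj]

lemma trunc_eq_iff (N : ℕ) (u : RR k) : trunc N u = 0 ↔ u ∈ MM k N := by
  constructor
  · intro h; simpa [h] using trunc_sub_mem N u
  · intro h
    rw [mem_MM, Polynomial.X_pow_dvd_iff] at h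
    simp only [trunc, LinearMap.coe_mk, AddHom.coe_mk]
    exact Finset.sum_eq_zero fun j hj => h j (by simpa using hj)

lemma trunc_self (N : ℕ) {u : RR k} (h : u ∈ VV k N) : trunc N u = u := by
  apply tau_inj; ext1 j
  rw [tau_trunc_coeff]
  split_ifs with h1
  · rfl
  · rw [mem_VV, Polynomial.degree_lt_iff_coeff_zero] at h
    exact (h j (by omega)).symm

end A1
section A2
open Polynomial
variable {k : Type*} [Field k]

lemma relprime_cancel {R : Type*} [CommRing R] [IsDomain R] [UniqueFactorizationMonoid R]
    {U V p r : R} (hU : U ≠ 0) (h : IsRelPrime U V) (h0 : p * U + r * V = 0) :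
    ∃ c, p = c * V ∧ r = - (c * U) := by
  have h1 : U ∣ r * V := ⟨-p, by linear_combination h0⟩
  obtain ⟨c, rfl⟩ := h.dvd_of_dvd_mul_right h1
  refine ⟨-c, ?_, by ring⟩
  apply mul_right_cancel₀ hU
  linear_combination h0

lemma glob_step (u v : RR k) (hu : u ≠ 0) (hv : v ≠ 0)
    (h : IsRelPrime (tau u).leadingCoeff (tau v).leadingCoeff) (M n : ℕ) (p r : RR k)
    (hp : p ∈ VV k ((tau v).natDegree + M + n)) (hr : r ∈ VV k ((tau u).natDegree + M + n))
    (hs : p * u + r * v ∈ VV k ((tau u).natDegree + (tau v).natDegree + M)) :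
    ∃ c, p - c * v ∈ VV k ((tau v).natDegree + M) ∧ r + c * u ∈ VV k ((tau u).natDegree + M) := by
  induction n generalizing p r with
  | zero => exact ⟨0, by simpa using hp, by simpa using hr⟩
  | succ n ih =>
    set d := (tau u).natDegree with hd
    set e := (tau v).natDegree with he
    set p' := (tau p).coeff (e + M + n) with hp'
    set r' := (tau r).coeff (d + M + n) with hr'
    have hpn : (tau p).natDegree ≤ e + M + n := by
      rw [mem_VV] at hp
      exact natDegree_le_iff_coeff_eq_zero.2 fun j hj => (degree_lt_iff_coeff_zero _ _).1 hp j (by omega)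
    have hrn : (tau r).natDegree ≤ d + M + n := by
      rw [mem_VV] at hr
      exact natDegree_le_iff_coeff_eq_zero.2 fun j hj => (degree_lt_iff_coeff_zero _ _).1 hr j (by omega)
    have hc : p' * (tau u).leadingCoeff + r' * (tau v).leadingCoeff = 0 := by
      have h1 := coeff_mul_add_eq_of_natDegree_le hpn hd.ge
      have h2 := coeff_mul_add_eq_of_natDegree_le hrn he.ge
      rw [mem_VV, degree_lt_iff_coeff_zero] at hs
      have h3 := hs (d + e + M + n) (by omega)
      rw [map_add, map_mul, map_mul, coeff_add, show d + e + M + n = e + M + n + d by ring, h1,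
        show e + M + n + d = d + M + n + e by ring, h2] at h3
      exact h3
    have hU0 : (tau u).leadingCoeff ≠ 0 := leadingCoeff_ne_zero.2 (tau_ne hu)
    have hV0 : (tau v).leadingCoeff ≠ 0 := leadingCoeff_ne_zero.2 (tau_ne hv)
    obtain ⟨c, hc1, hc2⟩ := relprime_cancel hU0 h hc
    have hct : tau c = monomial (M + n) c := by
      have h1 : tau p' = monomial (e + M + n) p' := tau_hom _ _
      have h2 : tau (tau v).leadingCoeff = monomial e (tau v).leadingCoeff := tau_hom _ _
      rw [hc1, map_mul, h2] at h1
      apply mul_right_cancel₀ (b := monomial e (tau v).leadingCoeff) (by simpa using tau_ne hv)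
      rw [h1, monomial_mul_monomial, show e + M + n = M + n + e by ring]
    have key : ∀ (y w : RR k) (b : ℕ), (tau y).natDegree ≤ b + M + n → (tau w).natDegree = b →
        (tau y).coeff (b + M + n) = c * (tau w).leadingCoeff → y - c * w ∈ VV k (b + M + n) := by
      intro y w b hy hw hyw
      rw [mem_VV, degree_lt_iff_coeff_zero]
      intro j hj
      rw [map_sub, map_mul, hct, coeff_sub, ← C_mul_X_pow_eq_monomial, mul_assoc, coeff_C_mul,
        coeff_X_pow_mul', if_pos (by omega)]
      rcases hj.eq_or_lt with rfl | hj
      · rw [hyw, show b + M + n - (M + n) = b by omega, leadingCoeff, hw, sub_self]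
      · rw [coeff_eq_zero_of_natDegree_lt (by omega), coeff_eq_zero_of_natDegree_lt (by omega)]; simp
    have k1 := key p v e hpn he.symm hc1
    have k2 : r + c * u ∈ VV k (d + M + n) := by
      have := key (-r) u d (by simpa using hrn) hd.symm (by simp [← hr', hc2])
      have := (VV k _).neg_mem this
      convert this using 1; ring
    obtain ⟨c', h1, h2⟩ := ih _ _ k1 k2 (by convert hs using 1; ring)
    exact ⟨c + c', by convert h1 using 1; ring, by convert h2 using 1; ring⟩

lemma mul_mem_VV {u p : RR k} {N : ℕ} (hu : u ≠ 0) : 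
    p * u ∈ VV k ((tau u).natDegree + N) ↔ p ∈ VV k N := by
  rw [mem_VV, mem_VV, map_mul, degree_mul, degree_eq_natDegree (tau_ne hu)]
  by_cases hp : p = 0
  · subst hp; simp
  rw [degree_eq_natDegree (tau_ne hp)]
  norm_cast; omega

lemma VV_mono {M N : ℕ} (h : M ≤ N) : VV k M ≤ VV k N := fun u hu =>
  lt_of_lt_of_le (mem_VV.1 hu) (by exact_mod_cast h)

lemma exists_VV (u : RR k) : ∃ N, u ∈ VV k N :=
  ⟨(tau u).natDegree + 1, lt_of_le_of_lt degree_le_natDegree (by norm_cast; omega)⟩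

theorem glob (u v : RR k) (hu : u ≠ 0) (hv : v ≠ 0)
    (h : IsRelPrime (tau u).leadingCoeff (tau v).leadingCoeff)
    [FiniteDimensional k (RR k ⧸ Ideal.span {u, v})] :
    (tau u).natDegree * (tau v).natDegree ≤ Module.finrank k (RR k ⧸ Ideal.span {u, v}) := by
  set d := (tau u).natDegree with hd
  set e := (tau v).natDegree with he
  let f : VV k (d + e) →ₗ[k] (RR k ⧸ Ideal.span {u, v}) :=
    (Ideal.Quotient.mkₐ k (Ideal.span {u, v})).toLinearMap ∘ₗ (VV k (d + e)).subtype
  let g0 : (VV k e × VV k d) →ₗ[k] RR k :=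
    (LinearMap.mulRight k u ∘ₗ (VV k e).subtype).coprod (LinearMap.mulRight k v ∘ₗ (VV k d).subtype)
  have hg0 : ∀ x, g0 x ∈ VV k (d + e) := by
    rintro ⟨⟨p, hp⟩, ⟨r, hr⟩⟩
    refine Submodule.add_mem _ ((mul_mem_VV hu).2 hp) ?_
    rw [add_comm]; exact (mul_mem_VV hv).2 hr
  have hker : LinearMap.ker f ≤ LinearMap.range (g0.codRestrict _ hg0) := by
    rintro ⟨x, hx⟩ hxf
    have hxf : x ∈ Ideal.span {u, v} := Ideal.Quotient.eq_zero_iff_mem.1 hxf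
    obtain ⟨p, r, rfl⟩ := Ideal.mem_span_pair.1 hxf
    obtain ⟨N1, h1⟩ := exists_VV p
    obtain ⟨N2, h2⟩ := exists_VV r
    obtain ⟨c, hc1, hc2⟩ := glob_step u v hu hv h 0 (N1 + N2) p r (VV_mono (by omega) h1)
      (VV_mono (by omega) h2) (by simpa using hx)
    refine ⟨⟨⟨_, hc1⟩, ⟨_, hc2⟩⟩, ?_⟩
    ext1
    simp [g0]; ring
  have h1 := LinearMap.finrank_range_add_finrank_ker f
  have h2 := Submodule.finrank_mono hker
  have h3 := LinearMap.finrank_range_le (g0.codRestrict _ hg0)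
  have h4 := Submodule.finrank_le (LinearMap.range f)
  rw [Module.finrank_prod] at h3
  have t1 := VV_finrank (k := k) (d + e)
  have t2 := VV_finrank (k := k) d
  have t3 := VV_finrank (k := k) e
  nlinarith

end A2
section A3
open Polynomial
variable {k : Type*} [Field k]

lemma loc_step (u v : RR k) (m n : ℕ) (u1 v1 : (RR k)[X]) (hu : tau u = X ^ m * u1)
    (hv : tau v = X ^ n * v1) (hU : u1.coeff 0 ≠ 0) (hV : v1.coeff 0 ≠ 0)
    (h : IsRelPrime (u1.coeff 0) (v1.coeff 0)) (p r : RR k) (K : ℕ)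
    (hs : X ^ K ∣ tau (p * u + r * v)) (w : ℕ) (hw : w ≤ K) :
    ∃ c, X ^ w ∣ X ^ m * tau (p - c * v) ∧ X ^ w ∣ X ^ n * tau (r + c * u) := by
  induction w with
  | zero => exact ⟨0, by simp⟩
  | succ w ih =>
    obtain ⟨c0, ⟨p1, hp1⟩, ⟨r1, hr1⟩⟩ := ih (by omega)
    have hsum : tau (p * u + r * v) = X ^ w * (p1 * u1 + r1 * v1) := by
      rw [show p * u + r * v = (p - c0 * v) * u + (r + c0 * u) * v by ring, map_add, map_mul,
        map_mul, hu, hv]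
      linear_combination u1 * hp1 + v1 * hr1
    have h0 : p1.coeff 0 * u1.coeff 0 + r1.coeff 0 * v1.coeff 0 = 0 := by
      have : X ^ (w + 1) ∣ X ^ w * (p1 * u1 + r1 * v1) := hsum ▸ (pow_dvd_pow _ hw).trans hs
      rw [pow_succ, mul_dvd_mul_iff_left (pow_ne_zero _ X_ne_zero), X_dvd_iff] at this
      simpa using this
    obtain ⟨c, hc1, hc2⟩ := relprime_cancel hU h h0
    have hct : X ^ (m + n) * tau c = X ^ w * C c := by
      have h1 := tau_hom' (p - c0 * v) w m
      have h2 := tau_hom' v n 0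
      rw [hp1, coeff_X_pow_mul', if_pos le_rfl, Nat.sub_self, hc1] at h1
      simp only [pow_zero, one_mul, hv, coeff_X_pow_mul', if_pos le_rfl, Nat.sub_self] at h2
      rw [map_mul, h2, C_mul] at h1
      apply mul_right_cancel₀ (C_ne_zero.2 hV)
      linear_combination h1
    have hxn : (X : (RR k)[X]) ^ n ≠ 0 := pow_ne_zero _ X_ne_zero
    have hxm : (X : (RR k)[X]) ^ m ≠ 0 := pow_ne_zero _ X_ne_zero
    have e1 : X ^ m * tau (c * v) = X ^ w * (C c * v1) := by
      rw [map_mul, hv]; linear_combination v1 * hct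
    have e2 : X ^ n * tau (c * u) = X ^ w * (C c * u1) := by
      rw [map_mul, hu]; linear_combination u1 * hct
    refine ⟨c0 + c, ?_, ?_⟩
    · rw [show p - (c0 + c) * v = (p - c0 * v) - c * v by ring, map_sub, mul_sub, hp1, e1, ← mul_sub,
        pow_succ]
      apply mul_dvd_mul_left
      rw [X_dvd_iff]; simp [hc1]
    · rw [show r + (c0 + c) * u = (r + c0 * u) + c * u by ring, map_add, mul_add, hr1, e2, ← mul_add,
        pow_succ]
      apply mul_dvd_mul_left
      rw [X_dvd_iff]; simp [hc2]

theorem loc (u v : RR k) (m n : ℕ) (u1 v1 : (RR k)[X]) (hu : tau u = X ^ m * u1)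
    (hv : tau v = X ^ n * v1) (hU : u1.coeff 0 ≠ 0) (hV : v1.coeff 0 ≠ 0)
    (h : IsRelPrime (u1.coeff 0) (v1.coeff 0)) (K : ℕ) (hK : m + n ≤ K) :
    FiniteDimensional k (RR k ⧸ (Ideal.span {u, v} ⊔ MM k K)) ∧
    Module.finrank k (RR k ⧸ (Ideal.span {u, v} ⊔ MM k K)) ≤ m * n := by
  obtain ⟨K0, rfl⟩ := Nat.exists_eq_add_of_le hK
  set K := m + n + K0
  set J := Ideal.span {u, v} ⊔ MM k K with hJ
  let f : VV k K →ₗ[k] (RR k ⧸ J) := (Ideal.Quotient.mkₐ k J).toLinearMap ∘ₗ (VV k K).subtype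
  have hf : Function.Surjective f := by
    intro y
    obtain ⟨x, rfl⟩ := Ideal.Quotient.mk_surjective y
    refine ⟨⟨trunc K x, trunc_mem K x⟩, ?_⟩
    refine (Ideal.Quotient.eq.2 ?_).symm
    exact (le_sup_right : MM k K ≤ J) (trunc_sub_mem K x)
  have hfin : FiniteDimensional k (RR k ⧸ J) := Module.Finite.of_surjective f hf
  refine ⟨hfin, ?_⟩
  let g0 : (VV k (n + K0) × VV k (m + K0)) →ₗ[k] RR k := trunc K ∘ₗ
    ((LinearMap.mulRight k u ∘ₗ (VV k (n + K0)).subtype).coprod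
      (LinearMap.mulRight k v ∘ₗ (VV k (m + K0)).subtype))
  let g : (VV k (n + K0) × VV k (m + K0)) →ₗ[k] VV k K := g0.codRestrict _ (fun x => trunc_mem _ _)
  let χ : VV k K0 →ₗ[k] (VV k (n + K0) × VV k (m + K0)) :=
    ((trunc (n + K0) ∘ₗ LinearMap.mulRight k v ∘ₗ (VV k K0).subtype).codRestrict _
      (fun x => trunc_mem _ _)).prod
    ((- trunc (m + K0) ∘ₗ LinearMap.mulRight k u ∘ₗ (VV k K0).subtype).codRestrict _
      (fun x => (VV k _).neg_mem (trunc_mem _ _)))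
  have hgr : LinearMap.range g ≤ LinearMap.ker f := by
    rintro _ ⟨⟨p, r⟩, rfl⟩
    refine Ideal.Quotient.eq_zero_iff_mem.2 ?_
    have h1 : (p : RR k) * u + (r : RR k) * v ∈ J := (le_sup_left : _ ≤ J) (Ideal.mem_span_pair.2 ⟨_, _, rfl⟩)
    have h2 := (le_sup_right : MM k K ≤ J) (trunc_sub_mem K ((p : RR k) * u + (r : RR k) * v))
    simpa [g, g0] using J.sub_mem h1 h2
  have hgk : LinearMap.ker g ≤ LinearMap.range χ := by
    rintro ⟨⟨p, hp⟩, ⟨r, hr⟩⟩ hx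
    have hx : trunc K (p * u + r * v) = 0 := congrArg Subtype.val hx
    rw [trunc_eq_iff, mem_MM] at hx
    obtain ⟨c, hc1, hc2⟩ := loc_step u v m n u1 v1 hu hv hU hV h p r K hx K le_rfl
    have hxn : (X : (RR k)[X]) ^ n ≠ 0 := pow_ne_zero _ X_ne_zero
    have hxm : (X : (RR k)[X]) ^ m ≠ 0 := pow_ne_zero _ X_ne_zero
    rw [show K = m + (n + K0) by omega, pow_add, mul_dvd_mul_iff_left hxm, ← mem_MM,
      ← trunc_eq_iff] at hc1
    rw [show K = n + (m + K0) by omega, pow_add, mul_dvd_mul_iff_left hxn, ← mem_MM,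
      ← trunc_eq_iff] at hc2
    have hcc := mem_MM.1 (trunc_sub_mem K0 c)
    have hc3 : trunc (n + K0) ((c - trunc K0 c) * v) = 0 := by
      rw [trunc_eq_iff, mem_MM, map_mul, hv, add_comm, pow_add]
      exact mul_dvd_mul hcc (Dvd.intro _ rfl)
    have hc4 : trunc (m + K0) ((c - trunc K0 c) * u) = 0 := by
      rw [trunc_eq_iff, mem_MM, map_mul, hu, add_comm, pow_add]
      exact mul_dvd_mul hcc (Dvd.intro _ rfl)
    refine ⟨⟨trunc K0 c, trunc_mem _ _⟩, ?_⟩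
    rw [map_sub, trunc_self _ hp, sub_eq_zero] at hc1
    rw [map_add, trunc_self _ hr, add_eq_zero_iff_eq_neg] at hc2
    rw [sub_mul, map_sub, sub_eq_zero] at hc3 hc4
    ext1 <;> ext1
    · simp [χ, hc1, hc3]
    · simp [χ, hc2, hc4]
  have h1 := LinearMap.finrank_range_add_finrank_ker f
  rw [LinearMap.range_eq_top.2 hf, finrank_top] at h1
  have h2 := Submodule.finrank_mono hgr
  have h3 := LinearMap.finrank_range_add_finrank_ker g
  have h4 := Submodule.finrank_mono hgk
  have h5 := LinearMap.finrank_range_le χ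
  rw [Module.finrank_prod] at h3
  have t1 := VV_finrank (k := k) K
  have t2 := VV_finrank (k := k) (n + K0)
  have t3 := VV_finrank (k := k) (m + K0)
  have t4 := VV_finrank (k := k) K0
  simp only [K] at *
  nlinarith

end A3
section A4
open Polynomial
variable {k : Type*} [Field k]

noncomputable def TT (P : Fin 2 → k) : RR k ≃ₐ[k] RR k :=
  AlgEquiv.ofAlgHom (MvPolynomial.aeval fun i => MvPolynomial.X i + MvPolynomial.C (P i))
    (MvPolynomial.aeval fun i => MvPolynomial.X i - MvPolynomial.C (P i))
    (by ext1 i; simp [MvPolynomial.algebraMap_eq]) (by ext1 i; simp [MvPolynomial.algebraMap_eq])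

lemma TT_X (P : Fin 2 → k) (i : Fin 2) :
    TT P (MvPolynomial.X i) = MvPolynomial.X i + MvPolynomial.C (P i) := by
  simp [TT]

lemma TT_eval (P : Fin 2 → k) (u : RR k) : MvPolynomial.eval 0 (TT P u) = MvPolynomial.eval P u := by
  have : (MvPolynomial.aeval (0 : Fin 2 → k)).comp (TT P).toAlgHom = MvPolynomial.aeval P := by
    ext i; simp [TT]
  exact DFunLike.congr_fun this u

noncomputable def tauP (P : Fin 2 → k) : RR k →ₐ[k] (RR k)[X] := tau.comp (TT P).toAlgHom

lemma tauP_apply (P : Fin 2 → k) (u : RR k) : tauP P u = tau (TT P u) := rfl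

lemma tauP_ne (P : Fin 2 → k) {u : RR k} (h : u ≠ 0) : tauP P u ≠ 0 := by
  rw [tauP_apply]
  exact tau_ne ((map_ne_zero_iff _ (TT P).injective).2 h)

lemma tauP_coeff_zero (P : Fin 2 → k) (u : RR k) :
    (tauP P u).coeff 0 = MvPolynomial.C (MvPolynomial.eval P u) := by
  rw [← TT_eval, tauP_apply]
  generalize TT P u = w
  induction w using MvPolynomial.induction_on with
  | C a => simp
  | add p q hp hq => simp [hp, hq]
  | mul_X p i hp => simp [tau_X, coeff_zero_eq_eval_zero]

/-- powers of the maximal ideal at a point -/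
noncomputable def MP (P : Fin 2 → k) (K : ℕ) : Ideal (RR k) := Ideal.map (TT P).symm (MM k K)

lemma MP_pow (P : Fin 2 → k) (K : ℕ) : MP P K = MP P 1 ^ K := by
  rw [MP, MP, ← Ideal.map_pow, MM, MM, pow_one]

lemma mem_MP_one {P : Fin 2 → k} {u : RR k} : u ∈ MP P 1 ↔ MvPolynomial.eval P u = 0 := by
  have : u ∈ MP P 1 ↔ TT P u ∈ MM k 1 := by
    rw [MP, Ideal.mem_map_of_equiv]
    constructor
    · rintro ⟨x, hx, rfl⟩; simpa using hx
    · intro h; exact ⟨_, h, by simp⟩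
  rw [this, mem_MM, pow_one, X_dvd_iff, ← tauP_apply, tauP_coeff_zero]
  simp

def LB (P : Fin 2 → k) (u v : RR k) (c : ℕ) : Prop :=
  ∃ K0, ∀ K, K0 ≤ K → FiniteDimensional k (RR k ⧸ (Ideal.span {u, v} ⊔ MP P K)) ∧
    Module.finrank k (RR k ⧸ (Ideal.span {u, v} ⊔ MP P K)) ≤ c

lemma LB_mono {P : Fin 2 → k} {u v u' v' : RR k} {c : ℕ} (h : LB P u v c)
    (hle : Ideal.span {u, v} ≤ Ideal.span {u', v'}) : LB P u' v' c := by
  obtain ⟨K0, hK⟩ := h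
  refine ⟨K0, fun K hk => ?_⟩
  obtain ⟨h1, h2⟩ := hK K hk
  let f := Ideal.Quotient.factorₐ k (sup_le_sup_right hle (MP P K))
  have hf : Function.Surjective f := Ideal.Quotient.factor_surjective (sup_le_sup_right hle (MP P K))
  exact ⟨Module.Finite.of_surjective f.toLinearMap hf,
    (LinearMap.finrank_le_finrank_of_surjective (f := f.toLinearMap) hf).trans h2⟩

lemma LB_le {P : Fin 2 → k} {u v : RR k} {c c' : ℕ} (h : LB P u v c) (hc : c ≤ c') : LB P u v c' :=
  h.imp fun _ hK K hk => ⟨(hK K hk).1, (hK K hk).2.trans hc⟩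

theorem locP (P : Fin 2 → k) (u v : RR k) (m n : ℕ) (u1 v1 : (RR k)[X]) (hu : tauP P u = X ^ m * u1)
    (hv : tauP P v = X ^ n * v1) (hU : u1.coeff 0 ≠ 0) (hV : v1.coeff 0 ≠ 0)
    (h : IsRelPrime (u1.coeff 0) (v1.coeff 0)) : LB P u v (m * n) := by
  refine ⟨m + n, fun K hK => ?_⟩
  have := loc (TT P u) (TT P v) m n u1 v1 hu hv hU hV h K hK
  let e := Ideal.quotientEquivAlg (R₁ := k) (Ideal.span {TT P u, TT P v} ⊔ MM k K) 
    (Ideal.span {u, v} ⊔ MP P K) (TT P).symm (by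
      rw [Ideal.map_sup, Ideal.map_span, Set.image_pair]; simp [MP]; rfl)
  obtain ⟨h1, h2⟩ := this
  exact ⟨Module.Finite.equiv e.toLinearEquiv, by rw [← e.toLinearEquiv.finrank_eq]; exact h2⟩

lemma prod_sup_le {R ι : Type*} [CommRing R] (I : Ideal R) (s : Finset ι) (A : ι → Ideal R) :
    ∏ i ∈ s, (I ⊔ A i) ≤ I ⊔ ∏ i ∈ s, A i := by
  classical
  induction s using Finset.induction with
  | empty => simp
  | insert a s hs ih =>
    rw [Finset.prod_insert hs, Finset.prod_insert hs]
    refine (Ideal.mul_mono_right ih).trans ?_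
    rw [Ideal.sup_mul, Ideal.mul_sup (A a)]
    refine sup_le (Ideal.mul_le_left.trans le_sup_left) (sup_le (Ideal.mul_le_right.trans le_sup_left) le_sup_right)

theorem bezout [IsAlgClosed k] (u v : RR k) (hu : u ≠ 0) (hv : v ≠ 0)
    (h : IsRelPrime (tau u).leadingCoeff (tau v).leadingCoeff) (Z : Finset (Fin 2 → k))
    (hZ : ∀ P, MvPolynomial.eval P u = 0 → MvPolynomial.eval P v = 0 → P ∈ Z)
    (c : (Fin 2 → k) → ℕ) (hc : ∀ P ∈ Z, LB P u v (c P)) :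
    (tau u).natDegree * (tau v).natDegree ≤ ∑ P ∈ Z, c P := by
  classical
  set I := Ideal.span {u, v} with hI
  have h1 : ∏ P ∈ Z, MP P 1 ≤ I.radical := by
    rw [← MvPolynomial.vanishingIdeal_zeroLocus_eq_radical (K := k)]
    intro x hx P hP
    have hPZ : P ∈ Z := hZ P (hP u (Ideal.subset_span (by simp))) (hP v (Ideal.subset_span (by simp)))
    exact mem_MP_one.1 ((Ideal.prod_le_inf.trans (Finset.inf_le hPZ)) hx)
  obtain ⟨K1, hK1⟩ := Ideal.exists_pow_le_of_le_radical_of_fg_radical h1 (IsNoetherian.noetherian _)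
  choose! K0 hK0 using hc
  set K := K1 + ∑ P ∈ Z, K0 P with hK
  have hKP : ∀ P ∈ Z, K0 P ≤ K := fun P hP =>
    (Finset.single_le_sum (f := K0) (fun _ _ => Nat.zero_le _) hP).trans (by omega)
  have h2 : ∏ P ∈ Z, MP P K ≤ I := by
    rw [Finset.prod_congr rfl (fun P _ => MP_pow P K), Finset.prod_pow]
    exact (Ideal.pow_le_pow_right (by omega)).trans hK1
  let J : (Fin 2 → k) → Ideal (RR k) := fun P => I ⊔ MP P K
  have h3 : (⨅ P ∈ Z, J P) ≤ I := by
    rw [← Ideal.prod_eq_iInf_of_pairwise_isCoprime]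
    · exact (prod_sup_le I Z _).trans (sup_le le_rfl h2)
    · intro P _ Q _ hPQ
      have hne : ∃ i, P i ≠ Q i := by
        by_contra! h; exact hPQ (funext h)
      obtain ⟨i, hi⟩ := hne
      have : IsCoprime (MP P 1) (MP Q 1) := by
        rw [Ideal.isCoprime_iff_exists]
        refine ⟨MvPolynomial.C (Q i - P i)⁻¹ * (MvPolynomial.X i - MvPolynomial.C (P i)), ?_,
          - MvPolynomial.C (Q i - P i)⁻¹ * (MvPolynomial.X i - MvPolynomial.C (Q i)), ?_, ?_⟩
        · rw [mem_MP_one]; simp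
        · rw [mem_MP_one]; simp
        · have : (Q i - P i)⁻¹ * (Q i - P i) = 1 := inv_mul_cancel₀ (sub_ne_zero.2 hi.symm)
          have := congrArg (MvPolynomial.C (σ := Fin 2)) this
          rw [map_mul, map_sub, map_one] at this
          linear_combination this
      have h4 : IsCoprime (MP P K) (MP Q K) := by
        rw [MP_pow P, MP_pow Q]; exact this.pow
      rw [Ideal.isCoprime_iff_sup_eq] at h4
      refine Ideal.isCoprime_iff_sup_eq.2 (eq_top_iff.2 ?_)
      rw [← h4]; exact sup_le_sup le_sup_right le_sup_right
  have hJfin : ∀ P : Z, FiniteDimensional k (RR k ⧸ J P) := fun P => (hK0 P P.2 K (hKP P P.2)).1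
  let g : (RR k ⧸ I) →ₐ[k] (∀ P : Z, RR k ⧸ J P) :=
    AlgHom.pi fun P => Ideal.Quotient.factorₐ k le_sup_left
  have hg : Function.Injective g := by
    rw [injective_iff_map_eq_zero]
    intro x hx
    obtain ⟨y, rfl⟩ := Ideal.Quotient.mk_surjective x
    refine Ideal.Quotient.eq_zero_iff_mem.2 (h3 ?_)
    simp only [Submodule.mem_iInf]
    intro P hP
    exact Ideal.Quotient.eq_zero_iff_mem.1 (congrFun hx ⟨P, hP⟩)
  have hfin : FiniteDimensional k (RR k ⧸ I) := Module.Finite.of_injective g.toLinearMap hg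
  refine (glob u v hu hv h).trans ((LinearMap.finrank_le_finrank_of_injective (f := g.toLinearMap) hg).trans ?_)
  rw [Module.finrank_pi_fintype, ← Finset.sum_coe_sort Z]
  exact Finset.sum_le_sum fun P _ => (hK0 P P.2 K (hKP P P.2)).2

end A4
section A5
open Polynomial
variable {k : Type*} [Field k]

local notation "xx" => (MvPolynomial.X 0 : RR k)
local notation "yy" => (MvPolynomial.X 1 : RR k)

lemma const_of_natDegree_zero {p : RR k} (h : (tau p).natDegree = 0) :
    p = MvPolynomial.C (MvPolynomial.eval 0 p) := by
  have h1 := eq_C_of_natDegree_eq_zero h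
  have h2 := tauP_coeff_zero (0 : Fin 2 → k) p
  have h3 : TT (0 : Fin 2 → k) p = p := by
    have : (TT (0 : Fin 2 → k)).toAlgHom = AlgHom.id k _ := by ext1 i; simp [TT_X]
    exact DFunLike.congr_fun this p
  rw [tauP_apply, h3] at h2
  rw [h2, ← tau_C] at h1
  exact tau_inj h1

lemma isUnit_of_natDegree_zero {p : RR k} (h0 : p ≠ 0) (h : (tau p).natDegree = 0) : IsUnit p := by
  rw [const_of_natDegree_zero h] at h0 ⊢
  exact (IsUnit.mk0 _ (by rintro h; rw [h] at h0; simp at h0)).map MvPolynomial.C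

lemma natDegree_of_isUnit {p : RR k} (h : IsUnit p) : (tau p).natDegree = 0 :=
  natDegree_eq_zero_of_isUnit (h.map tau)

lemma irr_deg_one {p : RR k} (h : (tau p).natDegree = 1) : Irreducible p := by
  have h0 : p ≠ 0 := by rintro rfl; simp at h
  refine ⟨fun hu => by simp [natDegree_of_isUnit hu] at h, fun a b hab => ?_⟩
  subst hab
  have ha := left_ne_zero_of_mul h0
  have hb := right_ne_zero_of_mul h0
  rw [map_mul, natDegree_mul (tau_ne ha) (tau_ne hb)] at h
  rcases Nat.eq_zero_or_pos (tau a).natDegree with h1 | h1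
  · exact Or.inl (isUnit_of_natDegree_zero ha h1)
  · exact Or.inr (isUnit_of_natDegree_zero hb (by omega))

lemma tau_lin (a b c : k) : tau (MvPolynomial.C a * xx + MvPolynomial.C b * yy + MvPolynomial.C c) =
    C (MvPolynomial.C a * xx + MvPolynomial.C b * yy) * X + C (MvPolynomial.C c) := by
  simp only [map_add, map_mul, tau_C, tau_X]; ring

lemma lin_ne {a b : k} (h : a ≠ 0 ∨ b ≠ 0) : MvPolynomial.C a * xx + MvPolynomial.C b * yy ≠ 0 := by
  intro h0
  have h1 := congrArg (MvPolynomial.eval ![1, 0]) h0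
  have h2 := congrArg (MvPolynomial.eval ![0, 1]) h0
  simp at h1 h2; tauto

lemma lin_prime {a b : k} (c : k) (h : a ≠ 0 ∨ b ≠ 0) :
    Prime (MvPolynomial.C a * xx + MvPolynomial.C b * yy + MvPolynomial.C c) := by
  refine (irr_deg_one ?_).prime
  rw [tau_lin]
  exact natDegree_linear (lin_ne h)

lemma not_both_dvd {p : RR k} (hp : Prime p) {a b c d : k} (hdet : a * d - b * c ≠ 0)
    (h1 : p ∣ MvPolynomial.C a * xx + MvPolynomial.C b * yy)
    (h2 : p ∣ MvPolynomial.C c * xx + MvPolynomial.C d * yy) : False := by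
  have hu : IsUnit (MvPolynomial.C (a * d - b * c) : RR k) := (IsUnit.mk0 _ hdet).map MvPolynomial.C
  have hx : p ∣ xx := by
    rw [← hu.dvd_mul_left]
    have := dvd_sub (h1.mul_left (MvPolynomial.C d)) (h2.mul_left (MvPolynomial.C b))
    convert this using 1; simp; ring
  have hy : p ∣ yy := by
    rw [← hu.dvd_mul_left]
    have := dvd_sub (h2.mul_left (MvPolynomial.C a)) (h1.mul_left (MvPolynomial.C c))
    convert this using 1; simp; ring
  have hpx : Prime xx := by simpa using lin_prime (k := k) (a := 1) (b := 0) 0 (by simp)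
  have h3 := ((hp.associated_of_dvd hpx hx).symm.dvd.trans hy)
  obtain ⟨w, hw⟩ := h3
  have := congrArg (MvPolynomial.eval ![0, 1]) hw
  simp at this

lemma pderiv_dvd {p H : RR k} (h : p * p ∣ H) (i : Fin 2) : p ∣ MvPolynomial.pderiv i H := by
  obtain ⟨w, rfl⟩ := h
  rw [mul_assoc, MvPolynomial.pderiv_mul, MvPolynomial.pderiv_mul]
  exact dvd_add (dvd_mul_of_dvd_right (dvd_mul_right _ _) _)
    (dvd_mul_right _ _)

lemma dvd_coeff_low {R : Type*} [CommRing R] {p : R} {A B : R[X]} {m n : ℕ}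
    (hA : ∀ i ≤ m, p ∣ A.coeff i) (hB : ∀ i ≤ n, p ∣ B.coeff i) : p ∣ (A * B).coeff (m + n + 1) := by
  rw [coeff_mul]
  refine Finset.dvd_sum fun x hx => ?_
  have hx := Finset.HasAntidiagonal.mem_antidiagonal.1 hx
  rcases le_or_gt x.1 m with h | h
  · exact (hA _ h).mul_right _
  · exact (hB _ (by omega)).mul_left _

lemma dvd_coeff_high {R : Type*} [CommRing R] {p : R} {A B : R[X]}
    (hA : p ∣ A.leadingCoeff) (hB : p ∣ B.leadingCoeff) {j : ℕ}
    (hj : A.natDegree + B.natDegree ≤ j + 1) : p ∣ (A * B).coeff j := by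
  rw [coeff_mul]
  refine Finset.dvd_sum fun x hx => ?_
  have hx := Finset.HasAntidiagonal.mem_antidiagonal.1 hx
  have key : ∀ (D : R[X]) i, p ∣ D.leadingCoeff → D.natDegree ≤ i → p ∣ D.coeff i := by
    intro D i h1 h2
    rcases h2.eq_or_lt with rfl | h2
    · exact h1
    · rw [coeff_eq_zero_of_natDegree_lt h2]; exact dvd_zero _
  rcases le_or_gt A.natDegree x.1 with h | h
  · exact (key _ _ hA h).mul_right _
  · exact (key _ _ hB (by omega)).mul_left _

noncomputable def FF (k : Type*) [Field k] (t : ℕ) : RR k :=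
  MvPolynomial.X 0 ^ t + MvPolynomial.X 1 ^ t + 1 + (MvPolynomial.X 0 + MvPolynomial.X 1 + 1) ^ t

set_option linter.unusedSectionVars false
variable [CharP k 2]

lemma cast_odd {R : Type*} [CommRing R] [CharP R 2] {t : ℕ} (h : Odd t) : (t : R) = 1 := by
  obtain ⟨m, rfl⟩ := h
  simp [CharTwo.two_eq_zero]

lemma pderiv_pow' (i : Fin 2) (f : RR k) {t : ℕ} (h : Odd t) :
    MvPolynomial.pderiv i (f ^ t) = f ^ (t - 1) * MvPolynomial.pderiv i f := by
  rw [Derivation.leibniz_pow, smul_eq_mul, nsmul_eq_mul, cast_odd h, one_mul]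

lemma tau_FF (t : ℕ) : tau (FF k t) = C (xx ^ t + yy ^ t) * X ^ t + 1 + (C (xx + yy) * X + 1) ^ t := by
  simp only [FF, map_add, map_pow, tau_X, map_one, mul_pow, add_mul]

lemma tau_FF_coeff_t {t : ℕ} (ht : 0 < t) :
    (tau (FF k t)).coeff t = xx ^ t + yy ^ t + (xx + yy) ^ t := by
  rw [tau_FF, coeff_add, coeff_add, coeff_C_mul_X_pow, if_pos rfl, coeff_one, if_neg (by omega)]
  congr 1
  · simp
  · simpa [coeff_one] using coeff_pow_of_natDegree_le (m := t) (n := 1) (natDegree_linear_le (a := xx + yy) (b := 1))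

lemma tau_FF_natDegree_le (t : ℕ) : (tau (FF k t)).natDegree ≤ t := by
  rw [tau_FF]
  refine natDegree_add_le_of_degree_le (natDegree_add_le_of_degree_le (natDegree_C_mul_X_pow_le _ _)
    (by simp)) ?_
  simpa using natDegree_pow_le_of_le t (natDegree_linear_le (a := xx + yy) (b := 1))

lemma tau_FF_coeff_pred {t : ℕ} (ht : 1 < t) (hodd : Odd t) :
    (tau (FF k t)).coeff (t - 1) = (xx + yy) ^ (t - 1) := by
  have h : ((C (xx + yy) * X + 1) ^ t).coeff (t - 1) = (xx + yy) ^ (t - 1) := by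
    rw [add_pow, finsetSum_coeff, Finset.sum_eq_single (t - 1)]
    · rw [mul_pow, ← C_pow, one_pow, mul_one, mul_assoc, coeff_C_mul, ← map_natCast (C : _ →+* (RR k)[X]),
        coeff_X_pow_mul', if_pos le_rfl]
      simp [Nat.choose_symm (show 1 ≤ t by omega), cast_odd hodd]
    · intro b _ hb
      rw [mul_pow, ← C_pow, one_pow, mul_one, mul_assoc, coeff_C_mul, ← map_natCast (C : _ →+* (RR k)[X]),
        coeff_X_pow_mul']
      split_ifs with h
      · rw [coeff_C, if_neg (by omega), mul_zero]
      · simp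
    · intro h; simp at h
  rw [tau_FF, coeff_add, coeff_add, coeff_C_mul_X_pow, if_neg (by omega), coeff_one, if_neg (by omega),
    h]
  simp

lemma T_ne {t : ℕ} (ht : 1 < t) (hodd : Odd t) : xx ^ t + yy ^ t + (xx + yy) ^ t ≠ 0 := by
  intro h
  have h1 := congrArg (MvPolynomial.pderiv 0) h
  simp only [map_add, pderiv_pow' _ _ hodd, map_zero] at h1
  have := congrArg (MvPolynomial.eval (fun _ => 1)) h1
  simp [MvPolynomial.pderiv_X, CharTwo.add_self_eq_zero, show t - 1 ≠ 0 by omega] at this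

lemma FF_ne {t : ℕ} (ht : 1 < t) (hodd : Odd t) : FF k t ≠ 0 := by
  intro h
  apply T_ne (k := k) ht hodd
  rw [← tau_FF_coeff_t (by omega), h]; simp

lemma tau_FF_natDegree {t : ℕ} (ht : 1 < t) (hodd : Odd t) : (tau (FF k t)).natDegree = t :=
  le_antisymm (tau_FF_natDegree_le t) (le_natDegree_of_ne_zero (by
    rw [tau_FF_coeff_t (by omega)]; exact T_ne ht hodd))

theorem top_relprime {t : ℕ} (ht : 1 < t) (hodd : Odd t) {a b : RR k} (h : a * b ∣ FF k t) :
    IsRelPrime (tau a).leadingCoeff (tau b).leadingCoeff := by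
  obtain ⟨w, hw⟩ := h
  have h0 := FF_ne (k := k) ht hodd
  rw [hw] at h0
  have ha : a ≠ 0 := by rintro rfl; simp at h0
  have hb : b ≠ 0 := by rintro rfl; simp at h0
  have hw0 : w ≠ 0 := by rintro rfl; simp at h0
  refine (UniqueFactorizationMonoid.isRelPrime_iff_no_prime_factors (by simpa using tau_ne ha)).2 ?_
  intro p hpa hpb hp
  have hbw : p ∣ (tau (b * w)).leadingCoeff := by
    rw [map_mul, leadingCoeff_mul]; exact hpb.mul_right _
  have hdeg := tau_FF_natDegree (k := k) ht hodd
  have hF : tau (FF k t) = tau a * tau (b * w) := by rw [hw, mul_assoc, map_mul]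
  have h1 : p ∣ (xx + yy) ^ (t - 1) := by
    rw [← tau_FF_coeff_pred ht hodd, hF]
    apply dvd_coeff_high hpa hbw
    rw [← natDegree_mul (tau_ne ha) (tau_ne (mul_ne_zero hb hw0)), ← hF, hdeg]; omega
  have h2 : p * p ∣ xx ^ t + yy ^ t + (xx + yy) ^ t := by
    rw [← tau_FF_coeff_t (by omega)]
    have : (tau (FF k t)).coeff t = (tau (FF k t)).leadingCoeff := by rw [leadingCoeff, hdeg]
    rw [this, hF, leadingCoeff_mul]
    exact mul_dvd_mul hpa hbw
  have h3 := pderiv_dvd h2 0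
  simp only [map_add, pderiv_pow' _ _ hodd, MvPolynomial.pderiv_X] at h3
  simp at h3
  have h4 : p ∣ xx := hp.dvd_of_dvd_pow ((dvd_add_left h1).1 h3)
  exact not_both_dvd hp (a := 1) (b := 0) (c := 1) (d := 1) (by simp) (by simpa using h4)
    (by simpa using hp.dvd_of_dvd_pow h1)

end A5
section A6
open Polynomial
variable {k : Type*} [Field k] [CharP k 2]
set_option linter.unusedSectionVars false

local notation "xx" => (MvPolynomial.X 0 : RR k)
local notation "yy" => (MvPolynomial.X 1 : RR k)
local notation "cc" => (MvPolynomial.C : k →+* RR k)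

lemma pow_expand {R : Type*} [CommRing R] [CharP R 2] (i l : ℕ) (hi : 1 ≤ i) (hl : Odd l) (Z a : R) :
    ∃ r, (Z + a) ^ (2 ^ i * l + 1) = a ^ (2 ^ i * l + 1) + a ^ (2 ^ i * l) * Z +
      a ^ (2 ^ i * (l - 1)) * a * Z ^ (2 ^ i) + a ^ (2 ^ i * (l - 1)) * Z ^ (2 ^ i + 1) +
      Z ^ (2 ^ i + 2) * r := by
  obtain ⟨w, hw⟩ := Polynomial.powAddExpansion (a ^ 2 ^ i) (Z ^ 2 ^ i) l
  obtain ⟨e, he⟩ : ∃ e, 2 ^ i = 2 + e := Nat.exists_eq_add_of_le (by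
    calc 2 = 2 ^ 1 := rfl
      _ ≤ 2 ^ i := Nat.pow_le_pow_right (by norm_num) hi)
  refine ⟨w * Z ^ e * (Z + a), ?_⟩
  rw [pow_succ, pow_mul, add_pow_char_pow, add_comm (Z ^ 2 ^ i), hw, cast_odd hl, ← pow_mul, ← pow_mul,
    pow_succ a, pow_succ Z (2 ^ i), pow_add Z (2 ^ i) 2]
  have : (Z ^ 2 ^ i) ^ 2 = Z ^ 2 ^ i * Z ^ 2 * Z ^ e := by
    rw [pow_two (Z ^ 2 ^ i)]; conv_lhs => rw [← pow_add]
    rw [← pow_add, ← pow_add]; congr 1; omega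
  rw [this]; ring

/-- the local coefficients at a point -/
noncomputable def phiq (i l : ℕ) (P : Fin 2 → k) : RR k :=
  cc (P 0 ^ (2 ^ i * (l - 1)) * P 0) * xx ^ 2 ^ i + cc (P 1 ^ (2 ^ i * (l - 1)) * P 1) * yy ^ 2 ^ i +
  cc ((P 0 + P 1 + 1) ^ (2 ^ i * (l - 1)) * (P 0 + P 1 + 1)) * (xx + yy) ^ 2 ^ i

noncomputable def phiq1 (i l : ℕ) (P : Fin 2 → k) : RR k :=
  cc (P 0 ^ (2 ^ i * (l - 1))) * xx ^ (2 ^ i + 1) + cc (P 1 ^ (2 ^ i * (l - 1))) * yy ^ (2 ^ i + 1) +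
  cc ((P 0 + P 1 + 1) ^ (2 ^ i * (l - 1))) * (xx + yy) ^ (2 ^ i + 1)

lemma tauP_FF (i l : ℕ) (hi : 1 ≤ i) (hl : Odd l) (P : Fin 2 → k) :
    ∃ r, tauP P (FF k (2 ^ i * l + 1)) = C (cc (P 0 ^ (2 ^ i * l + 1) + P 1 ^ (2 ^ i * l + 1) + 1 +
        (P 0 + P 1 + 1) ^ (2 ^ i * l + 1))) +
      C (cc (P 0 ^ (2 ^ i * l)) * xx + cc (P 1 ^ (2 ^ i * l)) * yy +
        cc ((P 0 + P 1 + 1) ^ (2 ^ i * l)) * (xx + yy)) * X + C (phiq i l P) * X ^ 2 ^ i +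
      C (phiq1 i l P) * X ^ (2 ^ i + 1) + X ^ (2 ^ i + 2) * r := by
  obtain ⟨r1, h1⟩ := pow_expand i l hi hl (C xx * X) (C (cc (P 0)))
  obtain ⟨r2, h2⟩ := pow_expand i l hi hl (C yy * X) (C (cc (P 1)))
  obtain ⟨r3, h3⟩ := pow_expand i l hi hl (C (xx + yy) * X) (C (cc (P 0 + P 1 + 1)))
  refine ⟨C xx ^ (2 ^ i + 2) * r1 + C yy ^ (2 ^ i + 2) * r2 + C (xx + yy) ^ (2 ^ i + 2) * r3, ?_⟩
  have e0 : tauP P xx = C xx * X + C (cc (P 0)) := by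
    rw [tauP_apply, TT_X, map_add, tau_X, tau_C]
  have e1 : tauP P yy = C yy * X + C (cc (P 1)) := by
    rw [tauP_apply, TT_X, map_add, tau_X, tau_C]
  have e2 : tauP P xx + tauP P yy + 1 = C (xx + yy) * X + C (cc (P 0 + P 1 + 1)) := by
    rw [e0, e1]; simp only [map_add, map_one]; ring
  rw [FF, map_add, map_add, map_add, map_pow, map_pow, map_pow, map_add, map_add, map_one, e2, e0, e1, h1,
    h2, h3, phiq, phiq1]
  simp only [mul_pow, map_add, map_mul, map_pow, map_one]
  ring

def inZ (l : ℕ) (P : Fin 2 → k) : Prop := P 0 ^ l = 1 ∧ P 1 ^ l = 1 ∧ (P 0 + P 1 + 1) ^ l = 1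

lemma coef01 {R : Type*} [CommRing R] (e L A B : R) (r : R[X]) {q : ℕ} (hq : 2 ≤ q) :
    (C e + C L * X + C A * X ^ q + C B * X ^ (q + 1) + X ^ (q + 2) * r).coeff 0 = e ∧
    (C e + C L * X + C A * X ^ q + C B * X ^ (q + 1) + X ^ (q + 2) * r).coeff 1 = L := by
  simp only [coeff_add, coeff_C_mul, coeff_X_pow, coeff_X_pow_mul', coeff_C, coeff_X]
  simp [show (0 : ℕ) ≠ q by omega, show (1 : ℕ) ≠ q by omega, show q ≠ 0 by omega]

lemma sing {i l : ℕ} (hi : 1 ≤ i) (hl : Odd l) {P : Fin 2 → k}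
    (h : X ^ 2 ∣ tauP P (FF k (2 ^ i * l + 1))) : inZ l P := by
  obtain ⟨r, hr⟩ := tauP_FF i l hi hl P
  have hq : 2 ≤ 2 ^ i := by
    calc 2 = 2 ^ 1 := rfl
      _ ≤ 2 ^ i := Nat.pow_le_pow_right (by norm_num) hi
  rw [X_pow_dvd_iff] at h
  have h0 := h 0 (by norm_num)
  have h1 := h 1 (by norm_num)
  rw [hr] at h0 h1
  rw [(coef01 _ _ _ _ _ hq).1] at h0
  rw [(coef01 _ _ _ _ _ hq).2] at h1
  have hx := congrArg (MvPolynomial.eval ![1, 0]) h1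
  have hy := congrArg (MvPolynomial.eval ![0, 1]) h1
  simp [← pow_mul] at hx hy
  have hx' := CharTwo.add_eq_zero.1 hx
  have hy' := CharTwo.add_eq_zero.1 hy
  have h0' : P 0 ^ (2 ^ i * l + 1) + P 1 ^ (2 ^ i * l + 1) + 1 + (P 0 + P 1 + 1) ^ (2 ^ i * l + 1) = 0 := by
    exact (MvPolynomial.C_eq_zero).1 h0
  have hc : (P 0 + P 1 + 1) ^ (2 ^ i * l) = 1 := by
    rw [pow_succ, pow_succ, pow_succ, hx', hy'] at h0'
    have h2 : (2 : k) = 0 := CharTwo.two_eq_zero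
    linear_combination h0' - ((P 0 + P 1 + 1) ^ (2 ^ i * l) * (P 0 + P 1) + 1) * h2
  have key : ∀ z : k, z ^ (2 ^ i * l) = 1 → z ^ l = 1 := by
    intro z hz
    rw [mul_comm, pow_mul] at hz
    have : (z ^ l + 1) ^ 2 ^ i = 0 := by
      rw [add_pow_char_pow, hz, one_pow, CharTwo.add_self_eq_zero]
    exact CharTwo.add_eq_zero.1 (pow_eq_zero_iff (by omega) |>.1 this)
  exact ⟨key _ (hx'.trans hc), key _ (hy'.trans hc), key _ hc⟩

lemma tauP_FF_Z {i l : ℕ} (hi : 1 ≤ i) (hl : Odd l) {P : Fin 2 → k} (hP : inZ l P) :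
    ∃ r, tauP P (FF k (2 ^ i * l + 1)) = X ^ 2 ^ i * (C (phiq i l P) + X * C (phiq1 i l P) + X ^ 2 * r) := by
  obtain ⟨r, hr⟩ := tauP_FF i l hi hl P
  refine ⟨r, ?_⟩
  obtain ⟨h0, h1, h2⟩ := hP
  have e : ∀ z : k, z ^ l = 1 → z ^ (2 ^ i * l) = 1 := fun z hz => by rw [mul_comm, pow_mul, hz, one_pow]
  rw [hr, pow_succ, pow_succ, pow_succ, e _ h0, e _ h1, e _ h2]
  have e1 : 1 * P 0 + 1 * P 1 + 1 + 1 * (P 0 + P 1 + 1) = 0 := by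
    rw [one_mul, one_mul, one_mul, CharTwo.add_self_eq_zero]
  have e2 : cc 1 * xx + cc 1 * yy + cc 1 * (xx + yy) = 0 := by
    rw [map_one, one_mul, one_mul, one_mul, CharTwo.add_self_eq_zero]
  rw [e1, e2]; simp only [map_zero]; ring

lemma Z_inv {l i : ℕ} (hl : Odd l) {z : k} (hz : z ^ l = 1) :
    z ^ (2 ^ i * (l - 1)) * z ^ 2 ^ i = 1 ∧ z ^ (l - 1) * z = 1 := by
  obtain ⟨m, rfl⟩ := hl
  constructor
  · rw [← pow_add, ← Nat.mul_succ, show (2 * m + 1 - 1).succ = 2 * m + 1 by omega, mul_comm, pow_mul, hz,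
      one_pow]
  · rw [← pow_succ, show 2 * m + 1 - 1 + 1 = 2 * m + 1 by omega, hz]

lemma phiq1_sqfree {i l : ℕ} (hi : 1 ≤ i) (hl : Odd l) {P : Fin 2 → k} (hP : inZ l P) {p : RR k}
    (hp : Prime p) : ¬ p * p ∣ phiq1 i l P := by
  intro h
  have ho : Odd (2 ^ i + 1) := (Nat.even_pow.2 ⟨even_two, by omega⟩).add_one
  have h0 := pderiv_dvd h 0
  have h1 := pderiv_dvd h 1
  obtain ⟨z0, z1, z2⟩ := hP
  have c0 := (Z_inv (i := i) hl z0).2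
  have c1 := (Z_inv (i := i) hl z1).2
  have c2 := (Z_inv (i := i) hl z2).2
  simp only [phiq1, map_add, MvPolynomial.pderiv_C_mul, pderiv_pow' _ _ ho, MvPolynomial.pderiv_X] at h0 h1
  have e0 : (cc (P 0 ^ (l - 1) + (P 0 + P 1 + 1) ^ (l - 1)) * xx + cc ((P 0 + P 1 + 1) ^ (l - 1)) * yy) ^ 2 ^ i
      = cc (P 0 ^ (2 ^ i * (l - 1))) * xx ^ 2 ^ i +
        cc ((P 0 + P 1 + 1) ^ (2 ^ i * (l - 1))) * (xx + yy) ^ 2 ^ i := by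
    simp only [add_pow_char_pow, mul_pow, map_add, map_pow, mul_comm (2 ^ i) (l - 1), pow_mul]
    ring
  have e1 : (cc ((P 0 + P 1 + 1) ^ (l - 1)) * xx + cc (P 1 ^ (l - 1) + (P 0 + P 1 + 1) ^ (l - 1)) * yy) ^ 2 ^ i
      = cc (P 1 ^ (2 ^ i * (l - 1))) * yy ^ 2 ^ i +
        cc ((P 0 + P 1 + 1) ^ (2 ^ i * (l - 1))) * (xx + yy) ^ 2 ^ i := by
    simp only [add_pow_char_pow, mul_pow, map_add, map_pow, mul_comm (2 ^ i) (l - 1), pow_mul]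
    ring
  have g0 : p ∣ cc (P 0 ^ (l - 1) + (P 0 + P 1 + 1) ^ (l - 1)) * xx + cc ((P 0 + P 1 + 1) ^ (l - 1)) * yy := by
    apply hp.dvd_of_dvd_pow (n := 2 ^ i)
    rw [e0]; convert h0 using 1; simp
  have g1 : p ∣ cc ((P 0 + P 1 + 1) ^ (l - 1)) * xx + cc (P 1 ^ (l - 1) + (P 0 + P 1 + 1) ^ (l - 1)) * yy := by
    apply hp.dvd_of_dvd_pow (n := 2 ^ i)
    rw [e1]; convert h1 using 1; simp
  refine not_both_dvd hp ?_ g0 g1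
  intro hd
  have h2 : (2 : k) = 0 := CharTwo.two_eq_zero
  generalize P 0 ^ (l - 1) = A at *
  generalize P 1 ^ (l - 1) = B at *
  generalize (P 0 + P 1 + 1) ^ (l - 1) = D at *
  have : (1 : k) = 0 := by
    have h3 : (A * B + B * D + A * D) * (P 0 * P 1 * (P 0 + P 1 + 1)) = 0 := by
      rw [show A * B + B * D + A * D = 0 by linear_combination hd]; ring
    have h4 : (A * B + B * D + A * D) * (P 0 * P 1 * (P 0 + P 1 + 1)) =
      (A * P 0) * (B * P 1) * (P 0 + P 1 + 1) + (B * P 1) * (D * (P 0 + P 1 + 1)) * P 0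
        + (A * P 0) * (D * (P 0 + P 1 + 1)) * P 1 := by ring
    rw [h4, c0, c1, c2] at h3
    linear_combination h3 - (P 0 + P 1) * h2
  exact one_ne_zero this

end A6
section A7
open Polynomial
variable {k : Type*} [Field k] [CharP k 2]
set_option linter.unusedSectionVars false

local notation "xx" => (MvPolynomial.X 0 : RR k)
local notation "yy" => (MvPolynomial.X 1 : RR k)
local notation "cc" => (MvPolynomial.C : k →+* RR k)

noncomputable def mult (P : Fin 2 → k) (a : RR k) : ℕ := (tauP P a).natTrailingDegree
noncomputable def ini (P : Fin 2 → k) (a : RR k) : RR k := (tauP P a).trailingCoeff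

variable {P : Fin 2 → k}

lemma mult_mul {a b : RR k} (ha : a ≠ 0) (hb : b ≠ 0) : mult P (a * b) = mult P a + mult P b := by
  rw [mult, map_mul, natTrailingDegree_mul (tauP_ne P ha) (tauP_ne P hb)]; rfl

lemma ini_mul (a b : RR k) : ini P (a * b) = ini P a * ini P b := by
  rw [ini, map_mul, trailingCoeff_mul]; rfl

lemma ini_ne {a : RR k} (ha : a ≠ 0) : ini P a ≠ 0 := by
  rw [ini, Ne, trailingCoeff_eq_zero]; exact tauP_ne P ha

lemma mult_fac (P : Fin 2 → k) (a : RR k) : ∃ u, tauP P a = X ^ mult P a * u ∧ u.coeff 0 = ini P a := by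
  obtain ⟨u, hu⟩ := (X_pow_dvd_iff (f := tauP P a) (n := mult P a)).2
    (fun d hd => coeff_eq_zero_of_lt_natTrailingDegree hd)
  refine ⟨u, hu, ?_⟩
  have := congrArg (fun f => f.coeff (mult P a + 0)) hu
  simp only [coeff_X_pow_mul', add_zero, le_refl, if_true, Nat.sub_self] at this
  rw [← this]; rfl

lemma mult_eq {a : RR k} {m : ℕ} {u : (RR k)[X]} (h : tauP P a = X ^ m * u) (hu : u.coeff 0 ≠ 0) :
    mult P a = m ∧ ini P a = u.coeff 0 := by
  have h1 : (tauP P a).natTrailingDegree = m := by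
    have h2 : (tauP P a).coeff m = u.coeff 0 := by rw [h, coeff_X_pow_mul']; simp
    refine le_antisymm (natTrailingDegree_le_of_ne_zero (by rwa [h2])) ?_
    refine le_natTrailingDegree (by rintro h0; rw [h0] at h2; exact hu (by simpa using h2.symm)) ?_
    intro n hn; rw [h, coeff_X_pow_mul', if_neg (by omega)]
  refine ⟨h1, ?_⟩
  rw [ini, trailingCoeff, h1, h, coeff_X_pow_mul']; simp

lemma tau_ini (a : RR k) : tau (ini P a) = monomial (mult P a) (ini P a) := by
  rw [ini, trailingCoeff, tauP_apply]; exact tau_hom _ _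

lemma natDegree_ini {a : RR k} (ha : a ≠ 0) : (tau (ini P a)).natDegree = mult P a := by
  rw [tau_ini]; exact natDegree_monomial_eq _ (ini_ne ha)

lemma mult_pos {a : RR k} (ha : a ≠ 0) : 0 < mult P a ↔ MvPolynomial.eval P a = 0 := by
  have h := tauP_coeff_zero P a
  rw [Nat.pos_iff_ne_zero, mult, Ne, natTrailingDegree_eq_zero, h]
  simp [tauP_ne P ha]

lemma LB_rel {a b : RR k} (ha : a ≠ 0) (hb : b ≠ 0) (h : IsRelPrime (ini P a) (ini P b)) :
    LB P a b (mult P a * mult P b) := by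
  obtain ⟨u, hu, hu0⟩ := mult_fac P a
  obtain ⟨v, hv, hv0⟩ := mult_fac P b
  refine locP P a b _ _ u v hu hv ?_ ?_ ?_
  · rw [hu0]; exact ini_ne ha
  · rw [hv0]; exact ini_ne hb
  · rwa [hu0, hv0]

lemma ini_unit {a : RR k} (ha : a ≠ 0) (h : MvPolynomial.eval P a ≠ 0) : IsUnit (ini P a) := by
  refine isUnit_of_natDegree_zero (ini_ne ha) ?_
  rw [natDegree_ini ha]
  by_contra h1; exact h ((mult_pos ha).1 (Nat.pos_of_ne_zero h1))

lemma LB_zero {a b : RR k} (ha : a ≠ 0) (hb : b ≠ 0)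
    (h : ¬ (MvPolynomial.eval P a = 0 ∧ MvPolynomial.eval P b = 0)) : LB P a b 0 := by
  rw [not_and_or] at h
  have h2 := LB_rel (P := P) ha hb
  rcases h with h | h
  · have h1 := h2 (ini_unit ha h).isRelPrime_left
    rwa [show mult P a = 0 by by_contra h1; exact h ((mult_pos ha).1 (Nat.pos_of_ne_zero h1)), zero_mul] at h1
  · have h1 := h2 (ini_unit hb h).isRelPrime_right
    rwa [show mult P b = 0 by by_contra h1; exact h ((mult_pos hb).1 (Nat.pos_of_ne_zero h1)), mul_zero] at h1

variable {i l : ℕ}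

lemma phiq1_ne (hi : 1 ≤ i) (hl : Odd l) (hP : inZ l P) : phiq1 i l P ≠ 0 := by
  intro h
  have hpx : Prime xx := by simpa using lin_prime (k := k) (a := 1) (b := 0) 0 (by simp)
  exact phiq1_sqfree hi hl hP hpx (by rw [h]; exact dvd_zero _)

lemma rat_mult (hi : 1 ≤ i) (hl : Odd l) (hP : inZ l P) (h : phiq i l P = 0) :
    mult P (FF k (2 ^ i * l + 1)) = 2 ^ i + 1 ∧ ini P (FF k (2 ^ i * l + 1)) = phiq1 i l P := by
  obtain ⟨r, hr⟩ := tauP_FF_Z hi hl hP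
  have : (C (phiq1 i l P) + X * r).coeff 0 = phiq1 i l P := by simp
  rw [← this]
  refine mult_eq ?_ (by rw [this]; exact phiq1_ne hi hl hP)
  rw [hr, h, map_zero]; ring

lemma rat_LB (hi : 1 ≤ i) (hl : Odd l) (hP : inZ l P) (h : phiq i l P = 0) {a b w : RR k}
    (hF : FF k (2 ^ i * l + 1) = a * b * w) (ha : a ≠ 0) (hb : b ≠ 0) :
    LB P a b (mult P a * mult P b) := by
  refine LB_rel ha hb ?_
  refine (UniqueFactorizationMonoid.isRelPrime_iff_no_prime_factors (ini_ne ha)).2 ?_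
  intro p hpa hpb hp
  apply phiq1_sqfree hi hl hP hp
  rw [← (rat_mult hi hl hP h).2, hF, ini_mul, ini_mul]
  exact (mul_dvd_mul hpa hpb).mul_right _

lemma rat_pt (hl : Odd l) (hP : inZ l P) (h : phiq i l P = 0) :
    P 0 ^ 2 ^ i = P 0 ∧ P 1 ^ 2 ^ i = P 1 := by
  obtain ⟨z0, z1, z2⟩ := hP
  have c0 := (Z_inv (i := i) hl z0).1
  have c1 := (Z_inv (i := i) hl z1).1
  have c2 := (Z_inv (i := i) hl z2).1
  have hx := congrArg (MvPolynomial.eval ![1, 0]) h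
  have hy := congrArg (MvPolynomial.eval ![0, 1]) h
  simp [phiq] at hx hy
  have hx' := CharTwo.add_eq_zero.1 hx
  have hy' := CharTwo.add_eq_zero.1 hy
  have e : (P 0 + P 1 + 1) ^ 2 ^ i = P 0 ^ 2 ^ i + P 1 ^ 2 ^ i + 1 := by
    rw [add_pow_char_pow, add_pow_char_pow, one_pow]
  rw [e] at c2
  generalize hg : P 0 + P 1 + 1 = g at *
  have h2 : (2 : k) = 0 := CharTwo.two_eq_zero
  generalize P 0 ^ (2 ^ i * (l - 1)) = A at *
  generalize P 1 ^ (2 ^ i * (l - 1)) = B at *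
  generalize g ^ (2 ^ i * (l - 1)) = D at *
  generalize P 0 ^ 2 ^ i = u at *
  generalize P 1 ^ 2 ^ i = v at *
  have k0 : D * g * u = P 0 := by rw [← hx']; linear_combination P 0 * c0
  have k1 : D * g * v = P 1 := by rw [← hy']; linear_combination P 1 * c1
  have k2 : D * g = 1 := by
    linear_combination g * c2 - hg - k0 - k1 + h2 * (g * D)* 0
  rw [k2, one_mul] at k0 k1
  exact ⟨k0, k1⟩

variable [IsAlgClosed k]

lemma nr_L (h : phiq i l P ≠ 0) : ∃ A B : k,
    A ^ 2 ^ i = P 0 ^ (2 ^ i * (l - 1)) * P 0 + (P 0 + P 1 + 1) ^ (2 ^ i * (l - 1)) * (P 0 + P 1 + 1) ∧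
    B ^ 2 ^ i = P 1 ^ (2 ^ i * (l - 1)) * P 1 + (P 0 + P 1 + 1) ^ (2 ^ i * (l - 1)) * (P 0 + P 1 + 1) ∧
    phiq i l P = (cc A * xx + cc B * yy) ^ 2 ^ i ∧ Prime (cc A * xx + cc B * yy) := by
  have hq : 2 ^ i ≠ 0 := by positivity
  obtain ⟨A, hA⟩ := IsAlgClosed.exists_pow_nat_eq (P 0 ^ (2 ^ i * (l - 1)) * P 0 +
    (P 0 + P 1 + 1) ^ (2 ^ i * (l - 1)) * (P 0 + P 1 + 1)) (Nat.pos_of_ne_zero hq)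
  obtain ⟨B, hB⟩ := IsAlgClosed.exists_pow_nat_eq (P 1 ^ (2 ^ i * (l - 1)) * P 1 +
    (P 0 + P 1 + 1) ^ (2 ^ i * (l - 1)) * (P 0 + P 1 + 1)) (Nat.pos_of_ne_zero hq)
  have e : phiq i l P = (cc A * xx + cc B * yy) ^ 2 ^ i := by
    rw [add_pow_char_pow, mul_pow, mul_pow, ← map_pow, ← map_pow, hA, hB, phiq, map_add, map_add, add_pow_char_pow]
    ring
  refine ⟨A, B, hA, hB, e, ?_⟩
  simpa using lin_prime (k := k) (a := A) (b := B) 0 (by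
    by_contra! h0
    rw [e, h0.1, h0.2] at h; simp [hq] at h)

/-- basic data at a point where the leading form is a power of a line -/
lemma nr_split (hi : 1 ≤ i) (hl : Odd l) (hP : inZ l P) (h : phiq i l P ≠ 0) {u v : RR k}
    (hF : FF k (2 ^ i * l + 1) = u * v) : u ≠ 0 ∧ v ≠ 0 ∧ mult P u + mult P v = 2 ^ i ∧
    ini P u * ini P v = phiq i l P ∧ ∃ U V, tauP P u = X ^ mult P u * U ∧ U.coeff 0 = ini P u ∧
      tauP P v = X ^ mult P v * V ∧ V.coeff 0 = ini P v ∧ (U * V).coeff 1 = phiq1 i l P := by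
  obtain ⟨r, hr⟩ := tauP_FF_Z hi hl hP
  have e : (C (phiq i l P) + X * C (phiq1 i l P) + X ^ 2 * r).coeff 0 = phiq i l P := by simp
  have hm := mult_eq hr (by rwa [e])
  have h0 : FF k (2 ^ i * l + 1) ≠ 0 := by
    intro h0; rw [h0] at hm; rw [e, ini, map_zero] at hm; exact h (by simpa using hm.2.symm)
  have hu : u ≠ 0 := by rintro rfl; simp [hF] at h0
  have hv : v ≠ 0 := by rintro rfl; simp [hF] at h0
  have hm1 := hm.1
  have hm2 := hm.2
  rw [hF, mult_mul hu hv] at hm1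
  rw [hF, ini_mul, e] at hm2
  obtain ⟨U, hU, hU0⟩ := mult_fac P u
  obtain ⟨V, hV, hV0⟩ := mult_fac P v
  refine ⟨hu, hv, hm1, hm2, U, V, hU, hU0, hV, hV0, ?_⟩
  have : U * V = C (phiq i l P) + X * C (phiq1 i l P) + X ^ 2 * r := by
    apply mul_left_cancel₀ (pow_ne_zero (2 ^ i) (X_ne_zero (R := RR k)))
    rw [← hr, hF, map_mul, hU, hV, ← hm1, pow_add]; ring
  rw [this]
  simp [coeff_X_pow_mul', coeff_C]

lemma nr_ini {L a b : RR k} {q : ℕ} (hL : Prime L) (hdL : (tau L).natDegree = 1) (ha : a ≠ 0)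
    (h : ini P a * b = L ^ q) : Associated (ini P a) (L ^ mult P a) := by
  obtain ⟨j, hj, hj'⟩ := (dvd_prime_pow hL q).1 ⟨b, h.symm⟩
  have : j = mult P a := by
    rw [← natDegree_ini ha]
    obtain ⟨c, hc⟩ := hj'
    have := congrArg (fun f => (tau f).natDegree) hc
    simp only [map_mul, map_pow] at this
    rw [natDegree_mul (tau_ne (ini_ne ha)) (tau_ne c.ne_zero), natDegree_of_isUnit c.isUnit, natDegree_pow, hdL]
      at this
    omega
  rwa [← this]

lemma lin_deg {A B : k} (h : Prime (cc A * xx + cc B * yy)) : (tau (cc A * xx + cc B * yy)).natDegree = 1 := by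
  have := tau_lin A B 0
  simp only [map_zero, add_zero] at this
  rw [this]; exact natDegree_C_mul_X _ h.ne_zero

lemma NR1 (hi : 1 ≤ i) (hl : Odd l) (hP : inZ l P) (h : phiq i l P ≠ 0) {u v : RR k}
    (hF : FF k (2 ^ i * l + 1) = u * v) (hu : MvPolynomial.eval P u = 0) (hv : MvPolynomial.eval P v = 0) :
    mult P u = 1 ∨ mult P v = 1 := by
  obtain ⟨A, B, hA, hB, e, hL⟩ := nr_L h
  obtain ⟨hu0, hv0, hs, hin, U, V, hU, hU0, hV, hV0, h1⟩ := nr_split hi hl hP h hF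
  rw [e] at hin
  have iu := nr_ini hL (lin_deg hL) hu0 hin
  have iv := nr_ini hL (lin_deg hL) hv0 ((mul_comm _ _).trans hin)
  have pu := (mult_pos hu0).2 hu
  have pv := (mult_pos hv0).2 hv
  by_contra! hc
  apply phiq1_sqfree hi hl hP hL
  rw [← h1, ← pow_two]
  refine dvd_coeff_low (m := 0) (n := 0) ?_ ?_
  · intro j hj
    obtain rfl : j = 0 := by omega
    rw [hU0]; exact (pow_dvd_pow _ (by omega)).trans iu.symm.dvd
  · intro j hj
    obtain rfl : j = 0 := by omega
    rw [hV0]; exact (pow_dvd_pow _ (by omega)).trans iv.symm.dvd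

lemma NR_three (hi : 1 ≤ i) (hl : Odd l) (hP : inZ l P) (h : phiq i l P ≠ 0) {a b c : RR k}
    (hF : a * b * c ∣ FF k (2 ^ i * l + 1)) (ha : MvPolynomial.eval P a = 0) (hb : MvPolynomial.eval P b = 0)
    (hc : MvPolynomial.eval P c = 0) : False := by
  obtain ⟨w, hw⟩ := hF
  have ab := NR1 hi hl hP h (u := a * b) (v := c * w) (by rw [hw]; ring) (by simp [ha]) (by simp [hc])
  have a' := NR1 hi hl hP h (u := a) (v := b * (c * w)) (by rw [hw]; ring) (by simp [ha]) (by simp [hc])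
  have b' := NR1 hi hl hP h (u := b) (v := a * (c * w)) (by rw [hw]; ring) (by simp [hb]) (by simp [hc])
  obtain ⟨hab0, hcw, hs, -⟩ := nr_split hi hl hP h (u := a * b) (v := c * w) (by rw [hw]; ring)
  have ha0 := left_ne_zero_of_mul hab0
  have hb0 := right_ne_zero_of_mul hab0
  have hc0 := left_ne_zero_of_mul hcw
  have hw0 := right_ne_zero_of_mul hcw
  rw [mult_mul hb0 hcw] at a'
  rw [mult_mul ha0 hcw] at b'
  rw [mult_mul ha0 hb0] at ab hs
  rw [mult_mul hc0 hw0] at *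
  have := (mult_pos ha0).2 ha
  have := (mult_pos hb0).2 hb
  have := (mult_pos hc0).2 hc
  have h3 : 2 ^ i = 3 := by omega
  have : Even (2 ^ i) := Nat.even_pow.2 ⟨even_two, by omega⟩
  rw [h3] at this; revert this; decide

lemma NR2 (hi : 1 ≤ i) (hl : Odd l) (hP : inZ l P) (h : phiq i l P ≠ 0) {a v : RR k}
    (hF : FF k (2 ^ i * l + 1) = a * v) (ha : mult P a = 1) : LB P a v (2 ^ i) := by
  obtain ⟨A, B, hA, hB, e, hL'⟩ := nr_L h
  obtain ⟨ha0, hv0, hs, hin, U, V, hU, hU0, hV, hV0, h1⟩ := nr_split hi hl hP h hF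
  rw [e] at hin
  have iu := nr_ini hL' (lin_deg hL') ha0 hin
  have iv := nr_ini hL' (lin_deg hL') hv0 ((mul_comm _ _).trans hin)
  rw [ha, pow_one] at iu
  have hL := iu.symm.prime hL'
  set L := ini P a with hLdef
  have hq : 2 ≤ 2 ^ i := by
    calc 2 = 2 ^ 1 := rfl
      _ ≤ 2 ^ i := Nat.pow_le_pow_right (by norm_num) hi
  obtain ⟨s, hs2⟩ : ∃ s, 2 ^ i = s + 2 := ⟨2 ^ i - 2, by omega⟩
  have hmv : mult P v = s + 1 := by omega
  rw [hmv] at iv hV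
  obtain ⟨c, hc⟩ := (iv.trans (iu.symm.pow_pow (n := s + 1))).symm
  have htL : tau L = C L * X := by
    rw [hLdef, tau_ini, ha, C_mul_X_eq_monomial]
  obtain ⟨c0, hc0⟩ : ∃ c0 : k, (c : RR k) = cc c0 := ⟨_, const_of_natDegree_zero (natDegree_of_isUnit c.isUnit)⟩
  rw [hc0] at hc
  set w := (TT P).symm (cc c0 * L ^ s) with hw
  have htw : tauP P w = C (cc c0 * L ^ s) * X ^ s := by
    rw [tauP_apply, hw, AlgEquiv.apply_symm_apply, map_mul, map_pow, htL, tau_C, mul_pow, map_mul, map_pow]; ring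
  rw [ha, pow_one] at hU
  obtain ⟨v2, hv2⟩ : X ∣ V - C (cc c0 * L ^ s) * U := by
    rw [X_dvd_iff, coeff_sub, coeff_C_mul, hU0, hV0, ← hc]; ring
  have e1 : (U * V).coeff 1 = L * v2.coeff 0 := by
    have hv2' : V = X * v2 + C (cc c0 * L ^ s) * U := by rw [← hv2]; ring
    have : U * V = X * (U * v2) + C (cc c0 * L ^ s) * (U * U) := by rw [hv2']; ring
    have hUU : (U * U).coeff 1 = 0 := by
      rw [coeff_mul, Finset.Nat.antidiagonal_succ]; simp
      rw [mul_comm]; exact CharTwo.add_self_eq_zero _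
    rw [this, coeff_add, coeff_C_mul, hUU, mul_zero, add_zero, ← zero_add 1, coeff_X_mul, mul_coeff_zero, hU0]
  have hnd : ¬ L ∣ v2.coeff 0 := by
    intro hd
    apply phiq1_sqfree hi hl hP hL
    rw [← h1, e1]; exact mul_dvd_mul_left _ hd
  have hlb : LB P a (v - w * a) (1 * 2 ^ i) := by
    refine locP P a (v - w * a) 1 (2 ^ i) U v2 (by rw [hU, pow_one]) ?_ (by rw [hU0]; exact hL.ne_zero)
      (by intro h0; exact hnd (by rw [h0]; exact dvd_zero _)) ?_
    · rw [map_sub, map_mul, hV, htw, hU, hs2, pow_succ X (s + 1), mul_assoc _ X v2, ← hv2]; ring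
    · rw [hU0]; exact (hL.irreducible.isRelPrime_iff_not_dvd).2 hnd
  rw [one_mul] at hlb
  refine LB_mono hlb (Ideal.span_le.2 ?_)
  rintro x (rfl | rfl)
  · exact Ideal.subset_span (by simp)
  · exact Ideal.sub_mem _ (Ideal.subset_span (by simp)) (Ideal.mul_mem_left _ _ (Ideal.subset_span (by simp)))

lemma NR2' (hi : 1 ≤ i) (hl : Odd l) (hP : inZ l P) (h : phiq i l P ≠ 0) {a b w : RR k}
    (hF : FF k (2 ^ i * l + 1) = a * b * w) (ha : MvPolynomial.eval P a = 0) (hb : MvPolynomial.eval P b = 0) :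
    LB P a b (2 ^ i) := by
  have hF1 : FF k (2 ^ i * l + 1) = a * (b * w) := by rw [hF]; ring
  rcases NR1 hi hl hP h hF1 ha (by simp [hb]) with h1 | h1
  · refine LB_mono (NR2 hi hl hP h hF1 h1) (Ideal.span_le.2 ?_)
    rintro x (rfl | rfl)
    · exact Ideal.subset_span (by simp)
    · exact Ideal.mul_mem_right _ _ (Ideal.subset_span (by simp))
  · obtain ⟨ha0, hbw0, -⟩ := nr_split hi hl hP h hF1
    have hb0 := left_ne_zero_of_mul hbw0
    rw [mult_mul hb0 (right_ne_zero_of_mul hbw0)] at h1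
    have := (mult_pos hb0).2 hb
    refine LB_mono (NR2 hi hl hP h (a := b) (v := a * w) (by rw [hF]; ring) (by omega)) (Ideal.span_le.2 ?_)
    rintro x (rfl | rfl)
    · exact Ideal.subset_span (by simp)
    · exact Ideal.mul_mem_right _ _ (Ideal.subset_span (by simp))

lemma NR3 (hl : Odd l) (hP : inZ l P) (h : phiq 1 l P ≠ 0) {u v : RR k}
    (hF : FF k (2 ^ 1 * l + 1) = u * v) (hu : MvPolynomial.eval P u = 0) (hv : MvPolynomial.eval P v = 0)
    (h0 : P 0 ≠ 1) (h1 : P 1 ≠ 1) (h01 : P 0 ≠ P 1) : False := by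
  obtain ⟨A, B, hA, hB, e, hL⟩ := nr_L h
  obtain ⟨hu0, hv0, hs, hin, U, V, hU, hU0, hV, hV0, hc1⟩ := nr_split le_rfl hl hP h hF
  rw [e] at hin
  have iu := nr_ini hL (lin_deg hL) hu0 hin
  have iv := nr_ini hL (lin_deg hL) hv0 ((mul_comm _ _).trans hin)
  have pu := (mult_pos hu0).2 hu
  have pv := (mult_pos hv0).2 hv
  have hd : cc A * xx + cc B * yy ∣ phiq1 1 l P := by
    rw [← hc1]
    refine dvd_coeff_low (m := 0) (n := 0) ?_ ?_
    · intro j hj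
      obtain rfl : j = 0 := by omega
      rw [hU0]; exact (dvd_pow_self _ (by omega)).trans iu.symm.dvd
    · intro j hj
      obtain rfl : j = 0 := by omega
      rw [hV0]; exact (dvd_pow_self _ (by omega)).trans iv.symm.dvd
  obtain ⟨w, hw⟩ := hd
  have hev := congrArg (MvPolynomial.eval ![B, A]) hw
  obtain ⟨z0, z1, z2⟩ := hP
  have c0 := (Z_inv (i := 1) hl z0).2
  have c1 := (Z_inv (i := 1) hl z1).2
  have c2 := (Z_inv (i := 1) hl z2).2
  have h2 : (2 : k) = 0 := CharTwo.two_eq_zero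
  simp only [phiq1, pow_one, mul_comm 2 (l - 1), pow_mul] at hev hA hB
  simp at hev
  generalize hg : P 0 + P 1 + 1 = g at *
  generalize P 0 ^ (l - 1) = a at *
  generalize P 1 ^ (l - 1) = b at *
  generalize g ^ (l - 1) = d at *
  generalize hα : P 0 = α at *
  generalize hβ : P 1 = β at *
  have hA' : A ^ 2 = a + d := by rw [hA]; linear_combination a * c0 + d * c2
  have hB' : B ^ 2 = b + d := by rw [hB]; linear_combination b * c1 + d * c2
  have hev' : a ^ 2 * B ^ 3 + b ^ 2 * A ^ 3 + d ^ 2 * (A + B) ^ 3 = 0 := by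
    linear_combination hev + h2 * (A * B * MvPolynomial.eval ![B, A] w)
  have hsq : a ^ 4 * (b + d) ^ 3 + b ^ 4 * (a + d) ^ 3 + d ^ 4 * (a + b) ^ 3 = 0 := by
    have e3 : (A + B) ^ 2 = a + b := by linear_combination hA' + hB' + (A * B + d) * h2
    have : (a ^ 2 * B ^ 3 + b ^ 2 * A ^ 3 + d ^ 2 * (A + B) ^ 3) ^ 2 = 0 := by rw [hev']; ring
    rw [CharTwo.add_sq, CharTwo.add_sq] at this
    rw [← hA', ← hB', ← e3]; linear_combination this
  have k1 : (b + d) * (β * g) = 1 + α := by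
    linear_combination g * c1 + β * c2 + hg + h2 * (g - α - 1)
  have k2 : (a + d) * (α * g) = 1 + β := by
    linear_combination g * c0 + α * c2 + hg + h2 * (g - β - 1)
  have k3 : (a + b) * (α * β) = 1 + g := by
    linear_combination β * c0 + α * c1 + hg - h2 
  have hfin : (1 + α) ^ 3 * (β * g) + (1 + β) ^ 3 * (α * g) + (1 + g) ^ 3 * (α * β) = 0 := by
    have : (a ^ 4 * (b + d) ^ 3 + b ^ 4 * (a + d) ^ 3 + d ^ 4 * (a + b) ^ 3) * (α * β * g) ^ 4 = 0 := by
      rw [hsq, zero_mul]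
    have e4 : (a ^ 4 * (b + d) ^ 3 + b ^ 4 * (a + d) ^ 3 + d ^ 4 * (a + b) ^ 3) * (α * β * g) ^ 4 =
      (a * α) ^ 4 * ((b + d) * (β * g)) ^ 3 * (β * g) + (b * β) ^ 4 * ((a + d) * (α * g)) ^ 3 * (α * g) +
      (d * g) ^ 4 * ((a + b) * (α * β)) ^ 3 * (α * β) := by ring
    rw [e4, c0, c1, c2, k1, k2, k3] at this
    simpa using this
  have : (1 + α) * (1 + β) * (α + β) = 0 := by
    rw [← hg] at hfin
    linear_combination hfin - h2 * (7 * α ^ 1 * β ^ 1 + 10 * α ^ 2 * β ^ 1 + 10 * α ^ 1 * β ^ 2 + 5 * α ^ 3 * β ^ 1 + 9 * α ^ 2 * β ^ 2 + 1 * α ^ 4 * β ^ 1 + 2 * α ^ 3 * β ^ 2 + 5 * α ^ 1 * β ^ 3 + 2 * α ^ 2 * β ^ 3 + 1 * α ^ 1 * β ^ 4)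
  rcases mul_eq_zero.1 this with h3 | h3
  · rcases mul_eq_zero.1 h3 with h4 | h4
    · exact h0 (CharTwo.add_eq_zero.1 h4).symm
    · exact h1 (CharTwo.add_eq_zero.1 h4).symm
  · exact h01 (CharTwo.add_eq_zero.1 h3)

end A7
section A8
open Polynomial Finset

lemma comb1 {ι π : Type*} [DecidableEq ι] (S : Finset ι) (σ : ι → ι) (hσ : ∀ a ∈ S, σ a ∈ S ∧ σ a ≠ a)
    (d : ι → ℕ) (hd : ∀ a ∈ S, d (σ a) = d a) (Z : Finset π) (c : π → ι → ι → ℕ)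
    (h : ∀ a ∈ S, ∀ b ∈ S, a ≠ b → d a * d b ≤ ∑ P ∈ Z, c P a b) :
    (∑ a ∈ S, d a) ^ 2 ≤ ∑ P ∈ Z, ∑ a ∈ S, (∑ b ∈ S.erase a, c P a b + c P a (σ a)) := by
  rw [pow_two, sum_mul_sum, sum_comm (s := Z)]
  refine sum_le_sum fun a ha => ?_
  rw [sum_add_distrib, sum_comm (s := Z), ← sum_erase_add S _ ha]
  refine Nat.add_le_add (sum_le_sum fun b hb => ?_) ?_
  · exact h a ha b (mem_of_mem_erase hb) (ne_of_mem_erase hb).symm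
  · rw [← hd a ha] 
    nth_rw 1 [hd a ha]
    exact h a ha _ (hσ a ha).1 (hσ a ha).2.symm

lemma comb2 {ι : Type*} [DecidableEq ι] (S : Finset ι) (σ : ι → ι) (hσ : ∀ a ∈ S, σ a ∈ S)
    (hinj : Set.InjOn σ S) (m : ι → ℕ) :
    ∑ a ∈ S, (∑ b ∈ S.erase a, m a * m b + m a * m (σ a)) ≤ (∑ a ∈ S, m a) ^ 2 := by
  have h1 : ∑ a ∈ S, m (σ a) ^ 2 = ∑ a ∈ S, m a ^ 2 :=
    sum_bij (fun a _ => σ a) hσ (fun a ha b hb h => hinj ha hb h)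
      (fun b hb => by
        have := Finset.surj_on_of_inj_on_of_card_le (fun a (_ : a ∈ S) => σ a) hσ
          (fun a b ha hb h => hinj ha hb h) le_rfl b hb
        obtain ⟨a, ha, e⟩ := this
        exact ⟨a, ha, e.symm⟩) (fun _ _ => rfl)
  have h2 : ∑ a ∈ S, m a * m (σ a) ≤ ∑ a ∈ S, m a * m a := by
    have : ∑ a ∈ S, 2 * (m a * m (σ a)) ≤ ∑ a ∈ S, (m a ^ 2 + m (σ a) ^ 2) :=
      sum_le_sum fun a _ => by
        have := two_mul_le_add_sq (m a) (m (σ a)); linarith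
    rw [sum_add_distrib, h1, ← mul_sum] at this
    simp only [← pow_two]; omega
  rw [sum_add_distrib, pow_two, sum_mul_sum]
  calc _ ≤ ∑ a ∈ S, ∑ b ∈ S.erase a, m a * m b + ∑ a ∈ S, m a * m a := Nat.add_le_add_left h2 _
    _ = ∑ a ∈ S, (∑ b ∈ S.erase a, m a * m b + m a * m a) := by rw [sum_add_distrib]
    _ ≤ _ := le_of_eq (sum_congr rfl fun a ha => sum_erase_add S (fun b => m a * m b) ha)

/-- at most two curves through the point -/
lemma comb3 {ι : Type*} [DecidableEq ι] (S : Finset ι) (σ : ι → ι) (V : Finset ι) (hV : V.card ≤ 2) (q : ℕ) :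
    ∑ a ∈ S, (∑ b ∈ S.erase a, (if a ∈ V ∧ b ∈ V then q else 0) + (if a ∈ V ∧ σ a ∈ V then q else 0)) ≤ 4 * q := by
  calc _ ≤ ∑ a ∈ S, (if a ∈ V then 2 * q else 0) := by
        refine sum_le_sum fun a _ => ?_
        by_cases ha : a ∈ V
        · simp only [ha, true_and, if_true]
          rw [← sum_filter, sum_const, smul_eq_mul]
          have : #({b ∈ S.erase a | b ∈ V}) ≤ 1 := by
            calc _ ≤ #(V.erase a) := card_le_card (by
                  intro b hb; simp only [mem_filter, mem_erase] at hb ⊢; exact ⟨hb.1.1, hb.2⟩)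
              _ ≤ 1 := by rw [card_erase_of_mem ha]; omega
          have h1 : (if σ a ∈ V then q else 0) ≤ q := by split_ifs <;> omega
          nlinarith
        · simp [ha]
    _ ≤ 4 * q := by
        rw [← sum_filter, sum_const, smul_eq_mul]
        have : #({a ∈ S | a ∈ V}) ≤ 2 := (card_le_card (by
          intro b hb; exact (mem_filter.1 hb).2)).trans hV
        nlinarith

variable {k : Type*} [Field k] [CharP k 2] 

lemma count_pts [DecidableEq k] (M : Finset k) (h1 : 1 ∈ M) {N : ℕ} (hN : Odd N) (hM : #M ≤ N)
    (A : Finset (Fin 2 → k)) (hA : ∀ P ∈ A, P 0 ∈ M ∧ P 1 ∈ M ∧ P 0 + P 1 + 1 ∈ M ∧ P 0 ≠ 1 ∧ P 1 ≠ 1 ∧ P 0 ≠ P 1) :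
    #A ≤ (N - 3) * (N - 1) := by
  have e : #(M.erase 1) ≤ N - 1 := by rw [card_erase_of_mem h1]; omega
  refine (card_le_mul_card_image_of_maps_to (f := fun P => P 0) (t := M.erase 1)
    (fun P hP => mem_erase.2 ⟨(hA P hP).2.2.2.1, (hA P hP).1⟩) (N - 3) ?_).trans (Nat.mul_le_mul_left _ e)
  intro α hα
  obtain ⟨hα1, hαM⟩ := mem_erase.1 hα
  set T := {β ∈ M | α + β + 1 ∈ M} with hT
  have hTe : Even #T := by
    have : ∑ β ∈ T, (1 : ZMod 2) = 0 := by
      refine sum_involution (fun β _ => α + β + 1) ?_ ?_ ?_ ?_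
      · intros; decide
      · intro β _ _ h
        apply hα1
        have h2 : (2 : k) = 0 := CharTwo.two_eq_zero
        linear_combination h - h2
      · intro β hβ
        rw [hT, mem_filter] at hβ ⊢
        refine ⟨hβ.2, ?_⟩
        rw [show α + (α + β + 1) + 1 = β by
          have h2 : (2 : k) = 0 := CharTwo.two_eq_zero
          linear_combination (α + 1) * h2]
        exact hβ.1
      · intro β _
        have h2 : (2 : k) = 0 := CharTwo.two_eq_zero
        linear_combination (α + 1) * h2
    rw [sum_const, nsmul_eq_mul, mul_one, ZMod.natCast_eq_zero_iff] at this
    exact even_iff_two_dvd.2 this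
  have hTN : #T ≤ N - 1 := by
    have : #T ≤ N := (card_le_card (filter_subset _ _)).trans hM
    obtain ⟨r, hr⟩ := hTe
    obtain ⟨s, hs⟩ := hN
    omega
  have hsub : ({1, α} : Finset k) ⊆ T := by
    intro β hβ
    rw [hT, mem_filter]
    rcases mem_insert.1 hβ with rfl | hβ
    · refine ⟨h1, ?_⟩
      rwa [add_assoc, CharTwo.add_self_eq_zero, add_zero]
    · rw [mem_singleton.1 hβ, CharTwo.add_self_eq_zero, zero_add]; exact ⟨hαM, h1⟩
  have hcard : #(T \ {1, α}) ≤ N - 3 := by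
    rw [card_sdiff_of_subset hsub, card_pair (Ne.symm hα1)]; omega
  refine le_trans ?_ hcard
  refine card_le_card_of_injOn (fun P => P 1) ?_ ?_
  · intro P hP
    obtain ⟨hPA, hP0⟩ := mem_filter.1 hP
    obtain ⟨a0, a1, a2, a3, a4, a5⟩ := hA P hPA
    rw [hP0] at a2 a5
    simp only [coe_sdiff, Set.mem_sdiff, mem_coe, hT, mem_filter, mem_insert, mem_singleton, not_or]
    exact ⟨⟨a1, a2⟩, a4, a5.symm⟩
  · intro P hP Q hQ h
    have h0 := (mem_filter.1 hP).2.trans (mem_filter.1 hQ).2.symm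
    funext j
    fin_cases j
    · exact h0
    · exact h

lemma arith {q l δ N1 N2 N3 : ℕ} (hq2 : 2 ≤ q) (hqe : Even q) (hl : 3 ≤ l) (hlo : Odd l) (hkw : l ≠ q - 1)
    (hδ : δ = Nat.gcd l (q - 1)) (h1 : N1 ≤ (l - 3) * (l - 1)) (h2 : N2 ≤ (δ - 3) * (δ - 1))
    (h3 : N3 ≤ 3 * (δ - 1))
    (h : (q * l - 2) ^ 2 ≤ q ^ 2 * N1 + (2 * q + 1) * N2 + q ^ 2 * N3 + (q - 2) ^ 2) : False := by
  have hδl : δ ∣ l := hδ ▸ Nat.gcd_dvd_left _ _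
  have hδq : δ ∣ q - 1 := hδ ▸ Nat.gcd_dvd_right _ _
  have hδ0 : 0 < δ := Nat.pos_of_dvd_of_pos hδl (by omega)
  have hδo : Odd δ := Odd.of_dvd_nat hlo hδl
  have hδle : δ ≤ q - 1 := Nat.le_of_dvd (by omega) hδq
  obtain ⟨Q, rfl⟩ : ∃ Q, q = Q + 2 := ⟨q - 2, by omega⟩
  obtain ⟨L, rfl⟩ : ∃ L, l = L + 3 := ⟨l - 3, by omega⟩
  have hm : 6 ≤ (Q + 2) * (L + 3) := by nlinarith
  have hA : (((Q + 2) * (L + 3) - 2 : ℕ) : ℤ) = ((Q : ℤ) + 2) * (L + 3) - 2 := by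
    rw [Nat.cast_sub (by omega)]; push_cast; ring
  have h' : ((((Q + 2) * (L + 3) - 2 : ℕ) : ℤ)) ^ 2 ≤ ((Q : ℤ) + 2) ^ 2 * (L * (L + 2)) +
      (2 * (Q + 2) + 1) * ((δ - 3 : ℕ) * (δ - 1 : ℕ)) + ((Q : ℤ) + 2) ^ 2 * (3 * (δ - 1 : ℕ)) + (Q : ℤ) ^ 2 := by
    have e1 : (Q + 2) ^ 2 * N1 ≤ (Q + 2) ^ 2 * (L * (L + 2)) := Nat.mul_le_mul_left _ h1
    have e2 := Nat.mul_le_mul_left (2 * (Q + 2) + 1) h2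
    have e3 := Nat.mul_le_mul_left ((Q + 2) ^ 2) h3
    have e4 : Q + 2 - 2 = Q := rfl
    rw [e4] at h
    have := h.trans (Nat.add_le_add_right (Nat.add_le_add (Nat.add_le_add e1 e2) e3) (Q ^ 2))
    exact_mod_cast this
  rw [hA] at h'
  clear h hA h1 h2 h3
  rcases Nat.lt_or_ge δ 3 with hd | hd
  · obtain rfl : δ = 1 := by obtain ⟨r, hr⟩ := hδo; omega
    simp at h'
    have : (0 : ℤ) ≤ Q := by positivity
    have : (0 : ℤ) ≤ L := by positivity
    have : (0 : ℤ) ≤ (Q : ℤ) * L := by positivity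
    have : (0 : ℤ) ≤ (Q : ℤ) ^ 2 * L := by positivity
    have : (0 : ℤ) ≤ (Q : ℤ) * L ^ 2 := by positivity
    nlinarith
  · obtain ⟨d, rfl⟩ : ∃ d, δ = d + 3 := ⟨δ - 3, by omega⟩
    rw [show d + 3 - 3 = d by omega, show d + 3 - 1 = d + 2 by omega] at h'
    push_cast at h'
    have hdQ : d + 2 ≤ Q := by omega
    obtain ⟨s, hs⟩ := hδl
    have hso : Odd s := (Nat.odd_mul.1 (hs ▸ hlo)).2
    obtain ⟨w, hw⟩ := hδq
    have hwo : Odd w := by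
      have : Odd ((d + 3) * w) := by rw [← hw]; obtain ⟨r, hr⟩ := hqe; exact ⟨r - 1, by omega⟩
      exact (Nat.odd_mul.1 this).2
    obtain ⟨s, rfl⟩ := hso
    obtain ⟨w, rfl⟩ := hwo
    rcases Nat.eq_zero_or_pos s with rfl | hs0
    · have : L = d := by omega
      subst this
      have hw0 : w ≠ 0 := by rintro rfl; omega
      have : 3 * (L + 3) ≤ Q + 1 := by
        have h3 : 3 ≤ 2 * w + 1 := by omega
        have h4 := Nat.mul_le_mul_left (L + 3) h3
        omega
      zify at this
      have : (0 : ℤ) ≤ L := by positivity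
      nlinarith
    · have : 3 * (d + 3) ≤ L + 3 := by
        have : 3 ≤ 2 * s + 1 := by omega
        nlinarith
      zify at this hdQ
      have hd0 : (0 : ℤ) ≤ d := by positivity
      obtain ⟨u, hu⟩ : ∃ u : ℤ, (Q : ℤ) = d + 2 + u := ⟨Q - d - 2, by ring⟩
      obtain ⟨v, hv⟩ : ∃ v : ℤ, (L : ℤ) = 3 * d + 6 + v := ⟨L - 3 * d - 6, by ring⟩
      have hu0 : 0 ≤ u := by linarith
      have hv0 : 0 ≤ v := by linarith
      rw [hu, hv] at h'
      have p1 := mul_nonneg hd0 hu0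
      have p2 := mul_nonneg hd0 hv0
      have p3 := mul_nonneg hv0 hu0
      have p4 := mul_nonneg hd0 hd0
      have p5 := mul_nonneg hu0 hu0
      have p6 := mul_nonneg p1 hu0
      have p7 := mul_nonneg p1 hd0
      have p8 := mul_nonneg p4 hd0
      have p9 := mul_nonneg p3 hu0
      have p10 := mul_nonneg p3 hd0
      have p11 := mul_nonneg p2 hd0
      nlinarith

end A8
section A9
open Polynomial Finset

lemma factor_set {R : Type*} [CommRing R] [IsDomain R] [UniqueFactorizationMonoid R] {G : R} (h0 : G ≠ 0)
    (hsq : ∀ a, Irreducible a → ¬ a * a ∣ G) : ∃ S : Finset R, (∀ a ∈ S, Irreducible a) ∧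
      Associated (∏ a ∈ S, a) G ∧ (∀ b, Irreducible b → b ∣ G → ∃ a ∈ S, Associated b a) ∧
      (∀ a ∈ S, ∀ b ∈ S, a ≠ b → a * b ∣ G) := by
  classical
  have hpr := UniqueFactorizationMonoid.factors_prod h0
  have hir : ∀ a ∈ UniqueFactorizationMonoid.factors G, Irreducible a :=
    fun a ha => UniqueFactorizationMonoid.irreducible_of_factor a ha
  have key : ∀ a b, ({a, b} : Multiset R) ≤ UniqueFactorizationMonoid.factors G → a * b ∣ G := by
    intro a b h
    have := Multiset.prod_dvd_prod_of_le h
    simp only [Multiset.insert_eq_cons, Multiset.prod_cons, Multiset.prod_singleton] at this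
    exact this.trans hpr.dvd
  have hnd : (UniqueFactorizationMonoid.factors G).Nodup := by
    rw [Multiset.nodup_iff_le]
    intro a h
    exact hsq a (hir a (Multiset.mem_of_le h (by simp))) (key a a h)
  refine ⟨(UniqueFactorizationMonoid.factors G).toFinset, ?_, ?_, ?_, ?_⟩
  · intro a ha; exact hir a (Multiset.mem_toFinset.1 ha)
  · rw [Finset.prod_eq_multiset_prod, Multiset.toFinset_val, hnd.dedup, Multiset.map_id']; exact hpr
  · intro b hb hbG
    obtain ⟨a, ha, h⟩ := UniqueFactorizationMonoid.exists_mem_factors_of_dvd h0 hb hbG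
    exact ⟨a, Multiset.mem_toFinset.2 ha, h⟩
  · intro a ha b hb hab
    refine key a b ?_
    rw [Multiset.le_iff_subset (by simp [hab])]
    intro x hx
    simp only [Multiset.insert_eq_cons, Multiset.mem_cons, Multiset.mem_singleton] at hx
    rcases hx with rfl | rfl
    · exact Multiset.mem_toFinset.1 ha
    · exact Multiset.mem_toFinset.1 hb

variable {k : Type*} [Field k] [CharP k 2]
set_option linter.unusedSectionVars false

local notation "xx" => (MvPolynomial.X 0 : RR k)
local notation "yy" => (MvPolynomial.X 1 : RR k)
local notation "cc" => (MvPolynomial.C : k →+* RR k)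

lemma FF_fac {t : ℕ} (ht : Odd t) : ∃ G, FF k t = (xx + 1) * (yy + 1) * (xx + yy) * G := by
  have h2 : (2 : RR k) = 0 := CharTwo.two_eq_zero
  have p2 : Prime (yy + 1) := by simpa using lin_prime (k := k) (a := 0) (b := 1) 1 (by simp)
  have p3 : Prime (xx + yy) := by simpa using lin_prime (k := k) (a := 1) (b := 1) 0 (by simp)
  have d1 : xx + 1 ∣ FF k t := by
    have e1 := ht.add_dvd_pow_add_pow xx 1
    have e2 := ht.add_dvd_pow_add_pow yy (xx + yy + 1)
    rw [show yy + (xx + yy + 1) = xx + 1 by linear_combination yy * h2] at e2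
    convert dvd_add e1 e2 using 1; rw [FF]; ring
  have d2 : yy + 1 ∣ FF k t := by
    have e1 := ht.add_dvd_pow_add_pow yy 1
    have e2 := ht.add_dvd_pow_add_pow xx (xx + yy + 1)
    rw [show xx + (xx + yy + 1) = yy + 1 by linear_combination xx * h2] at e2
    convert dvd_add e1 e2 using 1; rw [FF]; ring
  have d3 : xx + yy ∣ FF k t := by
    have e1 := ht.add_dvd_pow_add_pow xx yy
    have e2 := ht.add_dvd_pow_add_pow 1 (xx + yy + 1)
    rw [show 1 + (xx + yy + 1) = xx + yy by linear_combination h2] at e2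
    convert dvd_add e1 e2 using 1; rw [FF]; ring
  have n1 : ¬ (yy + 1 ∣ xx + 1) := by
    rintro ⟨w, hw⟩
    have := congrArg (MvPolynomial.eval ![0, 1]) hw
    simp [CharTwo.add_self_eq_zero] at this
  have n2 : ¬ (xx + yy ∣ xx + 1) := by
    rintro ⟨w, hw⟩
    have := congrArg (MvPolynomial.eval ![0, 0]) hw
    simp at this
  have n3 : ¬ (xx + yy ∣ yy + 1) := by
    rintro ⟨w, hw⟩
    have := congrArg (MvPolynomial.eval ![0, 0]) hw
    simp at this
  obtain ⟨w1, h1⟩ := d1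
  rw [h1] at d2 d3
  obtain ⟨w2, rfl⟩ := (p2.dvd_or_dvd d2).resolve_left n1
  obtain ⟨w3, rfl⟩ := (p3.dvd_or_dvd ((p3.dvd_or_dvd d3).resolve_left n2)).resolve_left n3
  exact ⟨w3, by rw [h1]; ring⟩

lemma no_square {t : ℕ} (ht : 1 < t) (hodd : Odd t) {a : RR k} (ha : Irreducible a) : ¬ a * a ∣ FF k t := by
  intro h
  have h1 := top_relprime ht hodd h
  have h2 : IsUnit (tau a).leadingCoeff := h1 dvd_rfl dvd_rfl
  apply ha.not_isUnit
  refine isUnit_of_natDegree_zero ha.ne_zero ?_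
  have h3 := natDegree_of_isUnit h2
  rw [leadingCoeff, tau_hom, natDegree_monomial_eq _ (by simpa using tau_ne ha.ne_zero)] at h3
  exact h3

lemma mult_unit {P : Fin 2 → k} {u : RR k} (hu : IsUnit u) : mult P u = 0 := by
  by_contra h
  have h1 := (mult_pos hu.ne_zero).1 (Nat.pos_of_ne_zero h)
  have := hu.map (MvPolynomial.eval P)
  rw [h1] at this; simp at this

lemma mult_assoc {P : Fin 2 → k} {a b : RR k} (ha : a ≠ 0) (h : Associated a b) : mult P a = mult P b := by
  obtain ⟨u, rfl⟩ := h
  rw [mult_mul ha u.ne_zero, mult_unit u.isUnit, add_zero]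

lemma deg_assoc {a b : RR k} (ha : a ≠ 0) (h : Associated a b) : (tau a).natDegree = (tau b).natDegree := by
  obtain ⟨u, rfl⟩ := h
  rw [map_mul, natDegree_mul (tau_ne ha) (tau_ne u.ne_zero), natDegree_of_isUnit u.isUnit, add_zero]

lemma mult_prod {P : Fin 2 → k} (S : Finset (RR k)) (hS : ∀ a ∈ S, a ≠ 0) :
    mult P (∏ a ∈ S, a) = ∑ a ∈ S, mult P a := by
  classical
  induction S using Finset.induction with
  | empty => simpa using mult_unit (P := P) isUnit_one
  | insert a S ha ih =>
    rw [prod_insert ha, sum_insert ha, mult_mul (hS a (by simp))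
      (prod_ne_zero_iff.2 fun b hb => hS b (by simp [hb])), ih fun b hb => hS b (by simp [hb])]

lemma deg_prod (S : Finset (RR k)) (hS : ∀ a ∈ S, a ≠ 0) :
    (tau (∏ a ∈ S, a)).natDegree = ∑ a ∈ S, (tau a).natDegree := by
  rw [map_prod, natDegree_prod _ _ fun a ha => tau_ne (hS a ha)]

/-- the off-line condition -/
def off (P : Fin 2 → k) : Prop := P 0 ≠ 1 ∧ P 1 ≠ 1 ∧ P 0 ≠ P 1

variable {i l : ℕ} {G : RR k}

lemma rat_multG (hi : 1 ≤ i) (hl : Odd l) (hF : FF k (2 ^ i * l + 1) = (xx + 1) * (yy + 1) * (xx + yy) * G)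
    {P : Fin 2 → k} (hP : inZ l P) (h : phiq i l P = 0) : mult P G ≤ 2 ^ i + 1 ∧ (¬ off P → mult P G ≤ 2 ^ i) ∧
      (P = (fun _ => 1) → mult P G ≤ 2 ^ i - 2) := by
  have hm := (rat_mult hi hl hP h).1
  have h0 : FF k (2 ^ i * l + 1) ≠ 0 := by
    intro h0; rw [h0] at hm; simp [mult] at hm
  rw [hF] at h0 hm
  have hG := right_ne_zero_of_mul h0
  have h1 := left_ne_zero_of_mul h0
  have h2 := left_ne_zero_of_mul h1
  rw [mult_mul h1 hG, mult_mul h2 (right_ne_zero_of_mul h1), mult_mul (left_ne_zero_of_mul h2)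
    (right_ne_zero_of_mul h2)] at hm
  have m1 := (mult_pos (P := P) (left_ne_zero_of_mul h2)).2
  have m2 := (mult_pos (P := P) (right_ne_zero_of_mul h2)).2
  have m3 := (mult_pos (P := P) (right_ne_zero_of_mul h1)).2
  simp only [map_add, map_one, MvPolynomial.eval_X, CharTwo.add_eq_zero] at m1 m2 m3
  generalize mult P (xx + 1) = e1 at *
  generalize mult P (yy + 1) = e2 at *
  generalize mult P (xx + yy) = e3 at *
  generalize mult P G = e4 at *
  clear hF h0 hG h1 h2
  refine ⟨by omega, fun ho => ?_, ?_⟩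
  · have : P 0 = 1 ∨ P 1 = 1 ∨ P 0 = P 1 := by
      by_contra! hh; exact ho ⟨hh.1, hh.2.1, hh.2.2⟩
    rcases this with h | h | h
    · have := m1 h; omega
    · have := m2 h; omega
    · have := m3 h; omega
  · intro h
    have := m1 (by rw [h])
    have := m2 (by rw [h])
    have := m3 (by rw [h])
    omega

end A9
section A10
open Polynomial Finset

variable {k : Type*} [Field k] [CharP k 2]
set_option linter.unusedSectionVars false

local notation "xx" => (MvPolynomial.X 0 : RR k)
local notation "yy" => (MvPolynomial.X 1 : RR k)
local notation "cc" => (MvPolynomial.C : k →+* RR k)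

lemma tau_map (φ : k →+* k) (u : RR k) :
    tau (MvPolynomial.map φ u) = (tau u).map (MvPolynomial.map φ) := by
  have : (tau (k := k)).toRingHom.comp (MvPolynomial.map φ) =
      (mapRingHom (MvPolynomial.map φ)).comp (tau (k := k)).toRingHom := by
    apply MvPolynomial.ringHom_ext
    · intro r; simp
    · intro j; simp [tau_X]
  exact DFunLike.congr_fun this u

lemma deg_map (φ : k →+* k) (u : RR k) : (tau (MvPolynomial.map φ u)).natDegree = (tau u).natDegree := by
  rw [tau_map]; exact natDegree_map_eq_of_injective (MvPolynomial.map_injective φ φ.injective) _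

lemma rat_gcd {q l : ℕ} (hq : 1 ≤ q) (hl : l ≠ 0) {z : k} (h1 : z ^ l = 1) (h2 : z ^ q = z) :
    z ^ Nat.gcd l (q - 1) = 1 := by
  refine orderOf_dvd_iff_pow_eq_one.1 (Nat.dvd_gcd (orderOf_dvd_of_pow_eq_one h1) (orderOf_dvd_of_pow_eq_one ?_))
  have hz : z ≠ 0 := by rintro rfl; rw [zero_pow hl] at h1; exact zero_ne_one h1
  apply mul_right_cancel₀ hz
  rw [← pow_succ, Nat.sub_add_cancel hq, h2, one_mul]

variable [IsAlgClosed k] {i l : ℕ} {G : RR k}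

/-- local bound on pair contributions -/
lemma local_total (hi : 1 ≤ i) (hl : Odd l) (hF : FF k (2 ^ i * l + 1) = (xx + 1) * (yy + 1) * (xx + yy) * G)
    [DecidableEq (RR k)] (S : Finset (RR k)) (hS : ∀ a ∈ S, a ≠ 0) (hSG : Associated (∏ a ∈ S, a) G)
    (hSd : ∀ a ∈ S, ∀ b ∈ S, a ≠ b → a * b ∣ G) (σ : RR k → RR k) (hσ : ∀ a ∈ S, σ a ∈ S)
    (hinj : Set.InjOn σ S) {P : Fin 2 → k} (hP : inZ l P) :
    (phiq i l P = 0 → ∑ a ∈ S, (∑ b ∈ S.erase a, mult P a * mult P b + mult P a * mult P (σ a)) ≤ mult P G ^ 2) ∧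
    ∀ V : Finset (RR k), (∀ a, a ∈ V ↔ a ∈ S ∧ MvPolynomial.eval P a = 0) → phiq i l P ≠ 0 →
      (¬ off P → V.card ≤ 1) ∧ V.card ≤ 2 ∧ (i = 1 → V.card ≤ 1) := by
  constructor
  · intro h
    rw [← mult_assoc (prod_ne_zero_iff.2 hS) hSG, mult_prod S hS]
    exact comb2 S σ hσ hinj _
  · intro V hV h
    have hdvd : ∀ a ∈ V, ∀ b ∈ V, a ≠ b → ∀ p, p ∣ (xx + 1) * (yy + 1) * (xx + yy) →
        p * (a * b) ∣ FF k (2 ^ i * l + 1) := by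
      intro a ha b hb hab p hp
      rw [hF]; exact mul_dvd_mul hp (hSd a ((hV a).1 ha).1 b ((hV b).1 hb).1 hab)
    refine ⟨fun ho => ?_, ?_, ?_⟩
    · by_contra! hc
      obtain ⟨a, ha, b, hb, hab⟩ := one_lt_card.1 hc
      have : ∃ p, p ∣ (xx + 1) * (yy + 1) * (xx + yy) ∧ MvPolynomial.eval P p = 0 := by
        have : P 0 = 1 ∨ P 1 = 1 ∨ P 0 = P 1 := by
          by_contra! hh; exact ho ⟨hh.1, hh.2.1, hh.2.2⟩
        rcases this with h | h | h
        · exact ⟨xx + 1, ⟨(yy + 1) * (xx + yy), by ring⟩, by simp [h, CharTwo.add_self_eq_zero]⟩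
        · exact ⟨yy + 1, ⟨(xx + 1) * (xx + yy), by ring⟩, by simp [h, CharTwo.add_self_eq_zero]⟩
        · exact ⟨xx + yy, ⟨(xx + 1) * (yy + 1), by ring⟩, by simp [h, CharTwo.add_self_eq_zero]⟩
      obtain ⟨p, hp, hp0⟩ := this
      refine NR_three hi hl hP h (a := p) (b := a) (c := b) ?_ hp0 ((hV a).1 ha).2 ((hV b).1 hb).2
      rw [mul_assoc]; exact hdvd a ha b hb hab p hp
    · by_contra! hc
      obtain ⟨a, ha, b, hb, c, hc, hab, hac, hbc⟩ := two_lt_card.1 hc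
      obtain ⟨ha1, ha2⟩ := (hV a).1 ha
      obtain ⟨hb1, hb2⟩ := (hV b).1 hb
      obtain ⟨hc1, hc2⟩ := (hV c).1 hc
      refine NR_three hi hl hP h (a := a) (b := b) (c := c) ?_ ha2 hb2 hc2
      have h3 : ∏ x ∈ ({a, b, c} : Finset (RR k)), x ∣ ∏ x ∈ S, x := prod_dvd_prod_of_subset _ _ _ (by
        intro x hx; simp only [mem_insert, mem_singleton] at hx
        rcases hx with rfl | rfl | rfl <;> assumption)
      rw [prod_insert (by simp [hab, hac]), prod_pair hbc, ← mul_assoc] at h3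
      rw [hF]; exact (h3.trans hSG.dvd).mul_left _
    · rintro rfl
      by_contra! hc
      obtain ⟨a, ha, b, hb, hab⟩ := one_lt_card.1 hc
      by_cases ho : off P
      · obtain ⟨w, hw⟩ := hdvd a ha b hb hab 1 (one_dvd _)
        exact NR3 hl hP h (u := a) (v := b * w) (by rw [hw]; ring) ((hV a).1 ha).2 (by simp [((hV b).1 hb).2])
          ho.1 ho.2.1 ho.2.2
      · have : ∃ p, p ∣ (xx + 1) * (yy + 1) * (xx + yy) ∧ MvPolynomial.eval P p = 0 := by
          have : P 0 = 1 ∨ P 1 = 1 ∨ P 0 = P 1 := by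
            by_contra! hh; exact ho ⟨hh.1, hh.2.1, hh.2.2⟩
          rcases this with h | h | h
          · exact ⟨xx + 1, ⟨(yy + 1) * (xx + yy), by ring⟩, by simp [h, CharTwo.add_self_eq_zero]⟩
          · exact ⟨yy + 1, ⟨(xx + 1) * (xx + yy), by ring⟩, by simp [h, CharTwo.add_self_eq_zero]⟩
          · exact ⟨xx + yy, ⟨(xx + 1) * (yy + 1), by ring⟩, by simp [h, CharTwo.add_self_eq_zero]⟩
        obtain ⟨p, hp, hp0⟩ := this
        refine NR_three hi hl hP h (a := p) (b := a) (c := b) ?_ hp0 ((hV a).1 ha).2 ((hV b).1 hb).2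
        rw [mul_assoc]; exact hdvd a ha b hb hab p hp

/-- sum with at most one curve -/
lemma comb4 {ι : Type*} [DecidableEq ι] (S : Finset ι) (σ : ι → ι) (hσ : ∀ a ∈ S, σ a ≠ a) (V : Finset ι)
    (hV : V.card ≤ 1) (q : ℕ) :
    ∑ a ∈ S, (∑ b ∈ S.erase a, (if a ∈ V ∧ b ∈ V then q else 0) + (if a ∈ V ∧ σ a ∈ V then q else 0)) = 0 := by
  rw [card_le_one] at hV
  refine sum_eq_zero fun a ha => ?_
  rw [if_neg (by rintro ⟨h1, h2⟩; exact hσ a ha (hV _ h2 _ h1)), add_zero]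
  refine sum_eq_zero fun b hb => ?_
  rw [if_neg (by rintro ⟨h1, h2⟩; exact (ne_of_mem_erase hb) (hV _ h2 _ h1))]

lemma count_line [DecidableEq k] (M : Finset k) (h1 : 1 ∈ M) {N : ℕ} (hM : #M ≤ N)
    (A : Finset (Fin 2 → k)) (hA : ∀ P ∈ A, P 0 ∈ M ∧ P 1 ∈ M ∧ (P 0 = 1 ∨ P 1 = 1 ∨ P 0 = P 1) ∧ P ≠ fun _ => 1) :
    #A ≤ 3 * (N - 1) := by
  have e : #(M.erase 1) ≤ N - 1 := by rw [card_erase_of_mem h1]; omega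
  have hsub : A ⊆ (M.erase 1).image (fun z => ![1, z]) ∪ (M.erase 1).image (fun z => ![z, 1]) ∪
      (M.erase 1).image (fun z => ![z, z]) := by
    intro P hP
    obtain ⟨h0, h1, h2, h3⟩ := hA P hP
    have hv : P = ![P 0, P 1] := by funext j; fin_cases j <;> rfl
    have h4 : ¬ (P 0 = 1 ∧ P 1 = 1) := by
      rintro ⟨a, b⟩; apply h3; funext j; fin_cases j <;> assumption
    simp only [mem_union, mem_image, mem_erase]
    rcases h2 with h | h | h
    · exact Or.inl (Or.inl ⟨P 1, ⟨fun hh => h4 ⟨h, hh⟩, h1⟩, by rw [← h]; exact hv.symm⟩)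
    · exact Or.inl (Or.inr ⟨P 0, ⟨fun hh => h4 ⟨hh, h⟩, h0⟩, by rw [← h]; exact hv.symm⟩)
    · refine Or.inr ⟨P 0, ⟨fun hh => h4 ⟨hh, h ▸ hh⟩, h0⟩, ?_⟩
      rw [hv]; simp [h]
  calc #A ≤ _ := card_le_card hsub
    _ ≤ #(M.erase 1) + #(M.erase 1) + #(M.erase 1) :=
      (card_union_le _ _).trans (Nat.add_le_add ((card_union_le _ _).trans
        (Nat.add_le_add card_image_le card_image_le)) card_image_le)
    _ ≤ _ := by omega

lemma deg_lines : (tau ((xx + 1) * (yy + 1) * (xx + yy))).natDegree = 3 := by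
  have d : ∀ a b c : k, a ≠ 0 ∨ b ≠ 0 → (tau (cc a * xx + cc b * yy + cc c)).natDegree = 1 := by
    intro a b c h
    rw [tau_lin]; exact natDegree_linear (lin_ne h)
  have d1 := d 1 0 1 (by simp)
  have d2 := d 0 1 1 (by simp)
  have d3 := d 1 1 0 (by simp)
  simp only [map_one, map_zero, one_mul, zero_mul, add_zero, zero_add] at d1 d2 d3
  have nz : ∀ a : RR k, (tau a).natDegree = 1 → tau a ≠ 0 := by
    intro a h h0; rw [h0] at h; simp at h
  rw [map_mul, map_mul, natDegree_mul (mul_ne_zero (nz _ d1) (nz _ d2)) (nz _ d3),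
    natDegree_mul (nz _ d1) (nz _ d2), d1, d2, d3]


open Classical in
noncomputable def ctr (i l : ℕ) (P : Fin 2 → k) (a b : RR k) : ℕ :=
  if phiq i l P = 0 then mult P a * mult P b
  else if MvPolynomial.eval P a = 0 ∧ MvPolynomial.eval P b = 0 then 2 ^ i else 0

lemma pair_in {a b : RR k} (hi : 1 ≤ i) (hl : Odd l) (hd : a * b ∣ FF k (2 ^ i * l + 1)) (P : Fin 2 → k)
    (h1 : MvPolynomial.eval P a = 0) (h2 : MvPolynomial.eval P b = 0) : inZ l P := by
  refine sing hi hl ?_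
  obtain ⟨w, hw⟩ := hd
  have h3 : tauP P (a * b) ∣ tauP P (FF k (2 ^ i * l + 1)) := ⟨tauP P w, by rw [hw, map_mul]⟩
  refine dvd_trans ?_ h3
  have e1 : (X : Polynomial (RR k)) ∣ tauP P a := by rw [X_dvd_iff, tauP_coeff_zero, h1, map_zero]
  have e2 : (X : Polynomial (RR k)) ∣ tauP P b := by rw [X_dvd_iff, tauP_coeff_zero, h2, map_zero]
  have := mul_dvd_mul e1 e2
  rwa [← pow_two, ← map_mul] at this

lemma pair_LB {a b : RR k} (hi : 1 ≤ i) (hl : Odd l) (ha0 : a ≠ 0) (hb0 : b ≠ 0)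
    (hd : a * b ∣ FF k (2 ^ i * l + 1)) (P : Fin 2 → k) (hPZ : inZ l P) : LB P a b (ctr i l P a b) := by
  obtain ⟨w, hw⟩ := hd
  unfold ctr
  split_ifs with h0 h1
  · exact rat_LB hi hl hPZ h0 hw ha0 hb0
  · exact NR2' hi hl hPZ h0 hw h1.1 h1.2
  · exact LB_zero ha0 hb0 h1

lemma pair_bez {a b : RR k} (ht : 1 < 2 ^ i * l + 1) (hodd : Odd (2 ^ i * l + 1)) (hi : 1 ≤ i) (hl : Odd l) (ha0 : a ≠ 0) (hb0 : b ≠ 0)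
    (hd : a * b ∣ FF k (2 ^ i * l + 1)) (Z : Finset (Fin 2 → k)) (hmZ : ∀ P, P ∈ Z ↔ inZ l P) :
    (tau a).natDegree * (tau b).natDegree ≤ ∑ P ∈ Z, ctr i l P a b :=
  bezout a b ha0 hb0 (top_relprime ht hodd hd) Z (fun P h1 h2 => (hmZ P).2 (pair_in hi hl hd P h1 h2))
    (fun P => ctr i l P a b) (fun P hP => pair_LB hi hl ha0 hb0 hd P ((hmZ P).1 hP))

end A10
section A11
open Polynomial Finset

variable {k : Type*} [Field k] [CharP k 2]
set_option linter.unusedSectionVars false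

local notation "xx" => (MvPolynomial.X 0 : RR k)
local notation "yy" => (MvPolynomial.X 1 : RR k)
local notation "cc" => (MvPolynomial.C : k →+* RR k)
variable [IsAlgClosed k] {i l : ℕ} {G : RR k}

open Classical in
lemma loc_W (hi : 1 ≤ i) (hl : Odd l) (hF : FF k (2 ^ i * l + 1) = (xx + 1) * (yy + 1) * (xx + yy) * G)
    (S : Finset (RR k)) (hS : ∀ a ∈ S, a ≠ 0) (hSG : Associated (∏ a ∈ S, a) G)
    (hSd : ∀ a ∈ S, ∀ b ∈ S, a ≠ b → a * b ∣ G) (σ : RR k → RR k) (hσ : ∀ a ∈ S, σ a ∈ S)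
    (hσne : ∀ a ∈ S, σ a ≠ a) (hinj : Set.InjOn σ S) {P : Fin 2 → k} (hP : inZ l P) :
    ∑ a ∈ S, (∑ b ∈ S.erase a, ctr i l P a b + ctr i l P a (σ a)) ≤
      (if off P then (2 ^ i) ^ 2 else 0) + (if off P ∧ phiq i l P = 0 then 2 * 2 ^ i + 1 else 0) +
      (if ¬ off P ∧ phiq i l P = 0 ∧ P ≠ (fun _ => 1) then (2 ^ i) ^ 2 else 0) +
      (if P = (fun _ => 1) then (2 ^ i - 2) ^ 2 else 0) := by
  obtain ⟨L1, L2⟩ := local_total hi hl hF S hS hSG hSd σ hσ hinj hP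
  by_cases h0 : phiq i l P = 0
  · have e : ∀ a b, ctr i l P a b = mult P a * mult P b := fun a b => by rw [ctr, if_pos h0]
    simp only [e]
    refine (L1 h0).trans ?_
    obtain ⟨m1, m2, m3⟩ := rat_multG hi hl hF hP h0
    generalize mult P G = m at *
    by_cases ho : off P
    · have m1 := Nat.pow_le_pow_left m1 2
      rw [if_pos ho, if_pos ⟨ho, h0⟩]
      refine m1.trans (le_trans (le_of_eq ?_) (Nat.le_add_right _ _))
      rw [if_neg (fun h => h.1 ho)]; ring
    · by_cases h1 : P = (fun _ => 1)
      · have := Nat.pow_le_pow_left (m3 h1) 2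
        rw [if_pos h1]; exact this.trans (Nat.le_add_left _ _)
      · have := Nat.pow_le_pow_left (m2 ho) 2
        rw [if_pos (c := ¬ off P ∧ phiq i l P = 0 ∧ P ≠ (fun _ => 1)) ⟨ho, h0, h1⟩]
        exact this.trans ((Nat.le_add_left _ _).trans (Nat.le_add_right _ _))
  · have e : ∀ a ∈ S, ∀ b ∈ S, ctr i l P a b = if a ∈ {a ∈ S | MvPolynomial.eval P a = 0} ∧
        b ∈ {a ∈ S | MvPolynomial.eval P a = 0} then 2 ^ i else 0 := fun a ha b hb => by
      rw [ctr, if_neg h0]; simp only [mem_filter, ha, hb, true_and]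
    have e2 : ∑ a ∈ S, (∑ b ∈ S.erase a, ctr i l P a b + ctr i l P a (σ a)) = _ :=
      sum_congr rfl fun a ha => congrArg₂ _ (sum_congr rfl fun b hb => e a ha b (mem_of_mem_erase hb)) (e a ha _ (hσ a ha))
    rw [e2]
    obtain ⟨v1, v2, v3⟩ := L2 {a ∈ S | MvPolynomial.eval P a = 0} (fun a => mem_filter) h0
    generalize {a ∈ S | MvPolynomial.eval P a = 0} = V at *
    by_cases ho : off P
    · by_cases hi1 : i = 1
      · rw [comb4 S σ hσne V (v3 hi1)]; exact Nat.zero_le _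
      · refine (comb3 S σ V v2 _).trans ?_
        have h4 : 2 ^ 2 ≤ 2 ^ i := Nat.pow_le_pow_right (by norm_num) (by omega)
        rw [if_pos ho]
        refine le_trans ?_ ((Nat.le_add_right _ _).trans ((Nat.le_add_right _ _).trans (Nat.le_add_right _ _)))
        rw [pow_two]; exact Nat.mul_le_mul_right _ h4
    · rw [comb4 S σ hσne V (v1 ho)]; exact Nat.zero_le _

open Classical in
lemma count_all (hi : 1 ≤ i) (hl : Odd l) (hl3 : 3 ≤ l) (hkw : l ≠ 2 ^ i - 1) (Z : Finset (Fin 2 → k)) (hmZ : ∀ P, P ∈ Z ↔ inZ l P)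
    (htot : (2 ^ i * l - 2) ^ 2 ≤ ∑ P ∈ Z, ((if off P then (2 ^ i) ^ 2 else 0) +
      (if off P ∧ phiq i l P = 0 then 2 * 2 ^ i + 1 else 0) +
      (if ¬ off P ∧ phiq i l P = 0 ∧ P ≠ (fun _ => 1) then (2 ^ i) ^ 2 else 0) +
      (if P = (fun _ => 1) then (2 ^ i - 2) ^ 2 else 0))) : False := by
  have hl0' : 0 < l := by omega
  have hqe : Even (2 ^ i) := Nat.even_pow.2 ⟨even_two, by omega⟩
  have hq : 2 ≤ 2 ^ i := by
    calc 2 = 2 ^ 1 := rfl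
      _ ≤ 2 ^ i := Nat.pow_le_pow_right (by norm_num) hi
  rw [sum_add_distrib, sum_add_distrib, sum_add_distrib, ← sum_filter, ← sum_filter, ← sum_filter, ← sum_filter,
    sum_const, sum_const, sum_const, sum_const, smul_eq_mul, smul_eq_mul, smul_eq_mul, smul_eq_mul] at htot
  have hMc : ∀ N, #(nthRootsFinset N (1 : k)) ≤ N := fun N => by
    rw [nthRootsFinset]; exact (Multiset.toFinset_card_le _).trans (card_nthRoots N 1)
  obtain ⟨δ, hδ⟩ : ∃ δ, δ = Nat.gcd l (2 ^ i - 1) := ⟨_, rfl⟩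
  have hδl : δ ∣ l := hδ ▸ Nat.gcd_dvd_left _ _
  have hδ0 : 0 < δ := Nat.pos_of_dvd_of_pos hδl hl0'
  have hrat : ∀ P, inZ l P → phiq i l P = 0 → P 0 ∈ nthRootsFinset δ (1 : k) ∧ P 1 ∈ nthRootsFinset δ (1 : k) ∧
      P 0 + P 1 + 1 ∈ nthRootsFinset δ (1 : k) := by
    intro P hP h0
    have hq1 : 1 ≤ 2 ^ i := Nat.one_le_two_pow
    have hl1 : l ≠ 0 := hl0'.ne'
    obtain ⟨r0, r1⟩ := rat_pt hl hP h0
    simp only [mem_nthRootsFinset hδ0]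
    rw [hδ]
    refine ⟨rat_gcd hq1 hl1 hP.1 r0, rat_gcd hq1 hl1 hP.2.1 r1,
      rat_gcd hq1 hl1 hP.2.2 ?_⟩
    rw [add_pow_char_pow, add_pow_char_pow, one_pow, r0, r1]
  have hc1 : #{P ∈ Z | off P} ≤ (l - 3) * (l - 1) := by
    refine count_pts (nthRootsFinset l (1 : k)) (by rw [mem_nthRootsFinset hl0', one_pow]) hl (hMc l) _ ?_
    intro P hP
    obtain ⟨hP, ho⟩ := mem_filter.1 hP
    rw [hmZ] at hP
    simp only [mem_nthRootsFinset hl0']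
    exact ⟨hP.1, hP.2.1, hP.2.2, ho⟩
  have hc2 : #{P ∈ Z | off P ∧ phiq i l P = 0} ≤ (δ - 3) * (δ - 1) := by
    refine count_pts (nthRootsFinset δ (1 : k)) (by rw [mem_nthRootsFinset hδ0, one_pow]) (Odd.of_dvd_nat hl hδl) (hMc δ) _ ?_
    intro P hP
    obtain ⟨hP, ho, h0⟩ := mem_filter.1 hP
    rw [hmZ] at hP
    obtain ⟨a, b, c⟩ := hrat P hP h0
    exact ⟨a, b, c, ho⟩
  have hc3 : #{P ∈ Z | ¬ off P ∧ phiq i l P = 0 ∧ P ≠ (fun _ => 1)} ≤ 3 * (δ - 1) := by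
    refine count_line (nthRootsFinset δ (1 : k)) (by rw [mem_nthRootsFinset hδ0, one_pow]) (hMc δ) _ ?_
    intro P hP
    obtain ⟨hP, ho, h0, h1⟩ := mem_filter.1 hP
    rw [hmZ] at hP
    obtain ⟨a, b, c⟩ := hrat P hP h0
    refine ⟨a, b, ?_, h1⟩
    by_contra! hh; exact ho ⟨hh.1, hh.2.1, hh.2.2⟩
  have hc4 : #{P ∈ Z | P = (fun _ => 1)} ≤ 1 := by
    rw [card_le_one]
    intro a ha b hb
    rw [(mem_filter.1 ha).2, (mem_filter.1 hb).2]
  refine arith hq hqe hl3 hl hkw hδ hc1 hc2 hc3 (htot.trans ?_)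
  have := Nat.mul_le_mul_right ((2 ^ i - 2) ^ 2) hc4
  rw [one_mul] at this
  refine Nat.add_le_add (Nat.add_le_add (Nat.add_le_add ?_ ?_) ?_) this
  · rw [mul_comm]
  · rw [mul_comm]
  · rw [mul_comm]



set_option maxHeartbeats 400000 in
theorem exists_fixed (hi : 1 ≤ i) (hl : Odd l) (hl3 : 3 ≤ l) (hkw : l ≠ 2 ^ i - 1)
    (hF : FF k (2 ^ i * l + 1) = (xx + 1) * (yy + 1) * (xx + yy) * G) :
    ∃ a, Irreducible a ∧ a ∣ G ∧ Associated (MvPolynomial.map (frobenius k 2) a) a := by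
  classical
  by_contra! hno
  have hqe : Even (2 ^ i) := Nat.even_pow.2 ⟨even_two, by omega⟩
  have hq : 2 ≤ 2 ^ i := by
    calc 2 = 2 ^ 1 := rfl
      _ ≤ 2 ^ i := Nat.pow_le_pow_right (by norm_num) hi
  have ht : 1 < 2 ^ i * l + 1 := by nlinarith
  have hodd : Odd (2 ^ i * l + 1) := (hqe.mul_right _).add_one
  have hF0 := FF_ne (k := k) ht hodd
  have hdF := tau_FF_natDegree (k := k) ht hodd
  have hGF : G ∣ FF k (2 ^ i * l + 1) := ⟨_, hF.trans (mul_comm _ _)⟩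
  have hG0 : G ≠ 0 := by rintro rfl; rw [mul_zero] at hF; exact hF0 hF
  let Φ : RR k ≃+* RR k := MvPolynomial.mapEquiv (Fin 2) (frobeniusEquiv k 2)
  have hΦ : ∀ a, Φ a = MvPolynomial.map (frobenius k 2) a := fun a => rfl
  have hl0 : (xx + 1) * (yy + 1) * (xx + yy) ≠ 0 := by
    intro h0; rw [h0, zero_mul] at hF; exact hF0 hF
  have hΦG : Φ G = G := by
    have h1 : Φ (FF k (2 ^ i * l + 1)) = FF k (2 ^ i * l + 1) := by rw [hΦ]; simp [FF]
    rw [hF, map_mul] at h1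
    rw [show Φ ((xx + 1) * (yy + 1) * (xx + yy)) = (xx + 1) * (yy + 1) * (xx + yy) by rw [hΦ]; simp] at h1
    exact mul_left_cancel₀ hl0 h1
  have hdeg : (tau G).natDegree = 2 ^ i * l - 2 := by
    have e1 := deg_lines (k := k)
    rw [hF, map_mul, natDegree_mul (tau_ne hl0) (tau_ne hG0), e1] at hdF
    omega
  obtain ⟨S, hSirr, hSG, hSa, hSd⟩ := factor_set hG0 (fun a ha h => no_square ht hodd ha (h.trans hGF))
  have hS0 : ∀ a ∈ S, a ≠ 0 := fun a ha => (hSirr a ha).ne_zero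
  have hSG' : ∀ a ∈ S, a ∣ G := fun a ha => (dvd_prod_of_mem _ ha).trans hSG.dvd
  have hex : ∀ a ∈ S, ∃ b ∈ S, Associated (Φ a) b := by
    intro a ha
    refine hSa _ ((MulEquiv.irreducible_iff Φ).2 (hSirr a ha)) ?_
    rw [← hΦG]; exact map_dvd Φ (hSG' a ha)
  choose! σ hσ1 hσ2 using hex
  have hinj : Set.InjOn σ S := by
    intro a ha b hb hab
    by_contra hne
    have h1 : Associated (Φ a) (Φ b) := (hσ2 a ha).trans (hab ▸ (hσ2 b hb).symm)
    have h2 : Associated a b := by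
      have := h1.map Φ.symm.toMonoidHom
      simpa using this
    exact no_square ht hodd (hSirr a ha) (((mul_dvd_mul_left a h2.dvd).trans (hSd a ha b hb hne)).trans hGF)
  have hσne : ∀ a ∈ S, σ a ≠ a := by
    intro a ha h
    have := hσ2 a ha
    rw [h] at this
    exact hno a (hSirr a ha) (hSG' a ha) this
  have hσd : ∀ a ∈ S, (tau (σ a)).natDegree = (tau a).natDegree := by
    intro a ha
    rw [← deg_assoc ((map_ne_zero_iff _ Φ.injective).2 (hS0 a ha)) (hσ2 a ha), hΦ, deg_map]
  have hl0' : 0 < l := by omega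
  obtain ⟨M, hM⟩ : ∃ M, M = nthRootsFinset l (1 : k) := ⟨_, rfl⟩
  obtain ⟨Z, hZ⟩ : ∃ Z, Z = {P ∈ Fintype.piFinset (fun _ : Fin 2 => M) | inZ l P} := ⟨_, rfl⟩
  have hmZ : ∀ P, P ∈ Z ↔ inZ l P := by
    intro P
    rw [hZ, mem_filter, Fintype.mem_piFinset]
    refine ⟨fun h => h.2, fun h => ⟨fun j => ?_, h⟩⟩
    rw [hM, mem_nthRootsFinset hl0']
    fin_cases j
    · exact h.1
    · exact h.2.1
  have hmain := comb1 S σ (fun a ha => ⟨hσ1 a ha, hσne a ha⟩) (fun a => (tau a).natDegree) hσd Z (fun P a b => ctr i l P a b)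
    (fun a ha b hb hab => pair_bez ht hodd hi hl (hS0 a ha) (hS0 b hb) ((hSd a ha b hb hab).trans hGF) Z hmZ)
  rw [← deg_prod S hS0, deg_assoc (prod_ne_zero_iff.2 hS0) hSG, hdeg] at hmain
  exact count_all hi hl hl3 hkw Z hmZ (hmain.trans (sum_le_sum fun P hP =>
    loc_W hi hl hF S hS0 hSG hSd σ hσ1 hσne hinj ((hmZ P).1 hP)))

end A11
section B1
open Polynomial Finset

lemma descend {K ι : Type*} [Field K] [DecidableEq ι] (L : ℕ → Subfield K) (hL : Antitone L) (u : ι → K) (s : Finset ι)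
    (h : ∀ m, ∃ c : ι → K, (∀ i, c i ∈ L m) ∧ (∃ i ∈ s, c i ≠ 0) ∧ ∑ i ∈ s, c i * u i = 0) :
    ∃ c : ι → K, (∀ i m, c i ∈ L m) ∧ (∃ i ∈ s, c i ≠ 0) ∧ ∑ i ∈ s, c i * u i = 0 := by
  induction s using Finset.induction_on with
  | empty => obtain ⟨c, -, ⟨i, hi, -⟩, -⟩ := h 0; simp at hi
  | insert a s ha ih =>
    by_cases hs : ∀ m, ∃ c : ι → K, (∀ i, c i ∈ L m) ∧ (∃ i ∈ s, c i ≠ 0) ∧ ∑ i ∈ s, c i * u i = 0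
    · obtain ⟨c, h1, ⟨j, hj, hj0⟩, h3⟩ := ih hs
      have key : ∀ i ∈ s, (if i = a then 0 else c i) = c i := fun i hi => by
        rw [if_neg]; rintro rfl; exact ha hi
      refine ⟨fun i => if i = a then 0 else c i, fun i m => ?_, ⟨j, mem_insert_of_mem hj, ?_⟩, ?_⟩
      · dsimp only; split_ifs
        · exact (L m).zero_mem
        · exact h1 i m
      · dsimp only; rwa [key j hj]
      · dsimp only
        rw [sum_insert ha, if_pos rfl, zero_mul, zero_add]
        refine Eq.trans ?_ h3
        exact sum_congr rfl fun i hi => by rw [key i hi]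
    · push Not at hs
      obtain ⟨m0, hm0⟩ := hs
      have h' : ∀ m, ∃ c : ι → K, m0 ≤ m → (∀ i, c i ∈ L m) ∧ c a = 1 ∧ ∑ i ∈ s, c i * u i = - u a := by
        intro m
        obtain ⟨c, h1, h2, h3⟩ := h m
        refine ⟨fun i => (c a)⁻¹ * c i, fun hm => ?_⟩
        rw [sum_insert ha] at h3
        have hca : c a ≠ 0 := by
          intro h0
          rw [h0, zero_mul, zero_add] at h3
          obtain ⟨j, hj, hj0⟩ := h2
          rcases mem_insert.1 hj with rfl | hj
          · exact hj0 h0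
          · exact hm0 c (fun i => hL hm (h1 i)) ⟨j, hj, hj0⟩ h3
        refine ⟨fun i => (L m).mul_mem ((L m).inv_mem (h1 a)) (h1 i), inv_mul_cancel₀ hca, ?_⟩
        simp only [mul_assoc]
        rw [← mul_sum]
        apply mul_left_cancel₀ hca
        rw [mul_inv_cancel_left₀ hca]
        linear_combination h3
      choose c hc using h'
      have e : ∀ m, m0 ≤ m → ∀ i ∈ insert a s, c m i = c m0 i := by
        intro m hm i hi
        obtain ⟨a1, a2, a3⟩ := hc m hm
        obtain ⟨b1, b2, b3⟩ := hc m0 le_rfl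
        rcases mem_insert.1 hi with rfl | hi
        · rw [a2, b2]
        by_contra hne
        refine hm0 (fun i => c m i - c m0 i) (fun i => (L m0).sub_mem (hL hm (a1 i)) (b1 i)) ⟨i, hi, sub_ne_zero.2 hne⟩ ?_
        simp only [sub_mul]
        rw [sum_sub_distrib, a3, b3, sub_self]
      obtain ⟨b1, b2, b3⟩ := hc m0 le_rfl
      refine ⟨fun i => if i ∈ insert a s then c m0 i else 0, fun i m => ?_, ⟨a, mem_insert_self _ _, ?_⟩, ?_⟩
      · dsimp only; split_ifs with hi
        · rw [← e (max m m0) (le_max_right _ _) i hi]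
          exact hL (le_max_left _ _) ((hc _ (le_max_right m m0)).1 i)
        · exact (L m).zero_mem
      · dsimp only; rw [if_pos (mem_insert_self _ _), b2]; exact one_ne_zero
      · have : ∑ i ∈ insert a s, (if i ∈ insert a s then c m0 i else 0) * u i = ∑ i ∈ insert a s, c m0 i * u i :=
          sum_congr rfl fun i hi => by rw [if_pos hi]
        rw [this, sum_insert ha, b2, b3]; ring

variable {k : Type*} [Field k]

lemma frac_const (e : FractionRing k[X]) (h : ∀ m : ℕ, ∃ e', e' ^ 2 ^ m = e) : ∃ c : k, e = algebraMap k _ c := by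
  obtain ⟨a, b, hab, he⟩ := IsFractionRing.exists_reduced_fraction (A := k[X]) e
  obtain ⟨b, hb⟩ := b
  have hb0 : b ≠ 0 := nonZeroDivisors.ne_zero hb
  rw [IsFractionRing.mk'_eq_div] at he
  change _ / algebraMap k[X] _ b = e at he
  have inj := IsFractionRing.injective k[X] (FractionRing k[X])
  have nz : ∀ p : k[X], p ≠ 0 → algebraMap k[X] (FractionRing k[X]) p ≠ 0 := fun p hp => by
    rwa [Ne, map_eq_zero_iff _ inj]
  by_cases ha0 : a = 0
  · exact ⟨0, by rw [← he, ha0, map_zero, zero_div, map_zero]⟩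
  obtain ⟨e', he'⟩ := h (a.natDegree + b.natDegree)
  set q := 2 ^ (a.natDegree + b.natDegree) with hq
  have hqlt : a.natDegree + b.natDegree < q := Nat.lt_two_pow_self
  obtain ⟨a', b', hab', hee⟩ := IsFractionRing.exists_reduced_fraction (A := k[X]) e'
  obtain ⟨b', hb'⟩ := b'
  have hb0' : b' ≠ 0 := nonZeroDivisors.ne_zero hb'
  rw [IsFractionRing.mk'_eq_div] at hee
  have e1 : a' ^ q * b = a * b' ^ q := by
    apply inj
    have := he'
    rw [← he, ← hee] at this
    simp only at this
    rw [div_pow, div_eq_div_iff (pow_ne_zero _ (nz _ hb0')) (nz _ hb0)] at this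
    simpa using this
  have cop : IsCoprime a b := by simpa using hab.isCoprime
  have cop' : IsCoprime (a' ^ q) (b' ^ q) := by
    have : IsCoprime a' b' := by simpa using hab'.isCoprime
    exact this.pow
  have d1 : Associated a (a' ^ q) := associated_of_dvd_dvd
    (cop.dvd_of_dvd_mul_right (e1 ▸ dvd_mul_right a _)) (cop'.dvd_of_dvd_mul_right (e1 ▸ dvd_mul_right _ b))
  have d2 : Associated b (b' ^ q) := associated_of_dvd_dvd
    (cop.symm.dvd_of_dvd_mul_left (e1.symm ▸ dvd_mul_left b _)) (cop'.symm.dvd_of_dvd_mul_left (e1.symm ▸ dvd_mul_left (b' ^ q) a))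
  have g : ∀ p r : k[X], Associated p (r ^ q) → p.natDegree < q → p.natDegree = 0 := by
    intro p r hpr hlt
    have := natDegree_eq_of_degree_eq (degree_eq_degree_of_associated hpr)
    rw [natDegree_pow] at this
    rcases Nat.eq_zero_or_pos r.natDegree with h0 | h0
    · rw [this, h0, mul_zero]
    · nlinarith
  clear_value q
  clear hab hb
  rw [eq_C_of_natDegree_eq_zero (g a a' d1 (by omega)), eq_C_of_natDegree_eq_zero (g b b' d2 (by omega))] at he
  refine ⟨a.coeff 0 / b.coeff 0, ?_⟩
  rw [← he, map_div₀, IsScalarTower.algebraMap_apply k k[X] (FractionRing k[X]),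
    IsScalarTower.algebraMap_apply k k[X] (FractionRing k[X])]
  rfl

lemma alg_const [IsAlgClosed k] {K : Type*} [Field K] [Algebra k K] (g : K) (h : IsIntegral k g) :
    ∃ c, g = algebraMap k K c := by
  obtain ⟨c, hc⟩ := IsIntegral.mem_range_algebraMap_of_minpoly_splits (K := k) h (IsAlgClosed.splits _)
  exact ⟨c, hc.symm⟩

/-- subfield of 2^m powers -/
noncomputable def pws {E K : Type*} [Field E] [Field K] [Algebra E K] [CharP E 2] (m : ℕ) : Subfield K :=
  ((algebraMap E K).comp (iterateFrobenius E 2 m)).fieldRange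

lemma mem_pws {E K : Type*} [Field E] [Field K] [Algebra E K] [CharP E 2] {m : ℕ} {z : K} :
    z ∈ pws (E := E) (K := K) m ↔ ∃ e : E, algebraMap E K (e ^ 2 ^ m) = z := by
  simp [pws, RingHom.mem_fieldRange, iterateFrobenius_def]

lemma pws_anti {E K : Type*} [Field E] [Field K] [Algebra E K] [CharP E 2] : Antitone (pws (E := E) (K := K)) := by
  intro m n hmn z hz
  rw [mem_pws] at hz ⊢
  obtain ⟨e, he⟩ := hz
  exact ⟨e ^ 2 ^ (n - m), by rw [← pow_mul, ← pow_add, Nat.sub_add_cancel hmn, he]⟩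

variable [IsAlgClosed k] [CharP k 2]

lemma K_const {K : Type*} [Field K] [CharP K 2] [CharP (FractionRing k[X]) 2] [Algebra k K] [Algebra (FractionRing k[X]) K]
    [IsScalarTower k (FractionRing k[X]) K] [FiniteDimensional (FractionRing k[X]) K] (g : K)
    (h : ∀ m : ℕ, ∃ g', g' ^ 2 ^ m = g) : ∃ c : k, g = algebraMap k K c := by
  set N := Module.finrank (FractionRing k[X]) K
  obtain ⟨c, h1, ⟨j, hj, hj0⟩, h3⟩ := descend (pws (E := FractionRing k[X]) (K := K)) pws_anti (fun i => g ^ i)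
    (range (N + 1)) (fun m => by
    obtain ⟨g', hg'⟩ := h m
    have hint : IsIntegral (FractionRing k[X]) g' := Algebra.IsIntegral.isIntegral g'
    have hd : (minpoly (FractionRing k[X]) g').natDegree ≤ N := minpoly.natDegree_le g'
    refine ⟨fun i => algebraMap _ K ((minpoly (FractionRing k[X]) g').coeff i ^ 2 ^ m), fun i => mem_pws.2 ⟨_, rfl⟩,
      ⟨(minpoly (FractionRing k[X]) g').natDegree, by rw [mem_range]; omega, ?_⟩, ?_⟩
    · dsimp only
      rw [coeff_natDegree, minpoly.monic hint, one_pow, map_one]; exact one_ne_zero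
    · have : ∑ i ∈ range (N + 1), algebraMap _ K ((minpoly (FractionRing k[X]) g').coeff i) * g' ^ i = 0 := by
        have := minpoly.aeval (FractionRing k[X]) g'
        rw [aeval_eq_sum_range' (Nat.lt_succ_of_le hd)] at this
        simpa only [Algebra.smul_def] using this
      have h2 := congrArg (· ^ 2 ^ m) this
      rw [sum_pow_char_pow, zero_pow (by positivity)] at h2
      rw [← h2]
      refine sum_congr rfl fun i _ => ?_
      dsimp only; rw [mul_pow, map_pow, ← hg']; ring)
  have hc : ∀ i, ∃ e : k, c i = algebraMap k K e := by
    intro i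
    obtain ⟨e, he⟩ := mem_pws.1 (h1 i 0)
    obtain ⟨r, hr⟩ := frac_const (e ^ 2 ^ 0) (fun m => by
      obtain ⟨e', he'⟩ := mem_pws.1 (h1 i m)
      exact ⟨e', (algebraMap _ K).injective (he'.trans he.symm)⟩)
    exact ⟨r, by rw [← he, hr, ← IsScalarTower.algebraMap_apply]⟩
  choose e he using hc
  apply alg_const
  rw [← isAlgebraic_iff_isIntegral]
  refine ⟨∑ i ∈ range (N + 1), C (e i) * X ^ i, ?_, ?_⟩
  · intro h0
    have := congrArg (fun p => coeff p j) h0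
    simp only [finsetSum_coeff, coeff_C_mul_X_pow, coeff_zero] at this
    rw [sum_ite_eq, if_pos hj] at this
    apply hj0; rw [he, this, map_zero]
  · rw [map_sum, ← h3]
    refine sum_congr rfl fun i _ => ?_
    simp [he]

/-- nonvanishing -/
lemma NV {K : Type*} [Field K] [CharP K 2] [CharP (FractionRing k[X]) 2] [Algebra k K] [Algebra (FractionRing k[X]) K]
    [IsScalarTower k (FractionRing k[X]) K] [FiniteDimensional (FractionRing k[X]) K]
    {ι κ : Type*} [Fintype ι] [Fintype κ] (u : ι → K) (v : κ → K) (hu : LinearIndependent k u) (hv : LinearIndependent k v)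
    (c : ι → κ → k) (hc : ∃ i j, c i j ≠ 0) (hc2 : ∀ i j, c i j ^ 2 = c i j) :
    ∃ m0 : ℕ, ∀ m, m0 ≤ m → ∑ i, ∑ j, algebraMap k K (c i j) * u i * v j ^ 2 ^ m ≠ 0 := by
  classical
  by_contra! hcon
  have hcp : ∀ m i j, c i j ^ 2 ^ m = c i j := by
    intro m i j
    induction m with
    | zero => simp
    | succ m ih => rw [pow_succ, pow_mul, ih, hc2]
  obtain ⟨i0, j0, h0⟩ := hc
  obtain ⟨l, h1, ⟨j, -, hj0⟩, h3⟩ := descend (pws (E := K) (K := K)) pws_anti u univ (fun m => by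
    obtain ⟨n, hmn, hn⟩ := hcon m
    refine ⟨fun i => (∑ j, algebraMap k K (c i j) * v j) ^ 2 ^ n, fun i => pws_anti hmn (mem_pws.2 ⟨_, rfl⟩),
      ⟨i0, mem_univ _, pow_ne_zero _ ?_⟩, ?_⟩
    · intro h
      simp only [← Algebra.smul_def] at h
      exact h0 (Fintype.linearIndependent_iff.1 hv _ h j0)
    · rw [← hn]
      refine sum_congr rfl fun i _ => ?_
      dsimp only
      rw [sum_pow_char_pow, sum_mul]
      refine sum_congr rfl fun j _ => ?_
      rw [mul_pow, ← map_pow, hcp]; ring)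
  have : ∀ i, ∃ e : k, l i = algebraMap k K e := fun i => K_const (l i) (fun m => by
    obtain ⟨e, he⟩ := mem_pws.1 (h1 i m)
    exact ⟨e, he⟩)
  choose e he using this
  simp only [he, ← Algebra.smul_def] at h3
  apply hj0
  rw [he, Fintype.linearIndependent_iff.1 hu _ h3 j, map_zero]

end B1
section B2
open Polynomial Finset

section filt
variable {F M ι : Type*} [Field F] [CommRing M] [Algebra F[X] M] [Fintype ι]

/-- elements with coordinates of degree less than D -/
def Lf (g : ι → M) (D : ℕ) (m : M) : Prop := ∃ p : ι → F[X], (∀ i, (p i).degree < D) ∧ m = ∑ i, p i • g i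

variable {g : ι → M}

lemma deg_mul_lt {p c : F[X]} {D e : ℕ} (h : p.degree < D) (hc : c.natDegree ≤ e) : (p * c).degree < (D + e : ℕ) := by
  by_cases h0 : p * c = 0
  · rw [h0, degree_zero]; exact WithBot.bot_lt_coe _
  · have hp : p ≠ 0 := left_ne_zero_of_mul h0
    rw [degree_eq_natDegree h0, natDegree_mul hp (right_ne_zero_of_mul h0)]
    rw [degree_eq_natDegree hp] at h
    have : p.natDegree < D := by exact_mod_cast h
    exact_mod_cast (by omega)

lemma Lf_mono {D D' : ℕ} (h : D ≤ D') {m : M} (hm : Lf (F := F) g D m) : Lf (F := F) g D' m := by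
  obtain ⟨p, h1, h2⟩ := hm
  exact ⟨p, fun i => (h1 i).trans_le (by exact_mod_cast h), h2⟩

lemma Lf_mul (hg : ∀ m : M, ∃ p : ι → F[X], m = ∑ i, p i • g i) (z : M) :
    ∃ κ : ℕ, ∀ D m, Lf (F := F) g D m → Lf (F := F) g (D + κ) (z * m) := by
  choose c hc using fun i => hg (z * g i)
  refine ⟨univ.sup fun i => univ.sup fun j => (c i j).natDegree, ?_⟩
  rintro D m ⟨p, h1, rfl⟩
  refine ⟨fun j => ∑ i, p i * c i j, fun j => ?_, ?_⟩
  · rw [← mem_degreeLT]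
    refine Submodule.sum_mem _ fun i _ => ?_
    rw [mem_degreeLT]
    refine deg_mul_lt (h1 i) ?_
    exact (le_sup (f := fun j => (c i j).natDegree) (mem_univ j)).trans
      (le_sup (f := fun i => univ.sup fun j => (c i j).natDegree) (mem_univ i))
  · simp only [mul_sum, sum_smul]
    rw [sum_comm]
    refine sum_congr rfl fun i _ => ?_
    rw [mul_smul_comm, hc, smul_sum]
    simp only [mul_smul]

lemma Lf_smul {D e : ℕ} {m : M} (hm : Lf (F := F) g D m) : Lf (F := F) g (D + e) ((X ^ e : F[X]) • m) := by
  obtain ⟨p, h1, rfl⟩ := hm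
  refine ⟨fun j => p j * X ^ e, fun j => deg_mul_lt (h1 j) (natDegree_X_pow_le e), ?_⟩
  rw [smul_sum]
  refine sum_congr rfl fun i _ => ?_
  dsimp only; rw [mul_comm, mul_smul]

lemma Lf_pow {z : M} {κ : ℕ} (h : ∀ D m, Lf (F := F) g D m → Lf (F := F) g (D + κ) (z * m)) (N : ℕ) :
    ∀ D m, Lf (F := F) g D m → Lf (F := F) g (D + κ * N) (z ^ N * m) := by
  induction N with
  | zero => intro D m hm; simpa using hm
  | succ N ih =>
    intro D m hm
    have := h _ _ (ih D m hm)
    rw [← mul_assoc, ← pow_succ'] at this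
    rwa [mul_add, mul_one, ← add_assoc]

lemma Lf_one (hg : ∀ m : M, ∃ p : ι → F[X], m = ∑ i, p i • g i) (m : M) : ∃ D : ℕ, Lf (F := F) g D m := by
  obtain ⟨p, hp⟩ := hg m
  refine ⟨(univ.sup fun i => (p i).natDegree) + 1, p, fun i => ?_, hp⟩
  refine degree_le_natDegree.trans_lt ?_
  have := le_sup (f := fun j => (p j).natDegree) (mem_univ i)
  exact_mod_cast Nat.lt_succ_of_le this

lemma Lf_sum {τ : Type*} (s : Finset τ) {D : ℕ} {m : τ → M} (c : τ → F) (h : ∀ t ∈ s, Lf (F := F) g D (m t)) :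
    Lf (F := F) g D (∑ t ∈ s, C (c t) • m t) := by
  choose! p hp1 hp2 using h
  refine ⟨fun i => ∑ t ∈ s, C (c t) * p t i, fun i => ?_, ?_⟩
  · rw [← mem_degreeLT]
    refine Submodule.sum_mem _ fun t ht => ?_
    rw [← smul_eq_C_mul]
    exact Submodule.smul_mem _ _ (mem_degreeLT.2 (hp1 t ht i))
  · simp only [sum_smul]
    rw [sum_comm]
    refine sum_congr rfl fun t ht => ?_
    conv_lhs => rw [hp2 t ht]
    rw [smul_sum]
    simp only [mul_smul]

lemma lin_dep {τ : Type*} [Fintype τ] {D : ℕ} (m : τ → M) (h : ∀ t, Lf (F := F) g D (m t))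
    (hcard : Fintype.card ι * D < Fintype.card τ) : ∃ c : τ → F, c ≠ 0 ∧ ∑ t, C (c t) • m t = 0 := by
  choose p hp1 hp2 using h
  let T : (τ → F) →ₗ[F] (ι × Fin D → F) := Fintype.linearCombination F fun t => fun i => (p t i.1).coeff i.2
  have hT : LinearMap.ker T ≠ ⊥ := LinearMap.ker_ne_bot_of_finrank_lt (by
    simpa [Module.finrank_fintype_fun_eq_card] using hcard)
  obtain ⟨c, hc, hc0⟩ := (Submodule.ne_bot_iff _).1 hT
  refine ⟨c, hc0, ?_⟩
  have hz : ∀ i, ∑ t, C (c t) * p t i = 0 := by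
    intro i
    ext n
    rw [finsetSum_coeff, coeff_zero]
    simp only [coeff_C_mul]
    by_cases hn : n < D
    · have := congrFun (LinearMap.mem_ker.1 hc) (i, ⟨n, hn⟩)
      simpa [T, Fintype.linearCombination_apply] using this
    · refine sum_eq_zero fun t _ => ?_
      rw [coeff_eq_zero_of_degree_lt, mul_zero]
      exact (hp1 t i).trans_le (by exact_mod_cast not_lt.1 hn)
  calc ∑ t, C (c t) • m t = ∑ t, ∑ i, (C (c t) * p t i) • g i := by
        refine sum_congr rfl fun t _ => ?_
        conv_lhs => rw [hp2 t]
        rw [smul_sum]; simp only [mul_smul]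
    _ = 0 := by
        rw [sum_comm]
        refine sum_eq_zero fun i _ => ?_
        rw [← sum_smul, hz, zero_smul]

end filt

lemma num_ineq {d Q s R : ℕ} (hd : 0 < d) (hQ : d * s < Q) :
    d * (d - 1) * ((d * R + 1) * Q + R) < (d * R + 1) * d * ((Q - s) * d) := by
  obtain ⟨e, rfl⟩ : ∃ e, d = e + 1 := ⟨d - 1, by omega⟩
  obtain ⟨w, rfl⟩ : ∃ w, Q = (e + 1) * s + 1 + w := ⟨Q - ((e + 1) * s + 1), by omega⟩
  have : (e + 1) * s + 1 + w - s = e * s + 1 + w := by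
    have : (e + 1) * s = e * s + s := by ring
    omega
  rw [this, Nat.add_sub_cancel]
  nlinarith [mul_nonneg (Nat.zero_le e) (Nat.zero_le R), mul_nonneg (mul_nonneg (Nat.zero_le e) (Nat.zero_le R)) (Nat.zero_le w),
    mul_nonneg (Nat.zero_le e) (Nat.zero_le w),mul_nonneg (mul_nonneg (mul_nonneg (Nat.zero_le e) (Nat.zero_le R)) (Nat.zero_le w)) (Nat.zero_le e),  mul_nonneg (mul_nonneg (Nat.zero_le e) (Nat.zero_le R)) (Nat.zero_le e)]

lemma theta_abs {F M : Type*} [Field F] [CommRing M] [Algebra F[X] M] (y z : M) {d : ℕ} (hd : 0 < d)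
    (hspan : ∀ m : M, ∃ p : Fin d × Fin (d - 1) → F[X], m = ∑ i, p i • (y ^ (i.1 : ℕ) * z ^ (i.2 : ℕ))) (s : ℕ) :
    ∃ (μ A N : ℕ) (c : (Fin A × Fin d) × (Fin N × Fin d) → F), c ≠ 0 ∧ N + s = 2 ^ μ ∧
      ∑ t, C (c t) • ((X ^ ((t.1.1 : ℕ) * 2 ^ μ + t.2.1) : F[X]) • (y ^ ((t.1.2 : ℕ) * 2 ^ μ) * z ^ (t.2.2 : ℕ))) = 0 := by
  obtain ⟨κ1, h1⟩ := Lf_mul hspan y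
  obtain ⟨κ2, h2⟩ := Lf_mul hspan z
  obtain ⟨D0, h0⟩ := Lf_one hspan 1
  have hQ : d * s < 2 ^ (d * s) := Nat.lt_two_pow_self
  set μ := d * s
  set Q := 2 ^ μ
  have hsQ : s ≤ Q := (Nat.le_mul_of_pos_left s hd).trans hQ.le
  set R := D0 + κ2 * d + κ1 * (d * Q) + Q
  obtain ⟨c, hc0, hc⟩ := lin_dep (D := (d * R + 1) * Q + R)
    (fun t : (Fin (d * R + 1) × Fin d) × (Fin (Q - s) × Fin d) =>
      (X ^ ((t.1.1 : ℕ) * Q + t.2.1) : F[X]) • (y ^ ((t.1.2 : ℕ) * Q) * z ^ (t.2.2 : ℕ))) (fun t => by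
    have e := Lf_smul (e := (t.1.1 : ℕ) * Q + t.2.1) (Lf_pow h1 ((t.1.2 : ℕ) * Q) _ _ (Lf_pow h2 (t.2.2 : ℕ) _ _ h0))
    rw [mul_one] at e
    refine Lf_mono ?_ e
    have a1 : κ2 * (t.2.2 : ℕ) ≤ κ2 * d := Nat.mul_le_mul_left _ t.2.2.2.le
    have a2 : κ1 * ((t.1.2 : ℕ) * Q) ≤ κ1 * (d * Q) := Nat.mul_le_mul_left _ (Nat.mul_le_mul_right _ t.1.2.2.le)
    have a3 : (t.1.1 : ℕ) * Q ≤ (d * R + 1) * Q := Nat.mul_le_mul_right _ t.1.1.2.le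
    have a4 := t.2.1.2
    omega) (by
    simp only [Fintype.card_prod, Fintype.card_fin]
    exact num_ineq hd hQ)
  exact ⟨μ, d * R + 1, Q - s, c, hc0, Nat.sub_add_cancel hsQ, hc⟩

end B2
section B3
open Polynomial Finset

lemma ar_span {R : Type*} [CommRing R] {g : R[X]} (hg : g.Monic) {d : ℕ} (hd : g.natDegree = d) (m : AdjoinRoot g) :
    ∃ p : Fin d → R, m = ∑ i, p i • (AdjoinRoot.root g) ^ (i : ℕ) := by
  subst hd
  refine ⟨fun i => (AdjoinRoot.powerBasis' hg).basis.repr m i, ?_⟩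
  conv_lhs => rw [← (AdjoinRoot.powerBasis' hg).basis.sum_repr m]
  refine sum_congr rfl fun i _ => ?_
  rw [PowerBasis.basis_eq_pow, AdjoinRoot.powerBasis'_gen]

lemma ar_indep {R : Type*} [CommRing R] {g : R[X]} (hg : g.Monic) {d : ℕ} (hd : g.natDegree = d) (p : Fin d → R)
    (h : ∑ i, p i • (AdjoinRoot.root g) ^ (i : ℕ) = 0) : ∀ i, p i = 0 := by
  subst hd
  have hb := (AdjoinRoot.powerBasis' hg).basis.linearIndependent
  rw [Fintype.linearIndependent_iff] at hb
  refine hb p ?_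
  rw [← h]
  refine sum_congr rfl fun i _ => ?_
  rw [PowerBasis.basis_eq_pow, AdjoinRoot.powerBasis'_gen]

lemma theta {F k : Type*} [Field F] [Field k] {f0 : F[X][X]} (hm : f0.Monic) {d : ℕ} (hd : 0 < d) (hdeg : f0.natDegree = d)
    (s : ℕ) : ∃ (μ A N : ℕ) (c : (Fin A × Fin d) × (Fin N × Fin d) → F), c ≠ 0 ∧ N + s = 2 ^ μ ∧
      ∀ (ex : F[X] →+* k) (y z : k), eval₂ ex y f0 = 0 → eval₂ ex z f0 = 0 → y ≠ z →
      ∑ t, ex (C (c t)) * (ex X ^ ((t.1.1 : ℕ) * 2 ^ μ + t.2.1) * (y ^ ((t.1.2 : ℕ) * 2 ^ μ) * z ^ (t.2.2 : ℕ))) = 0 := by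
  have : Nontrivial (AdjoinRoot f0) := AdjoinRoot.nontrivial f0 (by
    rw [degree_eq_natDegree hm.ne_zero, hdeg]; exact_mod_cast hd.ne')
  set r := AdjoinRoot.root f0 with hr
  set f2 : (AdjoinRoot f0)[X] := (f0.map (AdjoinRoot.of f0)) /ₘ (X - C r) with hf2
  have hroot : (X - C r) * f2 = f0.map (AdjoinRoot.of f0) := by
    rw [hf2, mul_divByMonic_eq_iff_isRoot, IsRoot, eval_map]
    exact AdjoinRoot.eval₂_root f0
  have hm2 : f2.Monic := by
    refine (monic_X_sub_C r).of_mul_monic_left ?_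
    rw [hroot]; exact hm.map _
  have hd2 : f2.natDegree = d - 1 := by
    rw [hf2, natDegree_divByMonic _ (monic_X_sub_C r), natDegree_X_sub_C, hm.natDegree_map, hdeg]
  obtain ⟨μ, A, N, c, hc0, hN, hc⟩ := theta_abs (F := F) (M := AdjoinRoot f2) (AdjoinRoot.of f2 r) (AdjoinRoot.root f2) hd
    (fun m => by
      obtain ⟨p, hp⟩ := ar_span hm2 hd2 m
      choose p2 hp2 using fun i => ar_span hm hdeg (p i)
      refine ⟨fun i => p2 i.2 i.1, ?_⟩
      rw [Fintype.sum_prod_type, sum_comm]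
      refine hp.trans (sum_congr rfl fun v _ => ?_)
      conv_lhs => rw [hp2 v]
      rw [sum_smul]
      refine sum_congr rfl fun u _ => ?_
      rw [smul_assoc]
      congr 1
      rw [← map_pow, Algebra.smul_def]; rfl) s
  refine ⟨μ, A, N, c, hc0, hN, fun ex y z hy hz hyz => ?_⟩
  let e1 : AdjoinRoot f0 →+* k := AdjoinRoot.lift ex y hy
  have hz2 : f2.eval₂ e1 z = 0 := by
    have h := congrArg (eval₂ e1 z) hroot
    rw [eval₂_mul, eval₂_map, eval₂_sub, eval₂_X, eval₂_C] at h
    have e3 : e1.comp (AdjoinRoot.of f0) = ex := by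
      ext <;> simp [e1]
    have e4 : e1 r = y := AdjoinRoot.lift_root hy
    rw [e3, hz, e4] at h
    exact (mul_eq_zero.1 h).resolve_left (sub_ne_zero.2 hyz.symm)
  let e2 : AdjoinRoot f2 →+* k := AdjoinRoot.lift e1 z hz2
  have h := congrArg e2 hc
  rw [map_sum, map_zero] at h
  rw [← h]
  have ha : ∀ p : F[X], e2 (algebraMap F[X] (AdjoinRoot f2) p) = ex p := by
    intro p
    rw [IsScalarTower.algebraMap_apply F[X] (AdjoinRoot f0) (AdjoinRoot f2)]
    change e2 (AdjoinRoot.of f2 (AdjoinRoot.of f0 p)) = _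
    simp [e2, e1]
  refine sum_congr rfl fun t _ => ?_
  have hr2 : e2 (AdjoinRoot.of f2 r) = y := by simp [e2, e1, hr]
  have hr3 : e2 (AdjoinRoot.root f2) = z := by simp [e2]
  rw [Algebra.smul_def, Algebra.smul_def, map_mul, map_mul, map_mul, map_pow e2, map_pow e2, ha, ha, hr2, hr3, map_pow]

variable {k : Type*} [Field k]

lemma ar_indep_k {f : k[X][X]} (hm : f.Monic) {d : ℕ} (hd : f.natDegree = d) (A : ℕ) :
    LinearIndependent k (fun u : Fin A × Fin d => algebraMap k[X] (AdjoinRoot f) (X ^ (u.1 : ℕ)) * AdjoinRoot.root f ^ (u.2 : ℕ)) := by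
  rw [Fintype.linearIndependent_iff]
  intro g hg i
  have h : ∑ b : Fin d, (∑ a : Fin A, C (g (a, b)) * X ^ (a : ℕ)) • AdjoinRoot.root f ^ (b : ℕ) = 0 := by
    rw [← hg, Fintype.sum_prod_type, sum_comm]
    refine sum_congr rfl fun b _ => ?_
    rw [sum_smul]
    refine sum_congr rfl fun a _ => ?_
    rw [mul_smul, Algebra.smul_def (X ^ (a : ℕ) : k[X]), ← algebraMap_smul k[X] (g (a, b))]
    rfl
  have := ar_indep hm hd _ h i.2
  have := congrArg (fun p => coeff p (i.1 : ℕ)) this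
  simp only [finsetSum_coeff, coeff_C_mul_X_pow, coeff_zero] at this
  rw [sum_eq_single i.1] at this
  · simpa using this
  · intro b _ hb
    rw [if_neg]; intro h; exact hb (Fin.ext h.symm)
  · simp

lemma charP_of {k K : Type*} [Field k] [CharP k 2] [CommRing K] [Nontrivial K] [Algebra k K] : CharP K 2 :=
  charP_of_injective_algebraMap (algebraMap k K).injective 2

lemma NV2 [IsAlgClosed k] [CharP k 2] {f : k[X][X]} (hm : f.Monic) (hirr : Irreducible f) {d : ℕ} (hd : f.natDegree = d) (A N : ℕ)
    (c : (Fin A × Fin d) × (Fin N × Fin d) → k) (hc : c ≠ 0) (hc2 : ∀ t, c t ^ 2 = c t) :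
    ∃ m0 : ℕ, ∀ m, m0 ≤ m → ∑ t, C (c t) • ((X ^ ((t.1.1 : ℕ) + 2 ^ m * t.2.1) : k[X]) •
      AdjoinRoot.root f ^ ((t.1.2 : ℕ) + 2 ^ m * t.2.2)) ≠ 0 := by
  have : IsDomain (AdjoinRoot f) := AdjoinRoot.isDomain_of_prime hirr.prime
  have hfin : Module.Finite k[X] (AdjoinRoot f) := hm.finite_adjoinRoot
  have hfree : Module.Free k[X] (AdjoinRoot f) := hm.free_adjoinRoot
  have htf : Module.IsTorsionFree k[X] (AdjoinRoot f) := inferInstance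
  let _ : Algebra (FractionRing k[X]) (FractionRing (AdjoinRoot f)) := FractionRing.liftAlgebra k[X] (FractionRing (AdjoinRoot f))
  have : FiniteDimensional (FractionRing k[X]) (FractionRing (AdjoinRoot f)) := .of_isLocalization k[X] (AdjoinRoot f) (nonZeroDivisors k[X])
  have : CharP (FractionRing k[X]) 2 := charP_of (k := k)
  have : CharP (FractionRing (AdjoinRoot f)) 2 := charP_of (k := k)
  have : IsScalarTower k (FractionRing k[X]) (FractionRing (AdjoinRoot f)) := by
    refine IsScalarTower.of_algebraMap_eq fun x => ?_
    rw [IsScalarTower.algebraMap_apply k k[X] (FractionRing k[X]), ← IsScalarTower.algebraMap_apply k[X],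
      ← IsScalarTower.algebraMap_apply]
  have inj : Function.Injective (algebraMap (AdjoinRoot f) (FractionRing (AdjoinRoot f))) := IsFractionRing.injective _ _
  have hli : ∀ A, LinearIndependent k fun u : Fin A × Fin d => algebraMap (AdjoinRoot f) (FractionRing (AdjoinRoot f))
      (algebraMap k[X] (AdjoinRoot f) (X ^ (u.1 : ℕ)) * AdjoinRoot.root f ^ (u.2 : ℕ)) := fun A =>
    (ar_indep_k hm hd A).map' (IsScalarTower.toAlgHom k (AdjoinRoot f) (FractionRing (AdjoinRoot f))).toLinearMap
      (LinearMap.ker_eq_bot.2 inj)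
  obtain ⟨m0, h0⟩ := NV _ _ (hli A) (hli N) (fun u v => c (u, v)) (by
    obtain ⟨t, ht⟩ := Function.ne_iff.1 hc
    exact ⟨t.1, t.2, ht⟩) (fun i j => hc2 (i, j))
  refine ⟨m0, fun m hmm h => h0 m hmm ?_⟩
  rw [← map_zero (algebraMap (AdjoinRoot f) (FractionRing (AdjoinRoot f))), ← h, map_sum, ← Fintype.sum_prod_type']
  refine sum_congr rfl fun t _ => ?_
  rw [IsScalarTower.algebraMap_apply k (AdjoinRoot f) (FractionRing (AdjoinRoot f)), ← map_pow, ← map_mul, ← map_mul]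
  congr 1
  rw [Algebra.smul_def, Algebra.smul_def, IsScalarTower.algebraMap_apply k k[X] (AdjoinRoot f), algebraMap_eq]
  simp only [map_pow]
  ring

end B3
section B4
open Polynomial Finset

variable {k : Type*} [Field k] [IsAlgClosed k] [CharP k 2]

lemma Fq_set {n : ℕ} (hn : n ≠ 0) : ∃ s : Finset k, #s = 2 ^ n ∧ ∀ x, x ∈ s ↔ x ^ 2 ^ n = x := by
  classical
  have h1 : (X ^ 2 ^ n - X : k[X]).Separable := galois_poly_separable 2 (2 ^ n) (dvd_pow_self 2 hn)
  have h2 : (X ^ 2 ^ n - X : k[X]).natDegree = 2 ^ n := FiniteField.X_pow_card_pow_sub_X_natDegree_eq k hn (by norm_num)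
  have h3 : (X ^ 2 ^ n - X : k[X]) ≠ 0 := h1.ne_zero
  refine ⟨(X ^ 2 ^ n - X : k[X]).roots.toFinset, ?_, fun x => ?_⟩
  · rw [Multiset.toFinset_card_of_nodup (nodup_roots h1)]
    exact (splits_iff_card_roots.1 (IsAlgClosed.splits (X ^ 2 ^ n - X : k[X]))).trans h2
  · rw [Multiset.mem_toFinset, mem_roots h3]
    simp [sub_eq_zero]

/-- vanishing of coordinates -/
lemma coord_zero {f : k[X][X]} (hm : f.Monic) {d : ℕ} (hd : f.natDegree = d) (p : Fin d → k[X]) (x0 : k)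
    (hsep : ∀ y, eval₂ (evalRingHom x0) y f = 0 → eval₂ (evalRingHom x0) y (derivative f) ≠ 0)
    (hv : ∀ y, eval₂ (evalRingHom x0) y f = 0 → ∑ i, (p i).eval x0 * y ^ (i : ℕ) = 0) (i : Fin d) : (p i).eval x0 = 0 := by
  classical
  set ff := f.map (evalRingHom x0) with hff
  have hffm : ff.Monic := hm.map _
  have hffd : ff.natDegree = d := by rw [hff, hm.natDegree_map, hd]
  have hs : ff.Separable := by
    rw [Separable, isCoprime_iff_aeval_ne_zero_of_isAlgClosed k k ff (derivative ff)]
    intro a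
    by_contra! hh
    simp only [coe_aeval_eq_eval, hff, derivative_map, eval_map] at hh
    exact hsep a hh.1 hh.2
  have hc : #ff.roots.toFinset = d := by
    rw [Multiset.toFinset_card_of_nodup (nodup_roots hs), ← hffd]
    exact (splits_iff_card_roots.1 (IsAlgClosed.splits ff))
  have hz : ∑ j : Fin d, C ((p j).eval x0) * X ^ (j : ℕ) = 0 := by
    refine eq_zero_of_degree_lt_of_eval_finset_eq_zero ff.roots.toFinset ?_ ?_
    · rw [hc, ← mem_degreeLT]
      refine Submodule.sum_mem _ fun j _ => ?_
      rw [mem_degreeLT]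
      exact (degree_C_mul_X_pow_le _ _).trans_lt (by exact_mod_cast j.2)
    · intro y hy
      rw [Multiset.mem_toFinset, mem_roots hffm.ne_zero, IsRoot, hff, eval_map] at hy
      rw [← hv y hy, eval_finsetSum]
      simp
  have := congrArg (fun q => coeff q (i : ℕ)) hz
  simp only [finsetSum_coeff, coeff_C_mul_X_pow, coeff_zero] at this
  rw [sum_eq_single i] at this
  · simpa using this
  · intro b _ hb
    rw [if_neg]; intro h; exact hb (Fin.ext h.symm)
  · simp

lemma frob_root (φ : ZMod 2 →+* k) (f0 : (ZMod 2)[X][X]) {n : ℕ} {x0 y0 : k} (hx : x0 ^ 2 ^ n = x0)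
    (h : eval₂ ((evalRingHom x0).comp (mapRingHom φ)) y0 f0 = 0) :
    eval₂ ((evalRingHom x0).comp (mapRingHom φ)) (y0 ^ 2 ^ n) f0 = 0 := by
  have h1 := congrArg (iterateFrobenius k 2 n) h
  rw [hom_eval₂, map_zero, iterateFrobenius_def] at h1
  rw [← h1]
  congr 1
  apply Polynomial.ringHom_ext
  · intro a; 
    have : (((evalRingHom x0).comp (mapRingHom φ)).comp C) = ((iterateFrobenius k 2 n).comp ((evalRingHom x0).comp (mapRingHom φ))).comp C := Subsingleton.elim _ _
    exact DFunLike.congr_fun this a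
  · simp [iterateFrobenius_def, hx]

lemma elim {f : k[X][X]} (hm : f.Monic) (hirr : Irreducible f) (w : k[X][X]) (hw : ¬ f ∣ w) :
    ∃ S : k[X], S ≠ 0 ∧ ∀ x0 y0 : k, eval₂ (evalRingHom x0) y0 f = 0 → S.eval x0 ≠ 0 → eval₂ (evalRingHom x0) y0 w ≠ 0 := by
  have : IsDomain (AdjoinRoot f) := AdjoinRoot.isDomain_of_prime hirr.prime
  have hfin : Module.Finite k[X] (AdjoinRoot f) := hm.finite_adjoinRoot
  have hz : AdjoinRoot.mk f w ≠ 0 := by rwa [Ne, AdjoinRoot.mk_eq_zero]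
  have hI := Ideal.comap_ne_bot_of_integral_mem (R := k[X]) hz (Ideal.mem_span_singleton_self (AdjoinRoot.mk f w))
    (Algebra.IsIntegral.isIntegral _)
  obtain ⟨S, hS, hS0⟩ := (Submodule.ne_bot_iff _).1 hI
  rw [Ideal.mem_comap, Ideal.mem_span_singleton] at hS
  obtain ⟨b, hb⟩ := hS
  refine ⟨S, hS0, fun x0 y0 h hne hw0 => hne ?_⟩
  have := congrArg (AdjoinRoot.lift (evalRingHom x0) y0 h) hb
  rw [map_mul, AdjoinRoot.lift_mk, hw0, zero_mul] at this
  rw [← this]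
  exact (AdjoinRoot.lift_of h).symm

lemma psi_pow (φ : ZMod 2 →+* k) {d A N μ m n : ℕ} (hn : n = m + μ) (c : (Fin A × Fin d) × (Fin N × Fin d) → ZMod 2) {x0 y0 : k}
    (hx : x0 ^ 2 ^ n = x0)
    (h : ∑ t, φ (c t) * (x0 ^ ((t.1.1 : ℕ) * 2 ^ μ + t.2.1) * (y0 ^ ((t.1.2 : ℕ) * 2 ^ μ) * (y0 ^ 2 ^ n) ^ (t.2.2 : ℕ))) = 0) :
    ∑ t, φ (c t) * (x0 ^ ((t.1.1 : ℕ) + 2 ^ m * t.2.1) * y0 ^ ((t.1.2 : ℕ) + 2 ^ m * t.2.2)) = 0 := by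
  have hp : (∑ t, φ (c t) * (x0 ^ ((t.1.1 : ℕ) + 2 ^ m * t.2.1) * y0 ^ ((t.1.2 : ℕ) + 2 ^ m * t.2.2))) ^ 2 ^ μ = 0 := by
    rw [sum_pow_char_pow, ← h]
    refine sum_congr rfl fun t _ => ?_
    have e1 : φ (c t) ^ 2 ^ μ = φ (c t) := by rw [← map_pow, ZMod.pow_card_pow]
    have e2 : x0 ^ (t.2.1 : ℕ) = (x0 ^ (2 ^ m * 2 ^ μ)) ^ (t.2.1 : ℕ) := by rw [← pow_add, ← hn, hx]
    rw [mul_pow, e1, pow_add _ ((t.1.1 : ℕ) * 2 ^ μ), e2, hn, pow_add 2 m μ]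
    ring
  exact pow_eq_zero_iff (by positivity) |>.1 hp

theorem stepanov (φ : ZMod 2 →+* k) (f0 : (ZMod 2)[X][X]) (hm0 : f0.Monic) (hd : 0 < f0.natDegree) (f : k[X][X])
    (hf : f = f0.map (mapRingHom φ)) (hirr : Irreducible f) (hsep : derivative f ≠ 0) (h : k[X][X]) (hh : ¬ f ∣ h) :
    ∃ n0 : ℕ, ∀ n, n0 ≤ n → ∃ x0 y0 : k, x0 ^ 2 ^ n = x0 ∧ y0 ^ 2 ^ n = y0 ∧ eval₂ (evalRingHom x0) y0 f = 0 ∧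
      eval₂ (evalRingHom x0) y0 h ≠ 0 := by
  have hm : f.Monic := hf ▸ hm0.map _
  obtain ⟨d, hdd⟩ : ∃ d, f0.natDegree = d := ⟨_, rfl⟩
  have hfd : f.natDegree = d := by rw [hf, hm0.natDegree_map, hdd]
  rw [hdd] at hd
  have hspan := ar_span hm hfd
  obtain ⟨κ, hκ⟩ := Lf_mul hspan (AdjoinRoot.root f)
  obtain ⟨D0, h0⟩ := Lf_one hspan 1
  obtain ⟨μ, A, N, c, hc0, hN, hc⟩ := theta (k := k) hm0 hd hdd (κ * d + 1)
  have hder : ¬ f ∣ derivative f := fun hdv =>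
    hsep (eq_zero_of_dvd_of_natDegree_lt hdv (natDegree_derivative_lt (by omega)))
  obtain ⟨S, hS0, hS⟩ := elim hm hirr (derivative f * h) (fun hdv => (hirr.prime.dvd_or_dvd hdv).elim hder hh)
  obtain ⟨m0, hm0'⟩ := NV2 hm hirr hfd A N (fun t => φ (c t)) (by
    obtain ⟨t, ht⟩ := Function.ne_iff.1 hc0
    exact Function.ne_iff.2 ⟨t, by simpa using ht⟩) (fun t => by rw [← map_pow, ZMod.pow_card])
  refine ⟨m0 + μ + (A + κ * d + D0 + S.natDegree) + 1, fun n hn => ?_⟩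
  by_contra! hcon
  obtain ⟨m, rfl⟩ : ∃ m, n = m + μ := ⟨n - μ, by omega⟩
  have hnm : A + κ * d + D0 + S.natDegree < 2 ^ m := lt_of_le_of_lt (by omega) (Nat.lt_two_pow_self (n := m))
  refine hm0' m (by omega) ?_
  have hL : Lf (F := k) (fun i : Fin d => AdjoinRoot.root f ^ (i : ℕ)) (2 ^ (m + μ) - S.natDegree)
      (∑ t, C (φ (c t)) • ((X ^ ((t.1.1 : ℕ) + 2 ^ m * t.2.1) : k[X]) •
      AdjoinRoot.root f ^ ((t.1.2 : ℕ) + 2 ^ m * t.2.2))) := by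
    refine Lf_sum _ _ fun t _ => ?_
    have e := Lf_smul (e := (t.1.1 : ℕ) + 2 ^ m * t.2.1) (Lf_pow hκ ((t.1.2 : ℕ) + 2 ^ m * t.2.2) _ _ h0)
    rw [mul_one] at e
    refine Lf_mono ?_ e
    have a1 : κ * ((t.1.2 : ℕ) + 2 ^ m * t.2.2) ≤ κ * d + 2 ^ m * (κ * d) := by
      calc κ * ((t.1.2 : ℕ) + 2 ^ m * t.2.2) ≤ κ * (d + 2 ^ m * d) :=
            Nat.mul_le_mul_left _ (Nat.add_le_add t.1.2.2.le (Nat.mul_le_mul_left _ t.2.2.2.le))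
        _ = _ := by ring
    have a2 : 2 ^ m * (t.2.1 : ℕ) ≤ 2 ^ m * N := Nat.mul_le_mul_left _ t.2.1.2.le
    have a3 := t.1.1.2
    have a4 : 2 ^ (m + μ) = 2 ^ m * N + 2 ^ m * (κ * d) + 2 ^ m := by rw [pow_add, ← hN]; ring
    omega
  obtain ⟨p, hp1, hp2⟩ := hL
  rw [hp2]
  obtain ⟨s, hs1, hs2⟩ := Fq_set (k := k) (n := m + μ) (by omega)
  have hp0 : ∀ i, p i = 0 := by
    intro i
    have : p i * S = 0 := by
      refine eq_zero_of_degree_lt_of_eval_finset_eq_zero s ?_ ?_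
      · have := deg_mul_lt (hp1 i) (le_refl S.natDegree)
        rw [hs1]
        refine this.trans_le ?_
        have hle : S.natDegree ≤ 2 ^ (m + μ) := by
          have : 2 ^ m ≤ 2 ^ (m + μ) := Nat.pow_le_pow_right (by norm_num) (by omega)
          omega
        rw [Nat.sub_add_cancel hle]
      · intro x0 hx0
        rw [hs2] at hx0
        rw [eval_mul]
        by_cases hSx : S.eval x0 = 0
        · rw [hSx, mul_zero]
        rw [coord_zero hm hfd p x0 ?_ ?_ i, zero_mul]
        · intro y hy h1
          apply hS x0 y hy hSx
          rw [eval₂_mul, h1, zero_mul]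
        · intro y hy
          have hh0 : eval₂ (evalRingHom x0) y h ≠ 0 := fun h1 => hS x0 y hy hSx (by rw [eval₂_mul, h1, mul_zero])
          have hne : y ≠ y ^ 2 ^ (m + μ) := fun h1 => hh0 (hcon x0 y hx0 h1.symm hy)
          have hy0 : eval₂ ((evalRingHom x0).comp (mapRingHom φ)) y f0 = 0 := by rw [← eval₂_map, ← hf, hy]
          have e1 := hc ((evalRingHom x0).comp (mapRingHom φ)) y _ hy0 (frob_root φ f0 hx0 hy0) hne
          simp only [RingHom.comp_apply, coe_mapRingHom, coe_evalRingHom, map_C, map_X, eval_C, eval_X] at e1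
          have e2 := psi_pow φ rfl c hx0 e1
          have e3 := congrArg (AdjoinRoot.lift (evalRingHom x0) y hy) hp2
          rw [map_sum, map_sum] at e3
          have ha : ∀ q : k[X], AdjoinRoot.lift (evalRingHom x0) y hy (algebraMap k[X] (AdjoinRoot f) q) = q.eval x0 :=
            fun q => AdjoinRoot.lift_of hy
          simp only [Algebra.smul_def, map_mul, map_pow, AdjoinRoot.lift_root, ha, eval_C] at e3
          rw [← e3, ← e2]
          refine sum_congr rfl fun t _ => ?_
          rw [eval_X]
    exact (mul_eq_zero.1 this).resolve_right hS0
  simp [hp0]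

end B4
section C1
open Polynomial

noncomputable def th (R : Type*) [CommRing R] : MvPolynomial (Fin 2) R →+* R[X][X] :=
  MvPolynomial.eval₂Hom (C.comp C) ![C X, X]

noncomputable def thi (R : Type*) [CommRing R] : R[X][X] →+* MvPolynomial (Fin 2) R :=
  eval₂RingHom (eval₂RingHom MvPolynomial.C (MvPolynomial.X 0)) (MvPolynomial.X 1)

section
variable {R : Type*} [CommRing R]
@[simp] lemma th_X0 : th R (MvPolynomial.X 0) = C X := by simp [th]
@[simp] lemma th_X1 : th R (MvPolynomial.X 1) = X := by simp [th]
@[simp] lemma th_C (c : R) : th R (MvPolynomial.C c) = C (C c) := by simp [th]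

lemma thi_th (p : MvPolynomial (Fin 2) R) : thi R (th R p) = p := by
  suffices h : (thi R).comp (th R) = RingHom.id _ from congrArg (fun g => g p) h
  apply MvPolynomial.ringHom_ext
  · intro c; simp [thi]
  · intro j; fin_cases j <;> simp [thi]

lemma th_thi (p : R[X][X]) : th R (thi R p) = p := by
  suffices h : (th R).comp (thi R) = RingHom.id _ from congrArg (fun g => g p) h
  apply Polynomial.ringHom_ext'
  · apply Polynomial.ringHom_ext'
    · ext c; simp [thi]
    · simp [thi]
  · simp [thi]

noncomputable def the (R : Type*) [CommRing R] : MvPolynomial (Fin 2) R ≃+* R[X][X] :=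
  { th R with invFun := thi R, left_inv := thi_th, right_inv := th_thi }

lemma the_apply (p : MvPolynomial (Fin 2) R) : the R p = th R p := rfl

lemma th_map {S : Type*} [CommRing S] (φ : R →+* S) (p : MvPolynomial (Fin 2) R) :
    th S (MvPolynomial.map φ p) = (th R p).map (mapRingHom φ) := by
  suffices h : (th S).comp (MvPolynomial.map φ) = (mapRingHom (mapRingHom φ)).comp (th R) from
    congrArg (fun g => g p) h
  apply MvPolynomial.ringHom_ext
  · intro c; simp
  · intro j; fin_cases j <;> simp

lemma th_eval (x y : R) (p : MvPolynomial (Fin 2) R) :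
    eval₂ (evalRingHom x) y (th R p) = MvPolynomial.eval ![x, y] p := by
  suffices h : (eval₂RingHom (evalRingHom x) y).comp (th R) = MvPolynomial.eval ![x, y] from
    congrArg (fun g => g p) h
  apply MvPolynomial.ringHom_ext
  · intro c; simp
  · intro j; fin_cases j <;> simp

lemma th_deriv (p : MvPolynomial (Fin 2) R) :
    derivative (th R p) = th R (MvPolynomial.pderiv 1 p) := by
  induction p using MvPolynomial.induction_on with
  | C c => simp
  | add p q hp hq => simp [hp, hq]
  | mul_X p j hp =>
    fin_cases j
    · simp [hp, Derivation.leibniz]; ring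
    · simp [hp, Derivation.leibniz]; ring

lemma th_dvd {p q : MvPolynomial (Fin 2) R} : th R p ∣ th R q ↔ p ∣ q := map_dvd_iff (the R)
lemma th_irr {p : MvPolynomial (Fin 2) R} : Irreducible (th R p) ↔ Irreducible p :=
  MulEquiv.irreducible_iff (the R)
end

variable {k : Type*} [Field k] [CharP k 2]
local notation "xx" => (MvPolynomial.X 0 : RR k)
local notation "yy" => (MvPolynomial.X 1 : RR k)

lemma descend01 [IsAlgClosed k] (φ : ZMod 2 →+* k) {a : RR k} (ha : a ≠ 0)
    (h : Associated (MvPolynomial.map (frobenius k 2) a) a) :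
    ∃ a0, Associated a (MvPolynomial.map φ a0) := by
  obtain ⟨u, hu⟩ := h.symm
  obtain ⟨c, hc, hcu⟩ := MvPolynomial.isUnit_iff_eq_C_of_isReduced.1 u.isUnit
  have hc0 : c ≠ 0 := hc.ne_zero
  rw [hcu] at hu
  have h1 : ∀ m, (c⁻¹ * a.coeff m) = 0 ∨ (c⁻¹ * a.coeff m) = 1 := by
    intro m
    have := congrArg (MvPolynomial.coeff m) hu
    rw [mul_comm, MvPolynomial.coeff_C_mul, MvPolynomial.coeff_map, frobenius_def] at this
    have h2 : (c * (c⁻¹ * a.coeff m)) = a.coeff m := by field_simp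
    generalize c⁻¹ * a.coeff m = v at h2
    rw [← h2] at this
    have : c * c * (v * (v - 1)) = 0 := by linear_combination -this
    simp [hc0, sub_eq_zero] at this
    exact this
  have hr : MvPolynomial.C c⁻¹ * a ∈ Set.range (MvPolynomial.map φ) := by
    rw [MvPolynomial.mem_range_map_iff_coeffs_subset]
    intro x hx
    rw [Finset.mem_coe, MvPolynomial.mem_coeffs_iff] at hx
    obtain ⟨m, -, rfl⟩ := hx
    rw [MvPolynomial.coeff_C_mul]
    rcases h1 m with h | h
    · exact ⟨0, by rw [h, map_zero]⟩
    · exact ⟨1, by rw [h, map_one]⟩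
  obtain ⟨a0, h0⟩ := hr
  refine ⟨a0, ?_⟩
  rw [h0]
  exact (associated_unit_mul_left _ _ ((isUnit_iff_ne_zero.2 (inv_ne_zero hc0)).map _)).symm

lemma not_dvd_aux {t : ℕ} (ht : 3 ≤ t) (hodd : Odd t) {a q : RR k} (ha : Irreducible a) (hF : a ∣ FF k t)
    (hq : Prime q) (ψ : RR k →ₐ[k] k[X]) (h0 : ψ q = 0)
    (h1 : ψ (FF k t) = X ^ t + 1 + (X + 1) ^ t) : ¬ a ∣ q := by
  intro h
  have h2 : q ∣ a := (ha.associated_of_dvd hq.irreducible h).symm.dvd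
  obtain ⟨b, hb⟩ := h2.trans hF
  rw [hb, map_mul, h0, zero_mul] at h1
  have h3 := congrArg (fun p => coeff p 1) h1
  have h4 : t ≠ 0 := by omega
  have h5 : ¬ t = 1 := by omega
  simp [coeff_X_add_one_pow, coeff_one, coeff_X_pow, cast_odd hodd, h5, eq_comm] at h3

lemma not_dvd3 {t : ℕ} (ht : 3 ≤ t) (hodd : Odd t) {a : RR k} (ha : Irreducible a) (hF : a ∣ FF k t) :
    ¬ a ∣ xx ∧ ¬ a ∣ yy ∧ ¬ a ∣ xx + yy + 1 := by
  have h4 : t ≠ 0 := by omega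
  have h2 : (2 : k[X]) = 0 := CharTwo.two_eq_zero
  have hpx : Prime xx := by simpa using lin_prime (k := k) (a := 1) (b := 0) 0 (Or.inl one_ne_zero)
  have hpy : Prime yy := by simpa using lin_prime (k := k) (a := 0) (b := 1) 0 (Or.inr one_ne_zero)
  refine ⟨not_dvd_aux ht hodd ha hF hpx (MvPolynomial.aeval ![0, X]) (by simp) ?_,
    not_dvd_aux ht hodd ha hF hpy (MvPolynomial.aeval ![X, 0]) (by simp) ?_,
    not_dvd_aux ht hodd ha hF ?_ (MvPolynomial.aeval ![X, X + 1]) ?_ ?_⟩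
  · simp [FF, h4]
  · simp [FF, h4]
  · have := lin_prime (k := k) (a := 1) (b := 1) 1 (Or.inl one_ne_zero)
    simpa using this
  · simp; linear_combination (X + 1) * h2
  · have : (X + (X + 1) + 1 : k[X]) = 0 := by linear_combination (X + 1) * h2
    simp [FF, h4, this]; ring

lemma not_dvd_sq {t : ℕ} (ht : 3 ≤ t) (hodd : Odd t) {a G : RR k} (ha : Irreducible a) (hG : a ∣ G)
    (hF : FF k t = (xx + 1) * (yy + 1) * (xx + yy) * G) :
    ¬ a ∣ (xx + 1) * (yy + 1) * (xx + yy) := by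
  intro h
  exact no_square (by omega) hodd ha (hF ▸ mul_dvd_mul h hG)

lemma deriv_ne {i l : ℕ} (hl : Odd l) (hi : 1 ≤ i) (h3 : 3 ≤ 2 ^ i * l + 1) {a : RR k} (ha : Irreducible a)
    (hF : a ∣ FF k (2 ^ i * l + 1)) (hx : ¬ a ∣ xx + 1) : MvPolynomial.pderiv 1 a ≠ 0 := by
  intro h
  have hodd : Odd (2 ^ i * l + 1) := by
    apply Even.add_one
    exact (Nat.even_pow.2 ⟨even_two, by omega⟩).mul_right _
  obtain ⟨-, hy, -⟩ := not_dvd3 h3 hodd ha hF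
  have hp := ha.prime
  have key : ∀ w, a ∣ w → a ∣ MvPolynomial.pderiv 1 w := by
    rintro w ⟨b, rfl⟩
    rw [Derivation.leibniz, h]; simp
  have h1 := key _ hF
  have e0 : MvPolynomial.pderiv 1 (xx + yy + 1) = 1 := by simp
  have e1 : MvPolynomial.pderiv 1 (FF k (2 ^ i * l + 1)) = (yy ^ l + (xx + yy + 1) ^ l) ^ 2 ^ i := by
    rw [FF, map_add, map_add, map_add, pderiv_pow' _ _ hodd, pderiv_pow' _ _ hodd, pderiv_pow' _ _ hodd, e0,
      add_pow_char_pow, ← pow_mul, ← pow_mul]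
    simp [mul_comm l]
  rw [e1] at h1
  have h2 := hp.dvd_of_dvd_pow h1
  have h4 := key _ h2
  rw [map_add, pderiv_pow' _ _ hl, pderiv_pow' _ _ hl, e0, MvPolynomial.pderiv_X_self] at h4
  have h5 : a ∣ yy ^ (l - 1) * (xx + 1) := by
    have h6 := dvd_add h2 (h4.mul_left (xx + yy + 1))
    obtain ⟨m, rfl⟩ := Nat.exists_eq_add_of_le' hl.pos
    have hc : (2 : RR k) = 0 := CharTwo.two_eq_zero
    rw [Nat.add_sub_cancel] at *
    convert h6 using 1
    linear_combination (-yy ^ m * yy - (xx + yy + 1) ^ (m+1)) * hc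
  rcases hp.dvd_or_dvd h5 with h | h
  · exact hy (hp.dvd_of_dvd_pow h)
  · exact hx h
end C1
section C2
open Polynomial
variable {k : Type*} [Field k] [CharP k 2]
local notation "xx" => (MvPolynomial.X 0 : RR k)
local notation "yy" => (MvPolynomial.X 1 : RR k)

lemma lc_G {t : ℕ} (ht : 3 ≤ t) (hodd : Odd t) {G : RR k}
    (hF : FF k t = (xx + 1) * (yy + 1) * (xx + yy) * G) : (th k G).leadingCoeff = 1 := by
  have hu : (X + C 1 : k[X]) ≠ 0 := X_add_C_ne_zero 1
  have h1 : th k (FF k t) = X ^ t + (X + C (X + C 1)) ^ t + C (X ^ t + 1) := by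
    simp [FF]; ring
  have hc : ∀ j, t - 1 ≤ j → (th k (FF k t)).coeff j = if j = t - 1 then X + C 1 else 0 := by
    intro j hj
    have hj0 : j ≠ 0 := by omega
    rw [h1, coeff_add, coeff_add, coeff_X_add_C_pow, coeff_X_pow, coeff_C, if_neg hj0]
    by_cases h : j = t - 1
    · subst h
      have e1 : t - (t - 1) = 1 := by omega
      have e2 : t.choose (t - 1) = t := by
        rw [← Nat.choose_symm (show t - 1 ≤ t by omega), e1, Nat.choose_one_right]
      rw [if_neg (by omega), if_pos rfl, e1, e2, cast_odd hodd]; ring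
    · rw [if_neg h]
      by_cases h' : j = t
      · subst h'
        simp [CharTwo.add_self_eq_zero]
      · rw [if_neg h', Nat.choose_eq_zero_of_lt (by omega)]; simp
  have hd : (th k (FF k t)).natDegree = t - 1 := by
    refine le_antisymm (natDegree_le_iff_coeff_eq_zero.2 fun N hN => ?_) (le_natDegree_of_ne_zero ?_)
    · rw [hc N hN.le, if_neg (by omega)]
    · rw [hc _ le_rfl, if_pos rfl]; exact hu
  have hl : (th k (FF k t)).leadingCoeff = X + C 1 := by
    rw [leadingCoeff, hd, hc _ le_rfl, if_pos rfl]
  have h2 : th k (FF k t) = C (X + C 1) * (X + C 1) * (X + C X) * th k G := by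
    rw [hF]
    simp only [map_mul, map_add, map_one, th_X0, th_X1]; ring
  rw [h2, leadingCoeff_mul, leadingCoeff_mul, leadingCoeff_mul, leadingCoeff_C, leadingCoeff_X_add_C,
    leadingCoeff_X_add_C, mul_one, mul_one] at hl
  exact mul_left_cancel₀ hu (hl.trans (mul_one _).symm)

lemma monic_f0 (φ : ZMod 2 →+* k) {f0 : (ZMod 2)[X][X]} {g : k[X][X]}
    (h : f0.map (mapRingHom φ) ∣ g) (hg : g.leadingCoeff = 1) : f0.Monic := by
  have hi : Function.Injective (mapRingHom φ) := map_injective φ φ.injective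
  have h1 : IsUnit (mapRingHom φ f0.leadingCoeff) := by
    rw [← leadingCoeff_map_of_injective hi]
    exact isUnit_of_dvd_one (hg ▸ leadingCoeff_dvd_leadingCoeff h)
  have h2 := natDegree_eq_zero_of_isUnit h1
  have h3 : f0.leadingCoeff.natDegree = 0 := by
    rwa [coe_mapRingHom, natDegree_map] at h2
  obtain ⟨c, hc⟩ := natDegree_eq_zero.1 h3
  have h4 : c ≠ 0 := by
    rintro rfl
    rw [← hc, map_zero, map_zero] at h1
    exact not_isUnit_zero h1
  rw [Monic, ← hc]
  have : ∀ c : ZMod 2, c ≠ 0 → c = 1 := by decide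
  rw [this c h4, C_1]

lemma main_points [IsAlgClosed k] {i l : ℕ} (hi : 1 ≤ i) (hl : Odd l) (hl3 : 3 ≤ l) (hkw : l ≠ 2 ^ i - 1) (φ : ZMod 2 →+* k) :
    ∃ n0, ∀ n, n0 ≤ n → ∃ x y : k, x ^ 2 ^ n = x ∧ y ^ 2 ^ n = y ∧
      x ^ (2 ^ i * l + 1) + y ^ (2 ^ i * l + 1) + 1 + (x + y + 1) ^ (2 ^ i * l + 1) = 0 ∧
      (x + 1) * (y + 1) * (x + y) * x * y * (x + y + 1) ≠ 0 := by
  have hodd : Odd (2 ^ i * l + 1) :=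
    Even.add_one ((Nat.even_pow.2 ⟨even_two, by omega⟩).mul_right _)
  have ht : 3 ≤ 2 ^ i * l + 1 := by
    have := Nat.le_mul_of_pos_left l (show 0 < 2 ^ i by positivity)
    omega
  obtain ⟨G, hF⟩ := FF_fac (k := k) hodd
  obtain ⟨a', ha', haG', hfr⟩ := exists_fixed hi hl hl3 hkw hF
  obtain ⟨a0, h0⟩ := descend01 φ ha'.ne_zero hfr
  obtain ⟨a, rfl⟩ : ∃ a, a = MvPolynomial.map φ a0 := ⟨_, rfl⟩
  have ha := h0.irreducible ha'
  have haG := h0.symm.dvd.trans haG'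
  have haF : MvPolynomial.map φ a0 ∣ FF k (2 ^ i * l + 1) := hF ▸ haG.mul_left _
  obtain ⟨hx, hy, hxy⟩ := not_dvd3 ht hodd ha haF
  have hsq := not_dvd_sq ht hodd ha haG hF
  have hder := deriv_ne hl hi ht ha haF (fun h => hsq ((h.mul_right _).mul_right _))
  have hirr := th_irr.2 ha
  have hfG := th_dvd.2 haG
  have hH : ¬ MvPolynomial.map φ a0 ∣ (xx + 1) * (yy + 1) * (xx + yy) * xx * yy * (xx + yy + 1) := by
    have hp := ha.prime
    intro h
    rcases hp.dvd_or_dvd h with h | h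
    · rcases hp.dvd_or_dvd h with h | h
      · rcases hp.dvd_or_dvd h with h | h
        · exact hsq h
        · exact hx h
      · exact hy h
    · exact hxy h
  have hd0 : derivative (th k (MvPolynomial.map φ a0)) ≠ 0 := by
    rw [th_deriv]
    intro h
    exact hder (by rw [← thi_th (MvPolynomial.pderiv 1 _), h, map_zero])
  have hm := monic_f0 φ (f0 := th _ a0) (by rw [← th_map]; exact hfG) (lc_G ht hodd hF)
  have hpos : 0 < (th _ a0).natDegree := by
    by_contra h
    have h1 := hm.natDegree_eq_zero.1 (by omega)
    rw [th_map, h1, Polynomial.map_one] at hirr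
    exact hirr.not_isUnit isUnit_one
  obtain ⟨n0, hn⟩ := stepanov φ _ hm hpos _ (th_map φ a0) hirr hd0 _ (mt th_dvd.1 hH)
  refine ⟨n0, fun n hnn => ?_⟩
  obtain ⟨x, y, h1, h2, h3, h4⟩ := hn n hnn
  rw [th_eval] at h3 h4
  refine ⟨x, y, h1, h2, ?_, by simpa using h4⟩
  obtain ⟨b, hb⟩ := haF
  have := congrArg (MvPolynomial.eval ![x, y]) hb
  rw [map_mul, h3, zero_mul] at this
  simpa [FF] using this

lemma pullback {n : ℕ} (hn : n ≠ 0) {k : Type*} [Field k] [IsAlgClosed k] [CharP k 2] (ψ : GaloisField 2 n →+* k) {x : k} (hx : x ^ 2 ^ n = x) :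
    ∃ z, ψ z = x := by
  classical
  haveI := Fintype.ofFinite (GaloisField 2 n)
  obtain ⟨s, hs, hm⟩ := Fq_set (k := k) hn
  have hc : Fintype.card (GaloisField 2 n) = 2 ^ n := by
    rw [← Nat.card_eq_fintype_card, GaloisField.card 2 n hn]
  have : Finset.univ.image ψ = s := by
    apply Finset.eq_of_subset_of_card_le
    · intro y hy
      obtain ⟨z, -, rfl⟩ := Finset.mem_image.1 hy
      rw [hm, ← map_pow, ← hc, FiniteField.pow_card]
    · rw [hs, Finset.card_image_of_injective _ ψ.injective, Finset.card_univ, hc]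
  have h := (hm x).2 hx
  rw [← this] at h
  obtain ⟨z, -, hz⟩ := Finset.mem_image.1 h
  exact ⟨z, hz⟩

lemma quad {K : Type*} [Field K] [CharP K 2] {t : ℕ} {x y : K}
    (h1 : x ^ t + y ^ t + 1 + (x + y + 1) ^ t = 0) (h2 : (x + 1) * (y + 1) * (x + y) * x * y * (x + y + 1) ≠ 0) :
    ∃ α β γ δ : K, α ≠ 0 ∧ β ≠ 0 ∧ γ ≠ 0 ∧ δ ≠ 0 ∧
        α ≠ β ∧ α ≠ γ ∧ α ≠ δ ∧ β ≠ γ ∧ β ≠ δ ∧ γ ≠ δ ∧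
        α + β + γ + δ = 0 ∧ α ^ t + β ^ t + γ ^ t + δ ^ t = 0 := by
  have hc : (2 : K) = 0 := CharTwo.two_eq_zero
  refine ⟨x, y, 1, x + y + 1, ?_, ?_, one_ne_zero, ?_, ?_, ?_, ?_, ?_, ?_, ?_, ?_, ?_⟩
  · rintro rfl; simp at h2
  · rintro rfl; simp at h2
  · intro h; simp [h] at h2
  · rintro rfl; simp [CharTwo.add_self_eq_zero] at h2
  · rintro rfl; simp [CharTwo.add_self_eq_zero] at h2
  · intro h
    have : y + 1 = 0 := by linear_combination -h
    simp [this] at h2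
  · rintro rfl; simp [CharTwo.add_self_eq_zero] at h2
  · intro h
    have : x + 1 = 0 := by linear_combination -h
    simp [this] at h2
  · intro h
    have : x + y = 0 := by linear_combination -h
    simp [this] at h2
  · linear_combination (x + y + 1) * hc
  · simpa using h1
end C2

theorem stmt_1 (t : ℕ) (ht : 3 ≤ t) (htodd : Odd t)
    (hgold : ¬ ∃ i : ℕ, 1 ≤ i ∧ t = 2 ^ i + 1)
    (hkw : ¬ ∃ i : ℕ, 1 ≤ i ∧ t = 4 ^ i - 2 ^ i + 1) :
    {n : ℕ | 0 < n ∧ ¬ ∃ α β γ δ : GaloisField 2 n,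
        α ≠ 0 ∧ β ≠ 0 ∧ γ ≠ 0 ∧ δ ≠ 0 ∧
        α ≠ β ∧ α ≠ γ ∧ α ≠ δ ∧ β ≠ γ ∧ β ≠ δ ∧ γ ≠ δ ∧
        α + β + γ + δ = 0 ∧ α ^ t + β ^ t + γ ^ t + δ ^ t = 0}.Finite := by
  obtain ⟨i, l, hl, hil⟩ := Nat.exists_eq_two_pow_mul_odd (n := t - 1) (by omega)
  obtain rfl : t = 2 ^ i * l + 1 := by omega
  have hi : 1 ≤ i := by
    by_contra h
    obtain rfl : i = 0 := by omega
    rw [pow_zero, one_mul] at htodd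
    exact Nat.not_odd_iff_even.2 hl.add_one htodd
  have hl3 : 3 ≤ l := by
    obtain ⟨m, rfl⟩ := hl
    rcases Nat.eq_zero_or_pos m with rfl | h
    · exact absurd ⟨i, hi, by simp⟩ hgold
    · omega
  have hk : l ≠ 2 ^ i - 1 := by
    rintro rfl
    refine hkw ⟨i, hi, ?_⟩
    rw [Nat.mul_sub, mul_one, ← mul_pow]; rfl
  let k := AlgebraicClosure (ZMod 2)
  haveI : CharP k 2 := charP_of_injective_algebraMap (algebraMap (ZMod 2) k).injective 2
  obtain ⟨n0, hn0⟩ := main_points (k := k) hi hl hl3 hk (algebraMap (ZMod 2) k)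
  refine (Set.finite_lt_nat n0).subset ?_
  rintro n ⟨hn, hbad⟩
  by_contra hlt
  apply hbad
  obtain ⟨x, y, hx, hy, h1, h2⟩ := hn0 n (not_lt.1 hlt)
  let ψ : GaloisField 2 n →+* k := (IsAlgClosed.lift (R := ZMod 2) (S := GaloisField 2 n) (M := k)).toRingHom
  obtain ⟨x', rfl⟩ := pullback hn.ne' ψ hx
  obtain ⟨y', rfl⟩ := pullback hn.ne' ψ hy
  refine quad (x := x') (y := y') (ψ.injective ?_) (fun h => h2 ?_)
  · simpa using h1
  · simpa using congrArg ψ h
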